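/- arXiv:1911.09921 — 2 statements merged into one kernel-verified Lean document; each statement's English description precedes it below -/
import Mathlib

section
/- Let D be a domain in ℂⁿ and let φ be a psh peak function for a point p ∈ ∂D which is of class C² near p. Then for any bounded open neighborhood U of p there exist an open neighborhood V ⊂ U of p and a constant m > 0 such that for all z ∈ D ∩ V and all X ∈ ℂⁿ one has S_D(z;X) ≥ e^{mφ(z)} S_{D∩U}(z;X). -/
open Set Metric Filter Topology
open scoped Classical

noncomputable section

/-- `ℂⁿ` with the Euclidean norm. -/
abbrev Cn (n : ℕ) := EuclideanSpace ℂ (Fin n)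

/-- A function `u : ℂⁿ → [-∞,∞)` (with values in `EReal`) is plurisubharmonic on `D` if it
is upper semicontinuous on `D` and satisfies the sub-mean-value inequality on every closed
disc in a complex line contained in `D` (stated via continuous majorants on the boundary
circle, so as to handle the value `-∞`). -/
def PSHOn {n : ℕ} (u : Cn n → EReal) (D : Set (Cn n)) : Prop :=
  UpperSemicontinuousOn u D ∧
  ∀ a ∈ D, ∀ b : Cn n, ∀ r : ℝ, 0 < r →
    (∀ t : ℂ, ‖t‖ ≤ r → a + t • b ∈ D) →
    ∀ g : ℝ → ℝ, Continuous g →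
      (∀ θ : ℝ, u (a + ((r : ℂ) * Complex.exp (θ * Complex.I)) • b) ≤ (g θ : EReal)) →
      u a ≤ (((1 / (2 * Real.pi)) * ∫ θ in (0:ℝ)..(2 * Real.pi), g θ : ℝ) : EReal)

/-- `φ` is a plurisubharmonic peak function for `D` at the boundary point `p`:
`φ` is psh on `D`, `φ(z) → 0` as `z → p` in `D`, and `sup_{D∖U} φ < 0` for every
neighborhood `U` of `p`. -/
def IsPshPeakFn {n : ℕ} (D : Set (Cn n)) (p : Cn n) (φ : Cn n → EReal) : Prop :=
  PSHOn φ D ∧ Tendsto φ (𝓝[D] p) (𝓝 (0 : EReal)) ∧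
  ∀ U ∈ 𝓝 p, ∃ c : ℝ, c < 0 ∧ ∀ z ∈ D \ U, φ z ≤ (c : EReal)

/-- The real exponential extended to `EReal`, with `exp(-∞) = 0` (the value at `⊤`,
irrelevant here, is also set to `0`). -/
def erexp (x : EReal) : ℝ := if x = ⊥ then 0 else if x = ⊤ then 0 else Real.exp x.toReal

/-- Logarithm with values in `EReal`, so that `elog 0 = -∞`. -/
def elog (x : ℝ) : EReal := if x ≤ 0 then ⊥ else ((Real.log x : ℝ) : EReal)

/-- The Levi form of a real-valued `C²` function `v` at `z` in direction `X`:
`L_v(z;X) = Σ_{j,k} ∂²v/∂z_j∂z̄_k(z) X_j X̄_k`, expressed through the real second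
derivative via `Σ_{j,k} ∂²v/∂z_j∂z̄_k(z) X_j X̄_k = (D²v(z)(X,X) + D²v(z)(iX,iX))/4`. -/
def leviForm {n : ℕ} (v : Cn n → ℝ) (z X : Cn n) : ℝ :=
  (1/4) * (iteratedFDeriv ℝ 2 v z ![X, X] +
    iteratedFDeriv ℝ 2 v z ![Complex.I • X, Complex.I • X])

/-- The Sibony metric of `D`: `S_D(z;X) = sup_v (L_v(z;X))^{1/2}`, the supremum over all
`v : D → [0,1)` with `v(z) = 0`, `log v` psh on `D`, and `v` of class `C²` near `z`. -/
def sibony {n : ℕ} (D : Set (Cn n)) (z X : Cn n) : ℝ :=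
  sSup {s : ℝ | ∃ v : Cn n → ℝ, (∀ w ∈ D, 0 ≤ v w ∧ v w < 1) ∧ v z = 0 ∧
    PSHOn (fun w => elog (v w)) D ∧ (∃ W ∈ 𝓝 z, ContDiffOn ℝ 2 v W) ∧
    s = Real.sqrt (leviForm v z X)}

/-!
Let `χ = exp (m φ)`, which is less than `1` on `D` and, for large `m`, much larger near `p` than on
an outer shell around `p`. A competitor `v` for the local metric at `z` is transplanted to `D`:
with `q = (‖w - z‖ / 2r)²`, the function `χ · max (χ(z) v + (1 - χ(z)) q) (q²)` is still
log-plurisubharmonic, dominates `κ = exp (m c)` on an inner shell because of the term `q²`, where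
`c = sup φ < 0` on the outer shell, and is at most `κ` on the outer shell, so it may be glued to the
constant `κ`. Near `z` the term `q²` is inactive, whence the Levi form at `z` is at least `χ(z)²`
times that of `v`.

Competitors vanish to second order at `z`, so Levi forms compare as soon as the functions do; that
the supremum in `sibony` is finite is the Schwarz lemma for log-subharmonic functions on discs.
-/

section OneVariable

open Real InnerProductSpace

/-- The local sub-mean-value property of `log f` at `c`, for a nonnegative function `f`, tested on
small circles against continuous majorants `g` of `log f`. It is phrased for `f` itself, with `exp`
on the right, because `f` may vanish. -/
def LogSubmeanAt (f : ℂ → ℝ) (c : ℂ) : Prop :=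
  ∀ᶠ r in 𝓝[>] (0 : ℝ), ∀ g : ℂ → ℝ, ContinuousOn g (sphere c r) →
    (∀ t ∈ sphere c r, f t ≤ exp (g t)) → f c ≤ exp (circleAverage g c r)

lemma eventually_pos_and_forall_mem_closedBall {c : ℂ} {P : ℂ → Prop} (h : ∀ᶠ t in 𝓝 c, P t) :
    ∀ᶠ r in 𝓝[>] (0 : ℝ), 0 < r ∧ ∀ t ∈ closedBall c r, P t :=
  eventually_mem_nhdsWithin.and (nhdsWithin_le_nhds (eventually_closedBall_subset h))

lemma circleAverage_le_circleAverage {g h : ℂ → ℝ} {c : ℂ} {r : ℝ} (hr : 0 ≤ r)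
    (hg : ContinuousOn g (sphere c r)) (hh : ContinuousOn h (sphere c r))
    (hgh : ∀ t ∈ sphere c r, g t ≤ h t) : circleAverage g c r ≤ circleAverage h c r :=
  circleAverage_mono (hg.circleIntegrable hr) (hh.circleIntegrable hr)
    (by rwa [abs_of_nonneg hr])

lemma circleAverage_linear_combination {g h : ℂ → ℝ} {c : ℂ} {r : ℝ} (hr : 0 ≤ r)
    (hg : ContinuousOn g (sphere c r)) (hh : ContinuousOn h (sphere c r)) (a b k : ℝ) :
    circleAverage (fun t => a * g t + b * h t + k) c r =
      a * circleAverage g c r + b * circleAverage h c r + k := by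
  have hag := (hg.const_mul a).circleIntegrable hr
  have hbh := (hh.const_mul b).circleIntegrable hr
  rw [circleAverage_fun_add (hag.fun_add hbh) (circleIntegrable_const k c r),
    circleAverage_fun_add hag hbh, circleAverage_const]
  simp only [← smul_eq_mul, circleAverage_fun_smul]

lemma circleAverage_eq_of_harmonicAt {H : ℂ → ℝ} {c : ℂ} {r : ℝ} (hr : 0 ≤ r)
    (hH : ∀ t ∈ closedBall c r, HarmonicAt H t) : circleAverage H c r = H c :=
  InnerProductSpace.HarmonicOnNhd.circleAverage_eq (by rwa [abs_of_nonneg hr])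

lemma continuousOn_sphere_of_harmonicAt {H : ℂ → ℝ} {c : ℂ} {r : ℝ}
    (hH : ∀ t ∈ closedBall c r, HarmonicAt H t) : ContinuousOn H (sphere c r) :=
  fun t ht => (hH t (sphere_subset_closedBall ht)).1.continuousAt.continuousWithinAt

variable {f q u : ℂ → ℝ} {c : ℂ}

lemma LogSubmeanAt.of_eventuallyLE (hu : LogSubmeanAt u c) (huf : u ≤ᶠ[𝓝 c] f) (hc : u c = f c) :
    LogSubmeanAt f c := by
  filter_upwards [hu, eventually_pos_and_forall_mem_closedBall huf] with r hr ⟨_, hle⟩ g hg hfg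
  exact hc ▸ hr g hg fun t ht => (hle t (sphere_subset_closedBall ht)).trans (hfg t ht)

lemma logSubmeanAt_exp_of_harmonicAt (hf : HarmonicAt f c) :
    LogSubmeanAt (fun t => exp (f t)) c := by
  filter_upwards [eventually_pos_and_forall_mem_closedBall hf.eventually] with r ⟨hr, hH⟩ g hg hfg
  rw [exp_le_exp, ← circleAverage_eq_of_harmonicAt hr.le hH]
  exact circleAverage_le_circleAverage hr.le (continuousOn_sphere_of_harmonicAt hH) hg
    fun t ht => exp_le_exp.1 (hfg t ht)

lemma logSubmeanAt_const {a : ℝ} (ha : 0 ≤ a) (c : ℂ) : LogSubmeanAt (fun _ => a) c := by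
  rcases ha.eq_or_lt with rfl | ha
  · exact Eventually.of_forall fun r g _ _ => (exp_pos _).le
  · simpa only [exp_log ha] using logSubmeanAt_exp_of_harmonicAt (harmonicAt_const (log a))

lemma logSubmeanAt_of_eventually_nonneg_of_eq_zero (hf : ∀ᶠ t in 𝓝 c, 0 ≤ f t) (hc : f c = 0) :
    LogSubmeanAt f c :=
  (logSubmeanAt_const le_rfl c).of_eventuallyLE hf hc.symm

lemma LogSubmeanAt.max (hf : LogSubmeanAt f c) (hu : LogSubmeanAt u c) :
    LogSubmeanAt (fun t => max (f t) (u t)) c := by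
  rcases le_total (u c) (f c) with h | h
  · exact hf.of_eventuallyLE (Eventually.of_forall fun t => le_max_left _ _) (max_eq_left h).symm
  · exact hu.of_eventuallyLE (Eventually.of_forall fun t => le_max_right _ _) (max_eq_right h).symm

lemma LogSubmeanAt.mul (hf : LogSubmeanAt f c) (hq : LogSubmeanAt q c) (hq0 : 0 < q c)
    (hqc : ∀ᶠ t in 𝓝 c, ContinuousAt q t) : LogSubmeanAt (fun t => f t * q t) c := by
  have hpos : ∀ᶠ t in 𝓝 c, 0 < q t := hqc.self_of_nhds.eventually (lt_mem_nhds hq0)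
  filter_upwards [hf, hq, eventually_pos_and_forall_mem_closedBall (hqc.and hpos)]
    with r hfr hqr ⟨hr, hball⟩ g hg hfg
  have hpos' : ∀ t ∈ sphere c r, 0 < q t := fun t ht => (hball t (sphere_subset_closedBall ht)).2
  have hlog : ContinuousOn (fun t => log (q t)) (sphere c r) :=
    fun t ht => ((hball t (sphere_subset_closedBall ht)).1.log (hpos' t ht).ne').continuousWithinAt
  have hfc := hfr (fun t => 1 * g t + -1 * log (q t) + 0) (by fun_prop) fun t ht => by
    rw [one_mul, neg_one_mul, add_zero, exp_add, exp_neg, exp_log (hpos' t ht), ← div_eq_mul_inv,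
      le_div_iff₀ (hpos' t ht)]
    exact hfg t ht
  have hqc := hqr _ hlog fun t ht => (exp_log (hpos' t ht)).ge
  rw [circleAverage_linear_combination hr.le hg hlog] at hfc
  calc f c * q c
      ≤ exp (1 * circleAverage g c r + -1 * circleAverage (fun t => log (q t)) c r + 0) *
          exp (circleAverage (fun t => log (q t)) c r) := by gcongr
    _ = exp (circleAverage g c r) := by rw [← exp_add]; ring_nf

lemma LogSubmeanAt.pow (hf : LogSubmeanAt f c) (hf0 : ∀ᶠ t in 𝓝 c, 0 ≤ f t) {k : ℕ} (hk : k ≠ 0) :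
    LogSubmeanAt (fun t => f t ^ k) c := by
  have hroot (x : ℝ) : exp x = exp ((k : ℝ)⁻¹ * x) ^ k := by
    rw [← exp_nat_mul, mul_inv_cancel_left₀ (Nat.cast_ne_zero.2 hk)]
  filter_upwards [hf, eventually_pos_and_forall_mem_closedBall hf0] with r hfr ⟨_, hball⟩ g hg hfg
  have hfc := hfr (fun t => (k : ℝ)⁻¹ • g t) (by fun_prop) fun t ht => by
    rw [← pow_le_pow_iff_left₀ (hball t (sphere_subset_closedBall ht)) (exp_pos _).le hk,
      smul_eq_mul, ← hroot]
    exact hfg t ht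
  rw [circleAverage_fun_smul] at hfc
  rw [hroot]
  exact pow_le_pow_left₀ hf0.self_of_nhds hfc k

/-- Weighted AM-GM with weights `a` and `b`, solved for `x`. -/
lemma le_mul_exp_of_add_le_exp {a b x y s : ℝ} (ha : 0 < a) (hb : 0 < b) (hab : a + b = 1)
    (hx : 0 ≤ x) (hy : 0 < y) (h : x + y ≤ exp s) :
    x ≤ exp (a⁻¹ * s + -(b / a) * log y + (log a + b / a * log b)) := by
  rcases hx.eq_or_lt with rfl | hx
  · exact (exp_pos _).le
  have hxa : 0 < x / a := by positivity
  have hyb : 0 < y / b := by positivity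
  have hconcave := strictConcaveOn_log_Ioi.concaveOn.2 hxa hyb ha.le hb.le hab
  have hlog : a * (log x - log a) + b * (log y - log b) ≤ s := by
    rw [← log_div hx.ne' ha.ne', ← log_div hy.ne' hb.ne']
    refine hconcave.trans ?_
    simp only [smul_eq_mul, mul_div_cancel₀ _ ha.ne', mul_div_cancel₀ _ hb.ne']
    rw [log_le_iff_le_exp (by positivity)]
    exact h
  rw [← log_le_iff_le_exp hx]
  field_simp
  linarith

lemma LogSubmeanAt.add (hu : LogSubmeanAt u c) (hu0 : ∀ᶠ t in 𝓝 c, 0 ≤ u t)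
    (hq : LogSubmeanAt q c) (hq0 : ∀ᶠ t in 𝓝 c, 0 ≤ q t) (hqc : ∀ᶠ t in 𝓝 c, ContinuousAt q t) :
    LogSubmeanAt (fun t => u t + q t) c := by
  rcases hu0.self_of_nhds.eq_or_lt with huc | huc
  · exact hq.of_eventuallyLE (hu0.mono fun t ht => le_add_of_nonneg_left ht) (by simp [← huc])
  rcases hq0.self_of_nhds.eq_or_lt with hqc' | hqc'
  · exact hu.of_eventuallyLE (hq0.mono fun t ht => le_add_of_nonneg_right ht) (by simp [← hqc'])
  have hpos : ∀ᶠ t in 𝓝 c, 0 < q t := hqc.self_of_nhds.eventually (lt_mem_nhds hqc')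
  obtain ⟨S, hS, hSpos⟩ : ∃ S, u c + q c = S ∧ 0 < S := ⟨_, rfl, by positivity⟩
  obtain ⟨a, b, ha, hb, hab, hua, hqb⟩ :
      ∃ a b : ℝ, 0 < a ∧ 0 < b ∧ a + b = 1 ∧ u c = a * S ∧ q c = b * S :=
    ⟨u c / S, q c / S, by positivity, by positivity, by rw [← add_div, hS, div_self hSpos.ne'],
      (div_mul_cancel₀ _ hSpos.ne').symm, (div_mul_cancel₀ _ hSpos.ne').symm⟩
  filter_upwards [hu, hq, eventually_pos_and_forall_mem_closedBall (hu0.and (hqc.and hpos))]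
    with r hur hqr ⟨hr, hball⟩ g hg hfg
  replace hball t (ht : t ∈ sphere c r) := hball t (sphere_subset_closedBall ht)
  have hlog : ContinuousOn (fun t => log (q t)) (sphere c r) :=
    fun t ht => ((hball t ht).2.1.log (hball t ht).2.2.ne').continuousWithinAt
  have hu_le := hur (fun t => a⁻¹ * g t + -(b / a) * log (q t) + (log a + b / a * log b))
    (by fun_prop) fun t ht =>
      le_mul_exp_of_add_le_exp ha hb hab (hball t ht).1 (hball t ht).2.2 (hfg t ht)
  have hq_le := hqr _ hlog fun t ht => (exp_log (hball t ht).2.2).ge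
  rw [circleAverage_linear_combination hr.le hg hlog, ← log_le_iff_le_exp huc, hua,
    log_mul ha.ne' hSpos.ne'] at hu_le
  rw [← log_le_iff_le_exp hqc', hqb, log_mul hb.ne' hSpos.ne'] at hq_le
  rw [hS, ← log_le_iff_le_exp hSpos]
  field_simp at hu_le
  obtain rfl : a = 1 - b := by linarith
  nlinarith

lemma logSubmeanAt_of_comp_const_add (h : LogSubmeanAt (fun s => f (c + s)) 0) :
    LogSubmeanAt f c := by
  have hcomp (g : ℂ → ℝ) (r : ℝ) :
      circleAverage (fun s => g (c + s)) 0 r = circleAverage g c r := by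
    simp only [circleAverage_def, circleMap, zero_add]
  filter_upwards [h] with r hr g hg hfg
  have hmaps (s : ℂ) (hs : s ∈ sphere 0 r) : c + s ∈ sphere c r := by simpa using hs
  simpa only [add_zero, hcomp] using
    hr (fun s => g (c + s)) (hg.comp (by fun_prop) hmaps) fun s hs => hfg _ (hmaps s hs)

lemma logSubmeanAt_norm_add_smul {E : Type*} [NormedAddCommGroup E] [NormedSpace ℂ E] (x b : E) :
    LogSubmeanAt (fun t : ℂ => ‖x + t • b‖) 0 := by
  rcases eq_or_ne x 0 with rfl | hx
  · exact logSubmeanAt_of_eventually_nonneg_of_eq_zero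
      (Eventually.of_forall fun t => norm_nonneg _) (by simp)
  obtain ⟨ℓ, hℓ, hℓx⟩ := exists_dual_vector ℂ x (norm_ne_zero_iff.2 hx)
  have hℓ0 : ℓ (x + (0 : ℂ) • b) ≠ 0 := by simp [hℓx, hx]
  have hanalytic : AnalyticAt ℂ (fun t : ℂ => ℓ (x + t • b)) 0 := by
    simp only [map_add, map_smul]
    fun_prop
  refine (logSubmeanAt_exp_of_harmonicAt (hanalytic.harmonicAt_log_norm hℓ0)).of_eventuallyLE ?_ ?_
  · filter_upwards [hanalytic.continuousAt.eventually_ne hℓ0] with t ht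
    rw [exp_log (norm_pos_iff.2 ht)]
    exact (ℓ.le_opNorm _).trans_eq (by rw [hℓ, one_mul])
  · rw [exp_log (norm_pos_iff.2 hℓ0)]
    simp [hℓx]

end OneVariable

section MaximumPrinciple

open Real InnerProductSpace

lemma upperSemicontinuousWithinAt_mul_of_continuousWithinAt {α : Type*} [TopologicalSpace α]
    {s : Set α} {x : α} {f g : α → ℝ} (hf : UpperSemicontinuousWithinAt f s x)
    (hg : ContinuousWithinAt g s x) (hx : 0 < g x) :
    UpperSemicontinuousWithinAt (fun y => f y * g y) s x := by
  intro b hb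
  obtain ⟨a, hfa, hab⟩ := exists_between ((lt_div_iff₀ hx).2 hb)
  filter_upwards [hf a hfa, hg.eventually (lt_mem_nhds hx),
    (hg.const_mul a).eventually (gt_mem_nhds ((lt_div_iff₀ hx).1 hab))] with y hfy hgy hay
  exact (mul_lt_mul_of_pos_right hfy hgy).trans hay

lemma circleAverage_norm_sq (c : ℂ) {r : ℝ} (hr : 0 ≤ r) :
    circleAverage (fun t => ‖t‖ ^ 2) c r = ‖c‖ ^ 2 + r ^ 2 := by
  have hsphere : EqOn (fun t => ‖t‖ ^ 2)
      (fun t => (2 * (starRingEnd ℂ c) * t + (r ^ 2 - ‖c‖ ^ 2 : ℝ)).re) (sphere c |r|) := by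
    intro t ht
    rw [abs_of_nonneg hr, mem_sphere_iff_norm] at ht
    simp only [← ht, Complex.sq_norm, Complex.normSq_apply]
    simp only [Complex.sub_re, Complex.sub_im, Complex.ofReal_sub, Complex.ofReal_add,
      Complex.ofReal_mul, Complex.add_re, Complex.mul_re, Complex.re_ofNat, Complex.conj_re,
      Complex.im_ofNat, Complex.conj_im, mul_neg, zero_mul, neg_zero, sub_zero, Complex.mul_im,
      add_zero, neg_mul, sub_neg_eq_add, Complex.ofReal_re, Complex.ofReal_im, sub_self, mul_zero]
    ring
  rw [circleAverage_congr_sphere hsphere, circleAverage_eq_of_harmonicAt hr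
    fun t _ => AnalyticAt.harmonicAt_re (by fun_prop)]
  simp only [Complex.sq_norm, Complex.normSq_apply]
  simp only [Complex.ofReal_sub, Complex.ofReal_add, Complex.ofReal_mul, Complex.add_re,
    Complex.mul_re, Complex.re_ofNat, Complex.conj_re, Complex.im_ofNat, Complex.conj_im, mul_neg,
    zero_mul, neg_zero, sub_zero, Complex.mul_im, add_zero, neg_mul, Complex.sub_re,
    sub_neg_eq_add, Complex.ofReal_re, Complex.ofReal_im, mul_zero]
  ring

variable {f : ℂ → ℝ} {c : ℂ} {r : ℝ}

lemma LogSubmeanAt.not_isLocalMax_mul_exp_norm_sq (hf : LogSubmeanAt f c) (hc : 0 < f c) {δ : ℝ}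
    (hδ : 0 < δ) : ¬ IsLocalMax (fun t => f t * exp (δ * ‖t‖ ^ 2)) c := by
  intro hmax
  obtain ⟨r, hfr, hr, hball⟩ := (hf.and (eventually_pos_and_forall_mem_closedBall hmax)).exists
  have hmean := hfr (fun t => -δ * ‖t‖ ^ 2 + 0 * 0 + (log (f c) + δ * ‖c‖ ^ 2)) (by fun_prop)
    fun t ht => by
      rw [zero_mul, add_zero, neg_mul, exp_add, exp_add, exp_log hc, exp_neg, mul_comm,
        ← div_eq_mul_inv, le_div_iff₀ (exp_pos _)]
      exact hball t (sphere_subset_closedBall ht)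
  rw [circleAverage_linear_combination (h := fun _ => 0) hr.le (by fun_prop) (by fun_prop),
    circleAverage_norm_sq c hr.le, ← log_le_iff_le_exp hc] at hmean
  nlinarith [mul_pos hδ (pow_pos hr 2)]

/-- The factor `exp (δ * ‖t‖ ^ 2)` makes the sub-mean-value inequality strict, so that the maximum
cannot be attained in `O`. -/
theorem le_of_logSubmeanAt_of_le_on_compl {K O : Set ℂ} {M : ℝ} (hK : IsCompact K)
    (hO : IsOpen O) (hOK : O ⊆ K) (husc : UpperSemicontinuousOn f K)
    (hf : ∀ t ∈ O, LogSubmeanAt f t) (hM : 0 ≤ M) (hle : ∀ t ∈ K \ O, f t ≤ M) {t : ℂ}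
    (ht : t ∈ K) : f t ≤ M := by
  by_contra! hlt
  obtain ⟨R, hR⟩ := hK.isBounded.exists_norm_le
  have hsmall : ∀ᶠ δ in 𝓝[>] (0 : ℝ), M * exp (δ * R ^ 2) < f t :=
    nhdsWithin_le_nhds (((by fun_prop : Continuous fun δ => M * exp (δ * R ^ 2)).tendsto' 0 M
      (by simp)).eventually (gt_mem_nhds hlt))
  obtain ⟨δ, hδM, hδ : 0 < δ⟩ := (hsmall.and eventually_mem_nhdsWithin).exists
  obtain ⟨s, hs, hmax⟩ := UpperSemicontinuousOn.exists_isMaxOn ⟨t, ht⟩ hK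
    (f := fun t => f t * exp (δ * ‖t‖ ^ 2)) fun x hx =>
      upperSemicontinuousWithinAt_mul_of_continuousWithinAt (husc x hx) (by fun_prop) (exp_pos _)
  have hts : f t ≤ f s * exp (δ * ‖s‖ ^ 2) :=
    (le_mul_of_one_le_right (hM.trans hlt.le) (one_le_exp (by positivity))).trans (hmax ht)
  have hsM : M < f s := by
    have hexp : exp (δ * ‖s‖ ^ 2) ≤ exp (δ * R ^ 2) := by gcongr; exact hR s hs
    by_contra! h
    exact (hδM.trans_le (hts.trans (mul_le_mul h hexp (exp_pos _).le hM))).false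
  have hsO : s ∈ O := by
    by_contra h
    exact (hle s ⟨hs, h⟩).not_gt hsM
  exact (hf s hsO).not_isLocalMax_mul_exp_norm_sq (hM.trans_lt hsM) hδ
    (hmax.isLocalMax (mem_of_superset (hO.mem_nhds hsO) hOK))

lemma logSubmeanAt_norm_rpow (s : ℝ) (hc : c ≠ 0) : LogSubmeanAt (fun t => ‖t‖ ^ s) c := by
  have hlog : HarmonicAt (fun t : ℂ => s * log ‖t‖) c :=
    (analyticAt_id.harmonicAt_log_norm hc).const_smul (c := s)
  refine (logSubmeanAt_exp_of_harmonicAt hlog).of_eventuallyLE ?_ ?_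
  · filter_upwards [eventually_ne_nhds hc] with t ht
    rw [rpow_def_of_pos (norm_pos_iff.2 ht), mul_comm]
  · rw [rpow_def_of_pos (norm_pos_iff.2 hc), mul_comm]

lemma eventually_mul_norm_rpow_neg_le {C M s : ℝ} (hs : s < 2) (hM : 0 < M)
    (hC : ∀ᶠ t in 𝓝 0, f t ≤ C * ‖t‖ ^ 2) : ∀ᶠ t in 𝓝 0, t ≠ 0 → f t * ‖t‖ ^ (-s) ≤ M := by
  have hlim : Tendsto (fun t : ℂ => C * ‖t‖ ^ (2 - s)) (𝓝 0) (𝓝 0) :=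
    ((continuous_norm.rpow_const fun _ => Or.inr (by linarith)).const_mul C).tendsto' _ _
      (by rw [norm_zero, zero_rpow (by linarith), mul_zero])
  filter_upwards [hC, hlim.eventually (gt_mem_nhds hM)] with t ht htM ht0
  refine (mul_le_mul_of_nonneg_right ht (by positivity)).trans (le_of_eq_of_le ?_ htM.le)
  rw [mul_assoc, ← rpow_natCast, ← rpow_add (norm_pos_iff.2 ht0), Nat.cast_ofNat, ← sub_eq_add_neg]

lemma le_norm_div_rpow_of_logSubmeanAt {ρ C s : ℝ} (hρ : 0 < ρ) (hs : s < 2)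
    (husc : UpperSemicontinuousOn f (closedBall 0 ρ)) (hf : ∀ t ∈ ball 0 ρ, LogSubmeanAt f t)
    (hle : ∀ t ∈ sphere 0 ρ, f t ≤ 1) (hC : ∀ᶠ t in 𝓝 0, f t ≤ C * ‖t‖ ^ 2) {t : ℂ}
    (ht : t ∈ closedBall 0 ρ) (ht0 : t ≠ 0) : f t ≤ (‖t‖ / ρ) ^ s := by
  have hcont {x : ℂ} (hx : x ≠ 0) : ContinuousAt (fun y : ℂ => ‖y‖ ^ (-s)) x :=
    continuousAt_id.norm.rpow_const (Or.inl (norm_ne_zero_iff.2 hx))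
  have hpos {x : ℂ} (hx : x ≠ 0) : 0 < ‖x‖ ^ (-s) := rpow_pos_of_pos (norm_pos_iff.2 hx) _
  obtain ⟨η, hη, hη_le⟩ := nhds_basis_closedBall.eventually_iff.1
    (eventually_mul_norm_rpow_neg_le hs (rpow_pos_of_pos hρ (-s)) hC)
  suffices h : f t * ‖t‖ ^ (-s) ≤ ρ ^ (-s) by
    rwa [rpow_neg (norm_nonneg t), rpow_neg hρ.le, ← div_eq_mul_inv,
      div_le_iff₀ (rpow_pos_of_pos (norm_pos_iff.2 ht0) _), ← div_eq_inv_mul,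
      ← div_rpow (norm_nonneg t) hρ.le] at h
  by_cases htη : t ∈ closedBall 0 η
  · exact hη_le htη ht0
  have hne {x : ℂ} (hx : x ∉ ball 0 η) : x ≠ 0 := by
    rintro rfl
    exact hx (mem_ball_self hη)
  refine le_of_logSubmeanAt_of_le_on_compl (f := fun x => f x * ‖x‖ ^ (-s))
    (K := closedBall 0 ρ \ ball 0 η) (O := ball 0 ρ \ closedBall 0 η)
    ((isCompact_closedBall 0 ρ).diff isOpen_ball) (isOpen_ball.sdiff isClosed_closedBall)
    (sdiff_subset_sdiff ball_subset_closedBall ball_subset_closedBall) ?_ ?_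
    (rpow_pos_of_pos hρ _).le ?_ ⟨ht, fun h => htη (ball_subset_closedBall h)⟩
  · rintro x ⟨hx, hxη⟩
    exact upperSemicontinuousWithinAt_mul_of_continuousWithinAt
      ((husc x hx).mono sdiff_subset) (hcont (hne hxη)).continuousWithinAt (hpos (hne hxη))
  · rintro x ⟨hx, hxη⟩
    have hx0 : x ≠ 0 := hne fun h => hxη (ball_subset_closedBall h)
    exact (hf x hx).mul (logSubmeanAt_norm_rpow _ hx0) (hpos hx0)
      ((eventually_ne_nhds hx0).mono fun y => hcont)
  · rintro x ⟨⟨hx, hxη⟩, hxO⟩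
    by_cases hx' : x ∈ closedBall 0 η
    · exact hη_le hx' (hne hxη)
    · have hsphere : x ∈ sphere 0 ρ := le_antisymm hx (not_lt.1 fun h => hxO ⟨h, hx'⟩)
      rw [mem_sphere_zero_iff_norm.1 hsphere]
      exact mul_le_of_le_one_left (rpow_pos_of_pos hρ _).le (hle x hsphere)

/-- Compare with `‖t‖ ^ s` for `s < 2`, whose logarithm is harmonic off `0` and beats `f` near `0`,
and let `s → 2`. -/
theorem le_norm_div_sq_of_logSubmeanAt {ρ C : ℝ} (hρ : 0 < ρ)
    (husc : UpperSemicontinuousOn f (closedBall 0 ρ)) (hf : ∀ t ∈ ball 0 ρ, LogSubmeanAt f t)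
    (hle : ∀ t ∈ sphere 0 ρ, f t ≤ 1) (hC : ∀ᶠ t in 𝓝 0, f t ≤ C * ‖t‖ ^ 2) {t : ℂ}
    (ht : t ∈ closedBall 0 ρ) : f t ≤ (‖t‖ / ρ) ^ 2 := by
  rcases eq_or_ne t 0 with rfl | ht0
  · simpa using hC.self_of_nhds
  have hlim : Tendsto (fun s : ℝ => (‖t‖ / ρ) ^ s) (𝓝[<] 2) (𝓝 ((‖t‖ / ρ) ^ (2 : ℝ))) :=
    (continuousAt_const_rpow (div_pos (norm_pos_iff.2 ht0) hρ).ne').tendsto.mono_left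
      nhdsWithin_le_nhds
  rw [← rpow_two]
  exact ge_of_tendsto hlim (eventually_mem_nhdsWithin.mono fun s (hs : s < 2) =>
    le_norm_div_rpow_of_logSubmeanAt hρ hs husc hf hle hC ht ht0)

end MaximumPrinciple

section GlobalSubmean

open Real

lemma exists_differentiable_add_conj_of_mem_span_fourier {T : ℝ} {p : C(AddCircle T, ℂ)}
    (hp : p ∈ Submodule.span ℂ (range (fourier (T := T)))) :
    ∃ P Q : ℂ → ℂ, Differentiable ℂ P ∧ Differentiable ℂ Q ∧
      ∀ x : AddCircle T, p x = P x.toCircle + (starRingEnd ℂ) (Q x.toCircle) := by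
  induction hp using Submodule.span_induction with
  | mem p hp =>
    obtain ⟨n, rfl⟩ := hp
    rcases n.eq_nat_or_neg with ⟨k, rfl | rfl⟩
    · exact ⟨fun t => t ^ k, 0, by fun_prop, by fun_prop, fun x => by
        simp [fourier_apply, AddCircle.toCircle_nsmul]⟩
    · exact ⟨0, fun t => t ^ k, by fun_prop, by fun_prop, fun x => by
        simp [fourier_apply, AddCircle.toCircle_nsmul, AddCircle.toCircle_neg,
          ← Circle.coe_inv_eq_conj]⟩
  | zero => exact ⟨0, 0, by fun_prop, by fun_prop, by simp⟩
  | add p p' _ _ hp hp' =>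
    obtain ⟨P, Q, hP, hQ, h⟩ := hp
    obtain ⟨P', Q', hP', hQ', h'⟩ := hp'
    refine ⟨P + P', Q + Q', by fun_prop, by fun_prop, fun x => ?_⟩
    simp only [ContinuousMap.add_apply, h, h', Pi.add_apply, map_add]
    ring
  | smul a p _ hp =>
    obtain ⟨P, Q, hP, hQ, h⟩ := hp
    refine ⟨a • P, (starRingEnd ℂ a) • Q, by fun_prop, by fun_prop, fun x => ?_⟩
    simp [h, mul_add]

lemma exists_differentiable_abs_sub_re_lt {G : ℂ → ℝ} {c : ℂ} {r : ℝ} (hr : 0 < r)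
    (hG : ContinuousOn G (sphere c r)) {ε : ℝ} (hε : 0 < ε) :
    ∃ P : ℂ → ℂ, Differentiable ℂ P ∧ ∀ t ∈ sphere c r, |G t - (P t).re| < ε := by
  have hsphere (x : UnitAddCircle) : c + r * x.toCircle ∈ sphere c r := by
    simp [abs_of_pos hr, Circle.norm_coe]
  have hcont : Continuous fun x : UnitAddCircle => (G (c + r * x.toCircle) : ℂ) :=
    Complex.continuous_ofReal.comp (hG.comp_continuous
      (by have := AddCircle.continuous_toCircle (T := (1 : ℝ)); fun_prop) hsphere)
  have hmem : (⟨_, hcont⟩ : C(UnitAddCircle, ℂ)) ∈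
      closure (Submodule.span ℂ (range (fourier (T := (1 : ℝ)))) : Set C(UnitAddCircle, ℂ)) := by
    rw [← Submodule.topologicalClosure_coe, span_fourier_closure_eq_top]
    trivial
  obtain ⟨p, hp, hdist⟩ := Metric.mem_closure_iff.1 hmem ε hε
  obtain ⟨P, Q, hP, hQ, hPQ⟩ := exists_differentiable_add_conj_of_mem_span_fourier hp
  refine ⟨fun t => P ((t - c) / r) + Q ((t - c) / r), by fun_prop, fun t ht => ?_⟩
  have hr' : (r : ℂ) ≠ 0 := by exact_mod_cast hr.ne'
  obtain ⟨x, hx⟩ := (AddCircle.homeomorphCircle one_ne_zero).surjective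
    (⟨(t - c) / r, by
      simp [Submonoid.unitSphere, mem_sphere_iff_norm.1 ht, abs_of_pos hr, hr.ne']⟩ : Circle)
  have hxt : (x.toCircle : ℂ) = (t - c) / r := by
    rw [← AddCircle.homeomorphCircle_apply one_ne_zero, hx]
  have hre := ((Complex.abs_re_le_norm _).trans_eq (dist_eq_norm _ _).symm).trans_lt
    ((ContinuousMap.dist_apply_le_dist x).trans_lt hdist)
  simpa [hPQ, hxt, mul_div_cancel₀ _ hr'] using hre

variable {f : ℂ → ℝ} {c : ℂ} {r : ℝ}

lemma le_exp_re_of_logSubmeanAt (husc : UpperSemicontinuousOn f (closedBall c r))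
    (hf : ∀ t ∈ ball c r, LogSubmeanAt f t) {P : ℂ → ℂ} (hP : Differentiable ℂ P)
    (hle : ∀ t ∈ sphere c r, f t ≤ exp (P t).re) {t : ℂ} (ht : t ∈ closedBall c r) :
    f t ≤ exp (P t).re := by
  have hcont : Continuous fun t => exp (-(P t).re) :=
    continuous_exp.comp (Complex.continuous_re.comp hP.continuous).neg
  have hmax := le_of_logSubmeanAt_of_le_on_compl (f := fun t => f t * exp (-(P t).re))
    (isCompact_closedBall c r) isOpen_ball ball_subset_closedBall
    (fun s hs => upperSemicontinuousWithinAt_mul_of_continuousWithinAt (husc s hs)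
      hcont.continuousWithinAt (exp_pos _))
    (fun s hs => (hf s hs).mul
      (logSubmeanAt_exp_of_harmonicAt (hP.analyticAt s).harmonicAt_re.neg) (exp_pos _)
      (Eventually.of_forall fun s => hcont.continuousAt))
    zero_le_one (fun s hs => ?_) ht
  · rwa [exp_neg, ← div_eq_mul_inv, div_le_one (exp_pos _)] at hmax
  · rw [exp_neg, ← div_eq_mul_inv, div_le_one (exp_pos _)]
    exact hle s (le_antisymm hs.1 (not_lt.1 hs.2))

theorem le_exp_circleAverage_of_logSubmeanAt (hr : 0 < r)
    (husc : UpperSemicontinuousOn f (closedBall c r)) (hf : ∀ t ∈ ball c r, LogSubmeanAt f t)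
    {g : ℂ → ℝ} (hg : ContinuousOn g (sphere c r)) (hle : ∀ t ∈ sphere c r, f t ≤ exp (g t)) :
    f c ≤ exp (circleAverage g c r) := by
  rcases le_or_gt (f c) 0 with hfc | hfc
  · exact hfc.trans (exp_pos _).le
  rw [← log_le_iff_le_exp hfc]
  refine le_of_forall_pos_le_add fun ε hε => ?_
  obtain ⟨P, hP, hPg⟩ := exists_differentiable_abs_sub_re_lt (G := fun t => g t + ε / 2) hr
    (by fun_prop) (half_pos hε)
  have hP_bounds (t : ℂ) (ht : t ∈ sphere c r) : g t ≤ (P t).re ∧ (P t).re ≤ g t + ε := by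
    have h := abs_lt.1 (hPg t ht)
    constructor <;> linarith
  calc log (f c)
      ≤ (P c).re := (log_le_iff_le_exp hfc).2 <| le_exp_re_of_logSubmeanAt husc hf hP
        (fun t ht => (hle t ht).trans (exp_le_exp.2 (hP_bounds t ht).1)) (mem_closedBall_self hr.le)
    _ = circleAverage (fun t => (P t).re) c r :=
        (circleAverage_eq_of_harmonicAt hr.le fun t _ => (hP.analyticAt t).harmonicAt_re).symm
    _ ≤ circleAverage (fun t => g t + ε) c r :=
        circleAverage_le_circleAverage hr.le
          (Complex.continuous_re.comp hP.continuous).continuousOn (by fun_prop)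
          fun t ht => (hP_bounds t ht).2
    _ = circleAverage g c r + ε := by
        rw [circleAverage_fun_add (hg.circleIntegrable hr.le) (circleIntegrable_const ε c r),
          circleAverage_const]

lemma exists_continuousOn_sphere_comp_circleMap {g : ℝ → ℝ} (hg : ContinuousOn g (Icc 0 (2 * π)))
    (hper : g 0 = g (2 * π)) (c : ℂ) (hr : 0 < r) :
    ∃ G : ℂ → ℝ, ContinuousOn G (sphere c r) ∧
      ∀ θ ∈ Ioc 0 (2 * π), G (circleMap c r θ) = g θ := by
  have : Fact (0 < 2 * π) := ⟨two_pi_pos⟩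
  have hlift : Continuous (AddCircle.liftIoc (2 * π) 0 g) :=
    AddCircle.liftIoc_continuous (by rwa [zero_add]) (by rwa [zero_add])
  refine ⟨fun t => AddCircle.liftIoc (2 * π) 0 g ((t - c).arg : AddCircle (2 * π)), fun t ht => ?_,
    fun θ hθ => ?_⟩
  · have hne : t - c ≠ 0 := sub_ne_zero.2 (ne_of_mem_sphere ht hr.ne')
    have harg : ContinuousAt (fun s => ((s - c).arg : AddCircle (2 * π))) t :=
      (Complex.continuousAt_arg_coe_angle hne).comp (f := fun s => s - c) (by fun_prop)
    exact (hlift.continuousAt.comp harg).continuousWithinAt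
  · have harg : ((circleMap c r θ - c).arg : AddCircle (2 * π)) = θ := by
      rw [circleMap_sub_center, circleMap_zero, Complex.exp_mul_I]
      exact_mod_cast Complex.arg_mul_cos_add_sin_mul_I_coe_angle hr θ
    dsimp only
    rw [harg]
    exact AddCircle.liftIoc_coe_apply (by rwa [zero_add])

lemma le_exp_average_of_le_exp_comp_circleMap_of_eq_endpoints (hr : 0 < r)
    (husc : UpperSemicontinuousOn f (closedBall c r)) (hf : ∀ t ∈ ball c r, LogSubmeanAt f t)
    {g : ℝ → ℝ} (hg : ContinuousOn g (Icc 0 (2 * π))) (hper : g 0 = g (2 * π))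
    (hle : ∀ θ ∈ Ioc 0 (2 * π), f (circleMap c r θ) ≤ exp (g θ)) :
    f c ≤ exp ((2 * π)⁻¹ * ∫ θ in 0..2 * π, g θ) := by
  obtain ⟨G, hG, hGg⟩ := exists_continuousOn_sphere_comp_circleMap hg hper c hr
  have havg : circleAverage G c r = (2 * π)⁻¹ * ∫ θ in 0..2 * π, g θ := by
    rw [circleAverage_def, smul_eq_mul, intervalIntegral.integral_of_le two_pi_pos.le,
      intervalIntegral.integral_of_le two_pi_pos.le,
      MeasureTheory.setIntegral_congr_fun measurableSet_Ioc hGg]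
  refine havg ▸ le_exp_circleAverage_of_logSubmeanAt hr husc hf hG fun t ht => ?_
  rw [← abs_of_pos hr, ← image_circleMap_Ioc] at ht
  obtain ⟨θ, hθ, rfl⟩ := ht
  exact hGg θ hθ ▸ hle θ hθ

lemma integral_one_sub_div_two_pi_pow (k : ℕ) :
    ∫ θ in 0..2 * π, (1 - θ / (2 * π)) ^ k = 2 * π / (k + 1) := by
  rw [intervalIntegral.integral_comp_sub_div (fun x => x ^ k) two_pi_pos.ne',
    div_self two_pi_pos.ne']
  simp only [integral_pow]
  simp [field]

lemma one_sub_div_two_pi_pow_mem_Icc {θ : ℝ} (hθ : θ ∈ Icc 0 (2 * π)) (k : ℕ) :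
    (1 - θ / (2 * π)) ^ k ∈ Icc (0 : ℝ) 1 := by
  have h0 : 0 ≤ θ / (2 * π) := div_nonneg hθ.1 two_pi_pos.le
  have h1 : θ / (2 * π) ≤ 1 := (div_le_one two_pi_pos).2 hθ.2
  exact ⟨pow_nonneg (by linarith) _, pow_le_one₀ (by linarith) (by linarith)⟩

lemma average_add_one_sub_div_two_pi_pow_mul_le {g h : ℝ → ℝ} (hg : Continuous g)
    (hh : Continuous h) {C : ℝ} (hC : ∀ θ ∈ Icc 0 (2 * π), h θ ≤ C) (k : ℕ) :
    (2 * π)⁻¹ * ∫ θ in 0..2 * π, (g θ + (1 - θ / (2 * π)) ^ k * h θ) ≤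
      (2 * π)⁻¹ * (∫ θ in 0..2 * π, g θ) + C / (k + 1) := by
  calc (2 * π)⁻¹ * ∫ θ in 0..2 * π, (g θ + (1 - θ / (2 * π)) ^ k * h θ)
      ≤ (2 * π)⁻¹ * ∫ θ in 0..2 * π, (g θ + (1 - θ / (2 * π)) ^ k * C) := by
        gcongr
        refine intervalIntegral.integral_mono_on two_pi_pos.le
          (Continuous.intervalIntegrable (by fun_prop) _ _)
          (Continuous.intervalIntegrable (by fun_prop) _ _) fun θ hθ => ?_
        gcongr
        · exact (one_sub_div_two_pi_pow_mem_Icc hθ k).1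
        · exact hC θ hθ
    _ = (2 * π)⁻¹ * (∫ θ in 0..2 * π, g θ) + C / (k + 1) := by
        rw [intervalIntegral.integral_add (hg.intervalIntegrable _ _)
          (Continuous.intervalIntegrable (by fun_prop) _ _), intervalIntegral.integral_mul_const,
          integral_one_sub_div_two_pi_pow]
        field_simp

/-- Interpolating between `g` and its translate by a period with the weight
`(1 - θ / (2 * π)) ^ (k + 1)` gives a majorant with equal end values; as `k → ∞` its mean tends to
that of `g`. -/
theorem le_exp_average_of_le_exp_comp_circleMap (hr : 0 < r)
    (husc : UpperSemicontinuousOn f (closedBall c r)) (hf : ∀ t ∈ ball c r, LogSubmeanAt f t)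
    {g : ℝ → ℝ} (hg : Continuous g) (hle : ∀ θ, f (circleMap c r θ) ≤ exp (g θ)) :
    f c ≤ exp ((2 * π)⁻¹ * ∫ θ in 0..2 * π, g θ) := by
  obtain ⟨C, hC⟩ := isCompact_Icc.exists_bound_of_continuousOn (s := Icc 0 (2 * π))
    (f := fun θ => g (θ + 2 * π) - g θ) (by fun_prop)
  have hbound (k : ℕ) :
      f c ≤ exp ((2 * π)⁻¹ * (∫ θ in 0..2 * π, g θ) + C / ((k + 1 : ℕ) + 1)) := by
    refine (le_exp_average_of_le_exp_comp_circleMap_of_eq_endpoints hr husc hf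
      (g := fun θ => g θ + (1 - θ / (2 * π)) ^ (k + 1) * (g (θ + 2 * π) - g θ)) (by fun_prop)
      (by simp [two_pi_pos.ne']) fun θ hθ => ?_).trans (exp_le_exp.2 <|
        average_add_one_sub_div_two_pi_pow_mul_le hg (by fun_prop)
          (fun θ hθ => (le_abs_self _).trans (hC θ hθ)) (k + 1))
    obtain ⟨hw0, hw1⟩ := one_sub_div_two_pi_pow_mem_Icc (Ioc_subset_Icc_self hθ) (k + 1)
    rcases le_total (g θ) (g (θ + 2 * π)) with h | h
    · exact (hle θ).trans (exp_le_exp.2 (by nlinarith))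
    · have hle' := hle (θ + 2 * π)
      rw [periodic_circleMap] at hle'
      exact hle'.trans (exp_le_exp.2 (by nlinarith))
  have hC0 : Tendsto (fun k : ℕ => C / ((k + 1 : ℕ) + 1)) atTop (𝓝 0) :=
    tendsto_const_nhds.div_atTop (tendsto_atTop_add_const_right _ 1
      (tendsto_natCast_atTop_atTop.comp (tendsto_add_atTop_nat 1)))
  refine ge_of_tendsto' ((continuous_exp.tendsto _).comp (hC0.const_add _)) hbound |>.trans_eq ?_
  rw [add_zero]

end GlobalSubmean

section LogPlurisubharmonic

open Real

/-- `log v` is plurisubharmonic on `D`, for a nonnegative real function `v`; the sub-mean-value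
property is only required on small circles. -/
structure LogPSHOn {E : Type*} [NormedAddCommGroup E] [NormedSpace ℂ E] (v : E → ℝ) (D : Set E) :
    Prop where
  nonneg : ∀ a ∈ D, 0 ≤ v a
  upperSemicontinuousOn : UpperSemicontinuousOn v D
  logSubmeanAt : ∀ a ∈ D, ∀ b, LogSubmeanAt (fun t : ℂ => v (a + t • b)) 0

variable {E : Type*} [NormedAddCommGroup E] [NormedSpace ℂ E] {D O : Set E} {u v q : E → ℝ}

lemma eventually_add_smul_nhds_zero {P : E → Prop} {a : E} (h : ∀ᶠ w in 𝓝 a, P w) (b : E) :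
    ∀ᶠ t : ℂ in 𝓝 0, P (a + t • b) :=
  (Continuous.tendsto' (by fun_prop) _ _ (by simp)).eventually h

lemma LogPSHOn.mono (h : LogPSHOn v D) (hO : O ⊆ D) : LogPSHOn v O :=
  ⟨fun a ha => h.nonneg a (hO ha), h.upperSemicontinuousOn.mono hO,
    fun a ha => h.logSubmeanAt a (hO ha)⟩

lemma LogPSHOn.congr (h : LogPSHOn u D) (hD : IsOpen D) (huv : EqOn u v D) : LogPSHOn v D where
  nonneg a ha := huv ha ▸ h.nonneg a ha
  upperSemicontinuousOn a ha := UpperSemicontinuousWithinAt.congr_of_eventuallyEq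
    (h.upperSemicontinuousOn a ha) ha (eventually_mem_nhdsWithin.mono huv)
  logSubmeanAt a ha b := (h.logSubmeanAt a ha b).of_eventuallyLE
    ((eventually_add_smul_nhds_zero (hD.mem_nhds ha) b).mono fun t ht => (huv ht).le)
    (by simpa using huv ha)

lemma logPSHOn_of_locally
    (h : ∀ a ∈ D, ∃ O, IsOpen O ∧ a ∈ O ∧ LogPSHOn v (D ∩ O)) : LogPSHOn v D where
  nonneg a ha := by
    obtain ⟨O, _, haO, hv⟩ := h a ha
    exact hv.nonneg a ⟨ha, haO⟩
  upperSemicontinuousOn a ha y hy := by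
    obtain ⟨O, hO, haO, hv⟩ := h a ha
    have husc := hv.upperSemicontinuousOn a ⟨ha, haO⟩ y hy
    rwa [nhdsWithin_inter_of_mem' (mem_nhdsWithin_of_mem_nhds (hO.mem_nhds haO))] at husc
  logSubmeanAt a ha := by
    obtain ⟨O, _, haO, hv⟩ := h a ha
    exact hv.logSubmeanAt a ⟨ha, haO⟩

lemma logPSHOn_const {c : ℝ} (hc : 0 ≤ c) (D : Set E) : LogPSHOn (fun _ => c) D :=
  ⟨fun _ _ => hc, upperSemicontinuousOn_const, fun _ _ _ => logSubmeanAt_const hc 0⟩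

lemma LogPSHOn.max (hu : LogPSHOn u D) (hv : LogPSHOn v D) :
    LogPSHOn (fun w => max (u w) (v w)) D :=
  ⟨fun a ha => le_max_of_le_left (hu.nonneg a ha),
    hu.upperSemicontinuousOn.sup hv.upperSemicontinuousOn,
    fun a ha b => (hu.logSubmeanAt a ha b).max (hv.logSubmeanAt a ha b)⟩

lemma eventually_continuousAt_comp_add_smul (hD : IsOpen D) (hq : ContinuousOn q D) {a : E}
    (ha : a ∈ D) (b : E) : ∀ᶠ t : ℂ in 𝓝 0, ContinuousAt (fun t : ℂ => q (a + t • b)) t := by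
  filter_upwards [eventually_add_smul_nhds_zero (hD.mem_nhds ha) b] with t ht
  exact (hq.continuousAt (hD.mem_nhds ht)).comp (f := fun t : ℂ => a + t • b) (by fun_prop)

lemma LogPSHOn.mul (hD : IsOpen D) (hu : LogPSHOn u D) (hq : LogPSHOn q D)
    (hqc : ContinuousOn q D) (hq0 : ∀ a ∈ D, 0 < q a) : LogPSHOn (fun w => u w * q w) D where
  nonneg a ha := mul_nonneg (hu.nonneg a ha) (hq0 a ha).le
  upperSemicontinuousOn a ha := upperSemicontinuousWithinAt_mul_of_continuousWithinAt
    (hu.upperSemicontinuousOn a ha) (hqc a ha) (hq0 a ha)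
  logSubmeanAt a ha b := (hu.logSubmeanAt a ha b).mul (hq.logSubmeanAt a ha b)
    (by simpa using hq0 a ha) (eventually_continuousAt_comp_add_smul hD hqc ha b)

lemma LogPSHOn.mul_const (hD : IsOpen D) (hu : LogPSHOn u D) {c : ℝ} (hc : 0 < c) :
    LogPSHOn (fun w => u w * c) D :=
  hu.mul hD (logPSHOn_const hc.le D) continuousOn_const fun _ _ => hc

lemma LogPSHOn.eventually_nonneg (hD : IsOpen D) (hu : LogPSHOn u D) {a : E} (ha : a ∈ D)
    (b : E) : ∀ᶠ t : ℂ in 𝓝 0, 0 ≤ u (a + t • b) :=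
  (eventually_add_smul_nhds_zero (hD.mem_nhds ha) b).mono fun _ ht => hu.nonneg _ ht

lemma LogPSHOn.add (hD : IsOpen D) (hu : LogPSHOn u D) (hq : LogPSHOn q D)
    (hqc : ContinuousOn q D) : LogPSHOn (fun w => u w + q w) D where
  nonneg a ha := add_nonneg (hu.nonneg a ha) (hq.nonneg a ha)
  upperSemicontinuousOn := hu.upperSemicontinuousOn.add hqc.upperSemicontinuousOn
  logSubmeanAt a ha b := (hu.logSubmeanAt a ha b).add (hu.eventually_nonneg hD ha b)
    (hq.logSubmeanAt a ha b) (hq.eventually_nonneg hD ha b)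
    (eventually_continuousAt_comp_add_smul hD hqc ha b)

lemma LogPSHOn.pow (hD : IsOpen D) (hu : LogPSHOn u D) {k : ℕ} (hk : k ≠ 0) :
    LogPSHOn (fun w => u w ^ k) D where
  nonneg a ha := pow_nonneg (hu.nonneg a ha) k
  upperSemicontinuousOn a ha := by
    have hmono : Monotone fun x : ℝ => (x ⊔ 0) ^ k :=
      fun x y hxy => pow_le_pow_left₀ (le_max_right x 0) (max_le_max_right 0 hxy) k
    have hcont : Continuous fun x : ℝ => (x ⊔ 0) ^ k := by fun_prop
    refine UpperSemicontinuousWithinAt.congr_of_eventuallyEq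
      (hcont.comp_upperSemicontinuousOn hu.upperSemicontinuousOn hmono a ha) ha
      (eventually_mem_nhdsWithin.mono fun w hw => ?_)
    simp [max_eq_left (hu.nonneg w hw)]
  logSubmeanAt a ha b := (hu.logSubmeanAt a ha b).pow (hu.eventually_nonneg hD ha b) hk

lemma logPSHOn_norm_sub (z : E) (D : Set E) : LogPSHOn (fun w => ‖w - z‖) D where
  nonneg _ _ := norm_nonneg _
  upperSemicontinuousOn := Continuous.upperSemicontinuous (by fun_prop) |>.upperSemicontinuousOn D
  logSubmeanAt a _ b := by
    simpa only [add_sub_right_comm] using logSubmeanAt_norm_add_smul (a - z) b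

/-- The function equal to `f` near `p` and to the constant `κ` away from `p`, with `max f κ` in the
shell `s ≤ dist w p < r`. -/
def glueConst (f : E → ℝ) (κ : ℝ) (p : E) (s r : ℝ) (w : E) : ℝ :=
  if dist w p < s then f w else if dist w p < r then max (f w) κ else κ

lemma logPSHOn_glueConst {f : E → ℝ} {p : E} {κ s' s r' r : ℝ} (hD : IsOpen D)
    (hf : LogPSHOn f (D ∩ ball p r)) (hκ : 0 ≤ κ) (hs : s' < s) (hsr : s ≤ r') (hr : r' < r)
    (hin : ∀ w ∈ D, s' < dist w p → dist w p < s → κ ≤ f w)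
    (hout : ∀ w ∈ D, r' < dist w p → dist w p < r → f w ≤ κ) :
    LogPSHOn (glueConst f κ p s r) D := by
  refine logPSHOn_of_locally fun a _ => ?_
  rcases lt_or_ge (dist a p) s with has | has
  · refine ⟨ball p s, isOpen_ball, has,
      (hf.mono (inter_subset_inter_right D (ball_subset_ball (by linarith)))).congr
        (hD.inter isOpen_ball) fun w hw => ?_⟩
    rw [glueConst, if_pos (mem_ball.1 hw.2)]
  rcases lt_or_ge (dist a p) r with har | har
  · have hshell : IsOpen (ball p r ∩ {w | s' < dist w p}) :=
      isOpen_ball.inter (isOpen_lt continuous_const (by fun_prop))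
    refine ⟨_, hshell, ⟨har, by grind⟩, ((hf.mono (by grind)).max (logPSHOn_const hκ _)).congr
      (hD.inter hshell) fun w hw => ?_⟩
    rcases lt_or_ge (dist w p) s with hws | hws
    · simp [glueConst, hws, hin w hw.1 hw.2.2 hws]
    · simp [glueConst, hws.not_gt, mem_ball.1 hw.2.1]
  · have hfar : IsOpen {w | r' < dist w p} := isOpen_lt continuous_const (by fun_prop)
    refine ⟨_, hfar, hr.trans_le har, (logPSHOn_const hκ _).congr (hD.inter hfar) fun w hw => ?_⟩
    have hws : ¬dist w p < s := by grind
    rcases lt_or_ge (dist w p) r with hwr | hwr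
    · simp [glueConst, hws, hwr, hout w hw.1 hw.2 hwr]
    · simp [glueConst, hws, hwr.not_gt]

lemma LogPSHOn.logSubmeanAt_comp_add_smul (hv : LogPSHOn v D) {a b : E} {t : ℂ}
    (ht : a + t • b ∈ D) : LogSubmeanAt (fun s : ℂ => v (a + s • b)) t := by
  refine logSubmeanAt_of_comp_const_add ?_
  simpa only [add_smul, add_assoc] using hv.logSubmeanAt _ ht b

lemma LogPSHOn.upperSemicontinuousOn_comp_add_smul (hv : LogPSHOn v D) {a b : E} {s : Set ℂ}
    (hs : ∀ t ∈ s, a + t • b ∈ D) : UpperSemicontinuousOn (fun t : ℂ => v (a + t • b)) s :=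
  hv.upperSemicontinuousOn.comp (g := fun t : ℂ => a + t • b) (by fun_prop) hs

end LogPlurisubharmonic

section PSHOn

open Real

variable {n : ℕ} {D O : Set (Cn n)} {v : Cn n → ℝ}

lemma elog_le_coe_iff {x y : ℝ} : elog x ≤ (y : EReal) ↔ x ≤ exp y := by
  unfold elog
  split_ifs with hx
  · simpa using hx.trans (exp_pos y).le
  · rw [EReal.coe_le_coe_iff, log_le_iff_le_exp (not_le.1 hx)]

lemma elog_lt_coe_iff {x y : ℝ} : elog x < (y : EReal) ↔ x < exp y := by
  unfold elog
  split_ifs with hx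
  · simpa [EReal.bot_lt_coe] using hx.trans_lt (exp_pos y)
  · rw [EReal.coe_lt_coe_iff, log_lt_iff_lt_exp (not_le.1 hx)]

lemma elog_exp (x : ℝ) : elog (exp x) = x := by
  rw [elog, if_neg (exp_pos x).not_ge, log_exp]

lemma PSHOn.mono {u : Cn n → EReal} (h : PSHOn u D) (hO : O ⊆ D) : PSHOn u O :=
  ⟨h.1.mono hO, fun a ha b r hr hin => h.2 a (hO ha) b r hr fun t ht => hO (hin t ht)⟩

lemma PSHOn.congr {u u' : Cn n → EReal} (h : PSHOn u D) (huu' : EqOn u u' D) : PSHOn u' D := by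
  refine ⟨fun a ha => UpperSemicontinuousWithinAt.congr_of_eventuallyEq (h.1 a ha) ha
    (eventually_mem_nhdsWithin.mono huu'), fun a ha b r hr hin g hg hle => ?_⟩
  refine huu' ha ▸ h.2 a ha b r hr hin g hg fun θ => ?_
  rw [huu' (hin _ (by simp [Complex.norm_exp, abs_of_pos hr]))]
  exact hle θ

lemma logPSHOn_of_pshOn_elog (hD : IsOpen D) (h0 : ∀ a ∈ D, 0 ≤ v a)
    (h : PSHOn (fun w => elog (v w)) D) : LogPSHOn v D where
  nonneg := h0
  upperSemicontinuousOn a ha y hy := by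
    have hy0 : 0 < y := (h0 a ha).trans_lt hy
    simpa only [elog_lt_coe_iff, exp_log hy0] using
      h.1 a ha (log y : ℝ) (by simpa only [elog_lt_coe_iff, exp_log hy0])
  logSubmeanAt a ha b := by
    filter_upwards [eventually_pos_and_forall_mem_closedBall
      (eventually_add_smul_nhds_zero (hD.mem_nhds ha) b)] with r ⟨hr, hin⟩ g hg hle
    have hmean := h.2 a ha b r hr (fun t ht => hin t (by simpa using ht))
      (fun θ => g (circleMap 0 r θ))
      (hg.comp_continuous (continuous_circleMap 0 r) (circleMap_mem_sphere 0 hr.le)) fun θ => by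
        rw [elog_le_coe_iff, ← circleMap_zero]
        exact hle _ (circleMap_mem_sphere 0 hr.le θ)
    rw [elog_le_coe_iff] at hmean
    simpa [circleAverage_def] using hmean

lemma LogPSHOn.pshOn_elog (h : LogPSHOn v D) : PSHOn (fun w => elog (v w)) D := by
  refine ⟨fun a ha y hy => ?_, fun a _ b r hr hin g hg hle => ?_⟩
  · obtain ⟨x, hx, hxy⟩ := EReal.lt_iff_exists_real_btwn.1 hy
    filter_upwards [h.upperSemicontinuousOn a ha _ (elog_lt_coe_iff.1 hx)] with w hw
    exact (elog_lt_coe_iff.2 hw).trans hxy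
  · have hball (t : ℂ) (ht : t ∈ closedBall 0 r) : a + t • b ∈ D := hin t (by simpa using ht)
    rw [elog_le_coe_iff, one_div]
    simpa using le_exp_average_of_le_exp_comp_circleMap (f := fun t => v (a + t • b)) (c := 0) hr
      (h.upperSemicontinuousOn_comp_add_smul hball)
      (fun t ht => h.logSubmeanAt_comp_add_smul (hball t (ball_subset_closedBall ht))) hg
      fun θ => by simpa only [circleMap_zero] using elog_le_coe_iff.1 (hle θ)

lemma PSHOn.logPSHOn_exp {φ : Cn n → EReal} {φ₀ : Cn n → ℝ} (h : PSHOn φ D) (hD : IsOpen D)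
    (hφ : ∀ w ∈ D, φ w = φ₀ w) : LogPSHOn (fun w => exp (φ₀ w)) D :=
  logPSHOn_of_pshOn_elog hD (fun w _ => (exp_pos _).le)
    (h.congr fun w hw => by rw [elog_exp, hφ w hw])

end PSHOn

section SecondOrder

open Asymptotics

variable {F : Type*} [NormedAddCommGroup F] [NormedSpace ℝ F] {u v χ : F → ℝ} {z : F}

/-- `v` is of class `C²` at `z` and vanishes there together with its derivative, so that its
second-order behaviour at `z` is read off from its values. -/
structure IsCriticalZero (v : F → ℝ) (z : F) : Prop where
  contDiffAt : ContDiffAt ℝ 2 v z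
  eq_zero : v z = 0
  fderiv_eq_zero : fderiv ℝ v z = 0

lemma isCriticalZero_of_eventually_nonneg (hv : ContDiffAt ℝ 2 v z) (hz : v z = 0)
    (h0 : ∀ᶠ w in 𝓝 z, 0 ≤ v w) : IsCriticalZero v z :=
  ⟨hv, hz, IsLocalMin.fderiv_eq_zero (h0.mono fun _ hw => hz.symm ▸ hw)⟩

lemma IsCriticalZero.isLittleO (hv : IsCriticalZero v z) :
    (fun w => v w - iteratedFDeriv ℝ 2 v z ![w - z, w - z] / 2) =o[𝓝 z]
      fun w => ‖w - z‖ ^ 2 := by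
  set H := fderiv ℝ (fderiv ℝ v) z with hH
  have hsymm : IsSymmSndFDerivAt ℝ v z := hv.contDiffAt.isSymmSndFDerivAt (by simp)
  have hderiv : HasFDerivAt (fderiv ℝ v) H z :=
    ((hv.contDiffAt.fderiv_right (m := 1) le_rfl).differentiableAt one_ne_zero).hasFDerivAt
  have hquad (w : F) : HasFDerivAt (fun w => 2⁻¹ * H (w - z) (w - z)) (H (w - z)) w := by
    have hsub : HasFDerivAt (fun w => w - z) (ContinuousLinearMap.id ℝ F) w :=
      (hasFDerivAt_id w).sub_const z
    refine (((H.hasFDerivAt.comp w hsub).clm_apply hsub).const_mul 2⁻¹).congr_fderiv ?_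
    ext h
    simp only [hH, Function.comp_apply, map_sub, ContinuousLinearMap.comp_id, smul_add, add_apply,
      smul_apply, sub_apply, smul_eq_mul, ContinuousLinearMap.flip_apply, hsymm.eq h w,
      hsymm.eq h z]
    ring
  obtain ⟨ρ, hρ, hball⟩ := Metric.eventually_nhds_iff_ball.1 <|
    (hv.contDiffAt.eventually (by simp)).mono fun w hw => hw.differentiableAt two_ne_zero
  have hlittle := (convex_ball z ρ).isLittleO_pow_succ (n := 1) (mem_ball_self hρ)
    (fun w hw => ((hball w hw).hasFDerivAt.sub (hquad w)).hasFDerivWithinAt) (by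
      simpa [hv.fderiv_eq_zero, (isOpen_ball.mem_nhds (mem_ball_self hρ))] using
        (hasFDerivAt_iff_isLittleO.1 hderiv).norm_right.mono nhdsWithin_le_nhds)
  simpa [hv.eq_zero, iteratedFDeriv_two_apply, div_eq_inv_mul, ← hH,
    isOpen_ball.nhdsWithin_eq (mem_ball_self hρ)]
    using hlittle

lemma IsCriticalZero.exists_eventually_le_mul_norm_sq (hv : IsCriticalZero v z) :
    ∃ C, ∀ᶠ w in 𝓝 z, v w ≤ C * ‖w - z‖ ^ 2 := by
  refine ⟨1 + ‖iteratedFDeriv ℝ 2 v z‖ / 2, ?_⟩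
  filter_upwards [hv.isLittleO.bound one_pos] with w hw
  have hhess := (iteratedFDeriv ℝ 2 v z).le_opNorm ![w - z, w - z]
  simp only [Real.norm_eq_abs, abs_le, Fin.prod_univ_two, Matrix.cons_val_zero,
    Matrix.cons_val_one, norm_pow, abs_norm] at hw hhess
  nlinarith [hw.2, hhess.2]

lemma tendsto_add_smul_nhdsGT_zero (z X : F) :
    Tendsto (fun t : ℝ => z + t • X) (𝓝[>] 0) (𝓝 z) :=
  (Continuous.tendsto' (by fun_prop) _ _ (by simp)).mono_left nhdsWithin_le_nhds

lemma IsCriticalZero.tendsto_div_sq (hv : IsCriticalZero v z) (X : F) :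
    Tendsto (fun t : ℝ => v (z + t • X) / t ^ 2) (𝓝[>] 0)
      (𝓝 (iteratedFDeriv ℝ 2 v z ![X, X] / 2)) := by
  have hline := hv.isLittleO.comp_tendsto (tendsto_add_smul_nhdsGT_zero z X)
  have hO : (fun t : ℝ => ‖z + t • X - z‖ ^ 2) =O[𝓝[>] 0] fun t : ℝ => t ^ 2 :=
    .of_bound (‖X‖ ^ 2) (Eventually.of_forall fun t => by
      simp [norm_smul, mul_pow, mul_comm])
  refine tendsto_sub_nhds_zero_iff.1 ((hline.trans_isBigO hO).tendsto_div_nhds_zero.congr' ?_)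
  filter_upwards [self_mem_nhdsWithin] with t ht
  have ht0 : t ≠ 0 := (mem_Ioi.1 ht).ne'
  simp only [Function.comp_apply, add_sub_cancel_left, iteratedFDeriv_two_apply,
    Matrix.cons_val_zero, Matrix.cons_val_one, map_smul, smul_apply,
    smul_eq_mul]
  field_simp

lemma IsCriticalZero.mul_iteratedFDeriv_le (hv : IsCriticalZero v z) (hu : IsCriticalZero u z)
    (hχ : ContinuousAt χ z) (hle : ∀ᶠ w in 𝓝 z, χ w * v w ≤ u w) (X : F) :
    χ z * iteratedFDeriv ℝ 2 v z ![X, X] ≤ iteratedFDeriv ℝ 2 u z ![X, X] := by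
  have hline := tendsto_add_smul_nhdsGT_zero z X
  have hlim := le_of_tendsto_of_tendsto ((hχ.tendsto.comp hline).mul (hv.tendsto_div_sq X))
    (hu.tendsto_div_sq X) <| by
      filter_upwards [hline.eventually hle] with t ht
      rw [Function.comp_apply, ← mul_div_assoc]
      gcongr
  linarith

end SecondOrder

section Sibony

open Real

variable {n : ℕ} {D D' : Set (Cn n)} {u v χ : Cn n → ℝ} {z X : Cn n}

lemma IsCriticalZero.mul_leviForm_le (hv : IsCriticalZero v z) (hu : IsCriticalZero u z)
    (hχ : ContinuousAt χ z) (hle : ∀ᶠ w in 𝓝 z, χ w * v w ≤ u w) (X : Cn n) :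
    χ z * leviForm v z X ≤ leviForm u z X := by
  unfold leviForm
  linarith [hv.mul_iteratedFDeriv_le hu hχ hle X,
    hv.mul_iteratedFDeriv_le hu hχ hle (Complex.I • X)]

/-- The functions over which the supremum defining the Sibony metric of `D` at `z` is taken. -/
structure SibonyCompetitor (D : Set (Cn n)) (z : Cn n) (v : Cn n → ℝ) : Prop where
  logPSHOn : LogPSHOn v D
  lt_one : ∀ w ∈ D, v w < 1
  eq_zero : v z = 0
  contDiffAt : ContDiffAt ℝ 2 v z

lemma SibonyCompetitor.isCriticalZero (hv : SibonyCompetitor D z v) (hD : D ∈ 𝓝 z) :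
    IsCriticalZero v z :=
  isCriticalZero_of_eventually_nonneg hv.contDiffAt hv.eq_zero
    (eventually_of_mem hD hv.logPSHOn.nonneg)

lemma SibonyCompetitor.le_norm_div_sq (hv : SibonyCompetitor D z v) (hD : D ∈ 𝓝 z) {ρ : ℝ}
    (hρ : 0 < ρ) (hin : ∀ t ∈ closedBall (0 : ℂ) ρ, z + t • X ∈ D) {t : ℂ}
    (ht : t ∈ closedBall 0 ρ) : v (z + t • X) ≤ (‖t‖ / ρ) ^ 2 := by
  obtain ⟨C, hC⟩ := (hv.isCriticalZero hD).exists_eventually_le_mul_norm_sq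
  refine le_norm_div_sq_of_logSubmeanAt (f := fun t => v (z + t • X)) (C := C * ‖X‖ ^ 2) hρ
    (hv.logPSHOn.upperSemicontinuousOn_comp_add_smul hin)
    (fun s hs => hv.logPSHOn.logSubmeanAt_comp_add_smul (hin s (ball_subset_closedBall hs)))
    (fun s hs => (hv.lt_one _ (hin s (sphere_subset_closedBall hs))).le) ?_ ht
  refine (eventually_add_smul_nhds_zero hC X).mono fun s hs => hs.trans_eq ?_
  rw [add_sub_cancel_left, norm_smul]
  ring

lemma SibonyCompetitor.iteratedFDeriv_le (hv : SibonyCompetitor D z v) (hD : D ∈ 𝓝 z) {ρ : ℝ}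
    (hρ : 0 < ρ) (hin : ∀ t ∈ closedBall (0 : ℂ) ρ, z + t • X ∈ D) :
    iteratedFDeriv ℝ 2 v z ![X, X] ≤ 2 * (ρ⁻¹) ^ 2 := by
  have hlim := le_of_tendsto ((hv.isCriticalZero hD).tendsto_div_sq X)
    (b := (ρ⁻¹) ^ 2) <| by
      filter_upwards [Ioc_mem_nhdsGT hρ] with t ht
      have hle := hv.le_norm_div_sq hD hρ hin (t := t) (by simpa [abs_of_pos ht.1] using ht.2)
      rw [div_le_iff₀ (by have := ht.1; positivity), ← mul_pow, inv_mul_eq_div]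
      simpa [abs_of_pos ht.1] using hle
  linarith

lemma bddAbove_sqrt_leviForm (hD : D ∈ 𝓝 z) (X : Cn n) :
    BddAbove ((fun v => √(leviForm v z X)) '' {v | SibonyCompetitor D z v}) := by
  obtain ⟨ρ, ⟨hin, hinI⟩, hρ⟩ := (((eventually_pos_and_forall_mem_closedBall
    (eventually_add_smul_nhds_zero hD X)).and (eventually_pos_and_forall_mem_closedBall
    (eventually_add_smul_nhds_zero hD (Complex.I • X)))).and self_mem_nhdsWithin).exists
  refine ⟨√((1 / 4) * (2 * (ρ⁻¹) ^ 2 + 2 * (ρ⁻¹) ^ 2)), ?_⟩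
  rintro _ ⟨v, hv, rfl⟩
  refine sqrt_le_sqrt ?_
  unfold leviForm
  gcongr
  · exact hv.iteratedFDeriv_le hD hρ hin.2
  · exact hv.iteratedFDeriv_le hD hρ hinI.2

lemma sibony_eq_sSup_image (hD : IsOpen D) (z X : Cn n) :
    sibony D z X = sSup ((fun v => √(leviForm v z X)) '' {v | SibonyCompetitor D z v}) := by
  refine congrArg sSup (Set.ext fun s => ⟨?_, ?_⟩)
  · rintro ⟨v, hv, hz, hpsh, ⟨W, hW, hvW⟩, rfl⟩
    exact ⟨v, ⟨logPSHOn_of_pshOn_elog hD (fun w hw => (hv w hw).1) hpsh,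
      fun w hw => (hv w hw).2, hz, hvW.contDiffAt hW⟩, rfl⟩
  · rintro ⟨v, hv, rfl⟩
    obtain ⟨W, hW, hvW⟩ := hv.contDiffAt.contDiffOn (m := 2) le_rfl (by simp)
    exact ⟨v, fun w hw => ⟨hv.logPSHOn.nonneg w hw, hv.lt_one w hw⟩, hv.eq_zero,
      hv.logPSHOn.pshOn_elog, ⟨W, by simpa using hW, hvW⟩, rfl⟩

lemma SibonyCompetitor.sqrt_leviForm_le_sibony (hv : SibonyCompetitor D z v) (hD : IsOpen D)
    (hz : z ∈ D) (X : Cn n) : √(leviForm v z X) ≤ sibony D z X :=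
  sibony_eq_sSup_image hD z X ▸
    le_csSup (bddAbove_sqrt_leviForm (hD.mem_nhds hz) X) (mem_image_of_mem _ hv)

lemma sibony_nonneg (D : Set (Cn n)) (z X : Cn n) : 0 ≤ sibony D z X := by
  refine Real.sSup_nonneg ?_
  rintro _ ⟨v, -, -, -, -, rfl⟩
  exact sqrt_nonneg _

lemma mul_sibony_le_sibony (hD : IsOpen D) (hz : z ∈ D) (hD' : IsOpen D') {c : ℝ} (hc : 0 < c)
    (h : ∀ v, SibonyCompetitor D' z v →
      ∃ u, SibonyCompetitor D z u ∧ c ^ 2 * leviForm v z X ≤ leviForm u z X) :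
    c * sibony D' z X ≤ sibony D z X := by
  rw [← le_div_iff₀' hc, sibony_eq_sSup_image hD']
  refine Real.sSup_le ?_ (div_nonneg (sibony_nonneg D z X) hc.le)
  rintro _ ⟨v, hv, rfl⟩
  obtain ⟨u, hu, hvu⟩ := h v hv
  rw [le_div_iff₀' hc]
  calc c * √(leviForm v z X) = √(c ^ 2 * leviForm v z X) := by
        rw [sqrt_mul (sq_nonneg c), sqrt_sq hc.le]
    _ ≤ √(leviForm u z X) := sqrt_le_sqrt hvu
    _ ≤ sibony D z X := hu.sqrt_leviForm_le_sibony hD hz X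

lemma sibony_anti (hD' : IsOpen D') (hz : z ∈ D') (hsub : D' ⊆ D) (X : Cn n) :
    sibony D z X ≤ sibony D' z X := by
  refine Real.sSup_le ?_ (sibony_nonneg D' z X)
  rintro _ ⟨v, hv, hvz, hpsh, ⟨W, hW, hvW⟩, rfl⟩
  have hv' : SibonyCompetitor D' z v :=
    ⟨logPSHOn_of_pshOn_elog hD' (fun w hw => (hv w (hsub hw)).1) (hpsh.mono hsub),
      fun w hw => (hv w (hsub hw)).2, hvz, hvW.contDiffAt hW⟩
  exact hv'.sqrt_leviForm_le_sibony hD' hz X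

end Sibony

section Localization

open Real

section NormBarrier

variable {E : Type*} [NormedAddCommGroup E] {v : E → ℝ} {p z w : E} {δ r t : ℝ}

/-- The squared distance to `z`, scaled so as to be less than `1` on every ball of radius `r`
containing `z`. -/
def normBarrier (r : ℝ) (z w : E) : ℝ := (‖w - z‖ / (2 * r)) ^ 2

lemma normBarrier_nonneg (r : ℝ) (z w : E) : 0 ≤ normBarrier r z w := sq_nonneg _

lemma normBarrier_self (r : ℝ) (z : E) : normBarrier r z z = 0 := by simp [normBarrier]

@[fun_prop]
lemma continuous_normBarrier (r : ℝ) (z : E) : Continuous (normBarrier r z) := by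
  unfold normBarrier
  fun_prop

lemma normBarrier_lt_one (hz : z ∈ ball p r) (hw : w ∈ ball p r) : normBarrier r z w < 1 := by
  have hr : 0 < r := pos_of_mem_ball hz
  have hwz : ‖w - z‖ < 2 * r := by
    rw [← dist_eq_norm]
    linarith [dist_triangle_right w z p, mem_ball.1 hz, mem_ball.1 hw]
  exact pow_lt_one₀ (by positivity) ((div_lt_one (by positivity)).2 hwz) two_ne_zero

/-- A convex combination of `v` and the barrier at `z`; the barrier keeps it of quadratic size
from below near `z`. -/
def barrierAverage (t r : ℝ) (z : E) (v : E → ℝ) (w : E) : ℝ :=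
  t * v w + (1 - t) * normBarrier r z w

/-- The function `barrierAverage`, bounded from below away from `z` by the square of the barrier. -/
def barrierMax (t r : ℝ) (z : E) (v : E → ℝ) (w : E) : ℝ :=
  max (barrierAverage t r z v w) (normBarrier r z w ^ 2)

lemma barrierMax_nonneg (t r : ℝ) (z : E) (v : E → ℝ) (w : E) : 0 ≤ barrierMax t r z v w :=
  (sq_nonneg _).trans (le_max_right _ _)

lemma barrierMax_lt_one (ht : t ∈ Ioo 0 1) (hz : z ∈ ball p r) (hw : w ∈ ball p r)
    (hv : v w < 1) : barrierMax t r z v w < 1 := by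
  have hb := normBarrier_lt_one hz hw
  refine max_lt ?_ (pow_lt_one₀ (normBarrier_nonneg r z w) hb two_ne_zero)
  calc t * v w + (1 - t) * normBarrier r z w < t * 1 + (1 - t) * 1 := by
        have := mul_lt_mul_of_pos_left hv ht.1
        have := mul_lt_mul_of_pos_left hb (sub_pos.2 ht.2)
        linarith
    _ = 1 := by ring

lemma div_pow_four_le_barrierMax (hδ : 0 ≤ δ) (hr : 0 < r) (hw : δ ≤ ‖w - z‖) :
    (δ / (2 * r)) ^ 4 ≤ barrierMax t r z v w :=
  calc (δ / (2 * r)) ^ 4 ≤ (‖w - z‖ / (2 * r)) ^ 4 := by gcongr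
    _ = normBarrier r z w ^ 2 := by rw [normBarrier, ← pow_mul]
    _ ≤ barrierMax t r z v w := le_max_right _ _

lemma barrierMax_eventuallyEq (ht : t ∈ Ioo 0 1) (hv : ∀ᶠ w in 𝓝 z, 0 ≤ v w) :
    barrierMax t r z v =ᶠ[𝓝 z] barrierAverage t r z v := by
  have hsmall : ∀ᶠ w in 𝓝 z, normBarrier r z w < 1 - t :=
    (continuous_normBarrier r z).continuousAt.eventually_lt_const
      (by simpa [normBarrier_self] using ht.2)
  filter_upwards [hv, hsmall] with w hvw hw
  refine max_eq_left ?_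
  calc normBarrier r z w ^ 2 ≤ (1 - t) * normBarrier r z w := by
        rw [sq]
        exact mul_le_mul_of_nonneg_right hw.le (normBarrier_nonneg r z w)
    _ ≤ barrierAverage t r z v w := le_add_of_nonneg_left (mul_nonneg ht.1.le hvw)

variable [NormedSpace ℂ E] {D : Set E}

lemma logPSHOn_normBarrier (hD : IsOpen D) (hr : 0 < r) (z : E) :
    LogPSHOn (normBarrier r z) D :=
  ((logPSHOn_norm_sub z D).mul_const hD (inv_pos.2 (mul_pos two_pos hr))).pow hD two_ne_zero

lemma logPSHOn_barrierMax (hD : IsOpen D) (hr : 0 < r) (ht : t ∈ Ioo 0 1) (hv : LogPSHOn v D)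
    (z : E) : LogPSHOn (barrierMax t r z v) D := by
  have hb := logPSHOn_normBarrier hD hr z
  have havg := (hv.mul_const hD ht.1).add hD (hb.mul_const hD (sub_pos.2 ht.2)) (by fun_prop)
  exact (havg.congr hD fun w _ => by simp only [barrierAverage, mul_comm]).max
    (hb.pow hD two_ne_zero)

end NormBarrier

variable {n : ℕ} {D : Set (Cn n)} {χ v : Cn n → ℝ} {p z : Cn n} {δ r κ : ℝ}

lemma contDiff_normBarrier (r : ℝ) (z : Cn n) : ContDiff ℝ 2 (normBarrier r z) := by
  have heq : normBarrier r z = fun w => ‖w - z‖ ^ 2 / (2 * r) ^ 2 := funext fun w => div_pow _ _ _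
  rw [heq]
  exact ((contDiff_id.sub contDiff_const).norm_sq ℝ).div_const _

/-- A `C²` log-plurisubharmonic weight with values in `(0, 1)` on `D` near `p` which is at most `κ`
on the outer shell `r / 2 < dist w p < r` and much larger than `κ` on the ball of radius `3 * δ`.
The fourth power is the bound provided by `div_pow_four_le_barrierMax`. -/
structure LocalizingWeight (D : Set (Cn n)) (p : Cn n) (δ r κ : ℝ) (χ : Cn n → ℝ) : Prop where
  delta_pos : 0 < δ
  six_mul_delta_le : 6 * δ ≤ r
  kappa_nonneg : 0 ≤ κ
  kappa_lt_one : κ < 1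
  logPSHOn : LogPSHOn χ (D ∩ ball p r)
  contDiffAt : ∀ w ∈ D ∩ ball p r, ContDiffAt ℝ 2 χ w
  mem_Ioo : ∀ w ∈ D ∩ ball p r, χ w ∈ Ioo 0 1
  le_kappa : ∀ w ∈ D ∩ ball p r, r / 2 < dist w p → χ w ≤ κ
  kappa_le : ∀ w ∈ D, dist w p < 3 * δ → κ ≤ (δ / (2 * r)) ^ 4 * χ w

lemma LocalizingWeight.mem_ball (hχ : LocalizingWeight D p δ r κ χ) (hz : z ∈ ball p δ) :
    z ∈ ball p r :=
  ball_subset_ball (by linarith [hχ.delta_pos, hχ.six_mul_delta_le]) hz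

/-- The transplantation to `D` of a competitor `v` for `D ∩ ball p r` at `z`. -/
def transplant (χ v : Cn n → ℝ) (p z : Cn n) (δ r κ : ℝ) : Cn n → ℝ :=
  glueConst (fun w => barrierMax (χ z) r z v w * χ w) κ p (3 * δ) r

lemma LocalizingWeight.logPSHOn_transplant (hχ : LocalizingWeight D p δ r κ χ) (hD : IsOpen D)
    (hzD : z ∈ D) (hzp : z ∈ ball p δ) (hv : SibonyCompetitor (D ∩ ball p r) z v) :
    LogPSHOn (transplant χ v p z δ r κ) D := by
  have hδ := hχ.delta_pos
  have hδr := hχ.six_mul_delta_le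
  have hzr := hχ.mem_ball hzp
  have hχz := hχ.mem_Ioo z ⟨hzD, hzr⟩
  have hopen : IsOpen (D ∩ ball p r) := hD.inter isOpen_ball
  refine logPSHOn_glueConst (s' := 2 * δ) (r' := r / 2) hD ?_ hχ.kappa_nonneg (by linarith)
    (by linarith) (by linarith) (fun w hw h2δ h3δ => ?_) (fun w hw hrw hwr => ?_)
  · exact (logPSHOn_barrierMax hopen (by linarith) hχz hv.logPSHOn z).mul hopen hχ.logPSHOn
      (fun w hw => (hχ.contDiffAt w hw).continuousAt.continuousWithinAt)
      fun w hw => (hχ.mem_Ioo w hw).1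
  · have hwz : δ ≤ ‖w - z‖ := by
      rw [← dist_eq_norm]
      linarith [dist_triangle w z p, Metric.mem_ball.1 hzp]
    exact (hχ.kappa_le w hw h3δ).trans <| mul_le_mul_of_nonneg_right
      (div_pow_four_le_barrierMax hδ.le (by linarith) hwz)
      (hχ.mem_Ioo w ⟨hw, by rw [Metric.mem_ball]; linarith⟩).1.le
  · exact (mul_le_of_le_one_left (hχ.mem_Ioo w ⟨hw, hwr⟩).1.le
      (barrierMax_lt_one hχz hzr hwr (hv.lt_one w ⟨hw, hwr⟩)).le).trans
      (hχ.le_kappa w ⟨hw, hwr⟩ hrw)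

lemma LocalizingWeight.transplant_lt_one (hχ : LocalizingWeight D p δ r κ χ)
    (hzD : z ∈ D) (hzp : z ∈ ball p δ) (hv : SibonyCompetitor (D ∩ ball p r) z v)
    {w : Cn n} (hw : w ∈ D) : transplant χ v p z δ r κ w < 1 := by
  have hδ := hχ.delta_pos
  have hδr := hχ.six_mul_delta_le
  have hzr := hχ.mem_ball hzp
  have hlt (hwr : w ∈ ball p r) : barrierMax (χ z) r z v w * χ w < 1 :=
    mul_lt_one_of_nonneg_of_lt_one_left (barrierMax_nonneg _ _ _ _ _)
      (barrierMax_lt_one (hχ.mem_Ioo z ⟨hzD, hzr⟩) hzr hwr (hv.lt_one w ⟨hw, hwr⟩))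
      (hχ.mem_Ioo w ⟨hw, hwr⟩).2.le
  unfold transplant glueConst
  split_ifs with hs hr
  · exact hlt (by rw [Metric.mem_ball]; linarith)
  · exact max_lt (hlt hr) hχ.kappa_lt_one
  · exact hχ.kappa_lt_one

lemma LocalizingWeight.transplant_eventuallyEq (hχ : LocalizingWeight D p δ r κ χ) (hD : IsOpen D)
    (hzD : z ∈ D) (hzp : z ∈ ball p δ) (hv : SibonyCompetitor (D ∩ ball p r) z v) :
    transplant χ v p z δ r κ =ᶠ[𝓝 z] fun w => barrierAverage (χ z) r z v w * χ w := by
  have hz : z ∈ D ∩ ball p r := ⟨hzD, hχ.mem_ball hzp⟩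
  have hz3 : z ∈ ball p (3 * δ) := ball_subset_ball (by linarith [hχ.delta_pos]) hzp
  have hv0 : ∀ᶠ w in 𝓝 z, 0 ≤ v w :=
    eventually_of_mem ((hD.inter isOpen_ball).mem_nhds hz) hv.logPSHOn.nonneg
  filter_upwards [barrierMax_eventuallyEq (r := r) (hχ.mem_Ioo z hz) hv0,
    isOpen_ball.mem_nhds hz3] with w hw hw3
  rw [transplant, glueConst, if_pos (Metric.mem_ball.1 hw3), hw]

lemma LocalizingWeight.sibonyCompetitor_transplant (hχ : LocalizingWeight D p δ r κ χ)
    (hD : IsOpen D) (hzD : z ∈ D) (hzp : z ∈ ball p δ)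
    (hv : SibonyCompetitor (D ∩ ball p r) z v) :
    SibonyCompetitor D z (transplant χ v p z δ r κ) where
  logPSHOn := hχ.logPSHOn_transplant hD hzD hzp hv
  lt_one _ hw := hχ.transplant_lt_one hzD hzp hv hw
  eq_zero := by
    rw [(hχ.transplant_eventuallyEq hD hzD hzp hv).eq_of_nhds]
    simp [barrierAverage, normBarrier_self, hv.eq_zero]
  contDiffAt := by
    refine ContDiffAt.congr_of_eventuallyEq ?_ (hχ.transplant_eventuallyEq hD hzD hzp hv)
    exact ((contDiffAt_const.mul hv.contDiffAt).add
      (contDiffAt_const.mul (contDiff_normBarrier r z).contDiffAt)).mul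
      (hχ.contDiffAt z ⟨hzD, hχ.mem_ball hzp⟩)

lemma LocalizingWeight.sq_mul_leviForm_le (hχ : LocalizingWeight D p δ r κ χ)
    (hD : IsOpen D) (hzD : z ∈ D) (hzp : z ∈ ball p δ)
    (hv : SibonyCompetitor (D ∩ ball p r) z v) (X : Cn n) :
    χ z ^ 2 * leviForm v z X ≤ leviForm (transplant χ v p z δ r κ) z X := by
  have hz : z ∈ D ∩ ball p r := ⟨hzD, hχ.mem_ball hzp⟩
  have hznhds : D ∩ ball p r ∈ 𝓝 z := (hD.inter isOpen_ball).mem_nhds hz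
  rw [sq]
  refine (hv.isCriticalZero hznhds).mul_leviForm_le (χ := fun w => χ w * χ z)
    ((hχ.sibonyCompetitor_transplant hD hzD hzp hv).isCriticalZero (hD.mem_nhds hzD))
    ((hχ.contDiffAt z hz).continuousAt.mul continuousAt_const) ?_ X
  filter_upwards [hχ.transplant_eventuallyEq hD hzD hzp hv, hznhds] with w hw hwr
  rw [hw, mul_assoc, mul_comm (barrierAverage _ _ _ _ _)]
  exact mul_le_mul_of_nonneg_left (le_add_of_nonneg_right <|
    mul_nonneg (sub_pos.2 (hχ.mem_Ioo z hz).2).le (normBarrier_nonneg r z w))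
    (hχ.mem_Ioo w hwr).1.le

lemma LocalizingWeight.mul_sibony_le_sibony (hχ : LocalizingWeight D p δ r κ χ) (hD : IsOpen D)
    (hz : z ∈ D ∩ ball p δ) (X : Cn n) :
    χ z * sibony (D ∩ ball p r) z X ≤ sibony D z X :=
  _root_.mul_sibony_le_sibony hD hz.1 (hD.inter isOpen_ball)
    (hχ.mem_Ioo z ⟨hz.1, hχ.mem_ball hz.2⟩).1 fun v hv =>
    ⟨transplant χ v p z δ r κ, hχ.sibonyCompetitor_transplant hD hz.1 hz.2 hv,
      hχ.sq_mul_leviForm_le hD hz.1 hz.2 hv X⟩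

lemma IsPshPeakFn.lt_zero {φ : Cn n → EReal} (hφ : IsPshPeakFn D p φ) (hp : p ∉ D) {w : Cn n}
    (hw : w ∈ D) : φ w < 0 := by
  have hpw : p ≠ w := fun h => hp (h ▸ hw)
  obtain ⟨c, hc, hle⟩ := hφ.2.2 {w}ᶜ (isOpen_compl_singleton.mem_nhds hpw)
  exact (hle w ⟨hw, by simp⟩).trans_lt (EReal.coe_neg'.2 hc)

lemma IsPshPeakFn.exists_coe_lt {φ : Cn n → EReal} (hφ : IsPshPeakFn D p φ) {c r : ℝ} (hc : c < 0)
    (hr : 0 < r) : ∃ δ : ℝ, 0 < δ ∧ 6 * δ ≤ r ∧ ∀ w ∈ D, dist w p < 3 * δ → (c : EReal) < φ w := by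
  obtain ⟨ε, hε, hεφ⟩ := Metric.mem_nhdsWithin_iff.1
    (hφ.2.1.eventually_const_lt (EReal.coe_neg'.2 hc))
  refine ⟨min ε r / 6, by positivity, by linarith [min_le_right ε r], fun w hw hwp => ?_⟩
  exact hεφ ⟨by rw [Metric.mem_ball]; linarith [min_le_left ε r, lt_min hε hr], hw⟩

lemma exists_pow_exp_le {c η : ℝ} (hc : c < 0) (hη : 0 < η) : ∃ m : ℕ, m ≠ 0 ∧ exp c ^ m ≤ η :=
  ((eventually_ne_atTop 0).and ((tendsto_pow_atTop_nhds_zero_of_lt_one (exp_pos c).le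
    (exp_lt_one_iff.2 hc)).eventually_le_const hη)).exists

lemma IsPshPeakFn.exists_localizingWeight {φ : Cn n → EReal} {φ₀ : Cn n → ℝ}
    (hφ : IsPshPeakFn D p φ) (hD : IsOpen D) (hp : p ∉ D) (hr : 0 < r)
    (hφ₀ : ContDiffOn ℝ 2 φ₀ (ball p r)) (heq : ∀ w ∈ D ∩ ball p r, φ w = φ₀ w) :
    ∃ (δ κ : ℝ) (m : ℕ), m ≠ 0 ∧ LocalizingWeight D p δ r κ fun w => exp (φ₀ w) ^ m := by
  obtain ⟨c, hc, hfar⟩ := hφ.2.2 (ball p (r / 2)) (ball_mem_nhds p (half_pos hr))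
  obtain ⟨δ, hδ, hδr, hnear⟩ := hφ.exists_coe_lt (div_neg_of_neg_of_pos hc two_pos) hr
  obtain ⟨m, hm, hmδ⟩ := exists_pow_exp_le (div_neg_of_neg_of_pos hc two_pos)
    (show 0 < (δ / (2 * r)) ^ 4 by positivity)
  have hopen : IsOpen (D ∩ ball p r) := hD.inter isOpen_ball
  refine ⟨δ, exp c ^ m, m, hm, hδ, hδr, by positivity,
    pow_lt_one₀ (exp_pos c).le (exp_lt_one_iff.2 hc) hm, ?_, fun w hw => ?_, fun w hw => ?_,
    fun w hw hwp => ?_, fun w hw hwp => ?_⟩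
  · exact ((hφ.1.mono inter_subset_left).logPSHOn_exp hopen heq).pow hopen hm
  · exact (hφ₀.contDiffAt (isOpen_ball.mem_nhds hw.2)).exp.pow m
  · have hneg : φ₀ w < 0 := EReal.coe_neg'.1 (heq w hw ▸ hφ.lt_zero hp hw.1)
    exact ⟨by positivity, pow_lt_one₀ (exp_pos _).le (exp_lt_one_iff.2 hneg) hm⟩
  · have hle := hfar w ⟨hw.1, by rw [Metric.mem_ball]; linarith⟩
    rw [heq w hw, EReal.coe_le_coe_iff] at hle
    gcongr
  · have hlt := hnear w hw hwp
    rw [heq w ⟨hw, by rw [Metric.mem_ball]; linarith⟩, EReal.coe_lt_coe_iff] at hlt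
    calc exp c ^ m = exp (c / 2) ^ m * exp (c / 2) ^ m := by
          rw [← mul_pow, ← exp_add, add_halves]
      _ ≤ (δ / (2 * r)) ^ 4 * exp (φ₀ w) ^ m := by gcongr

lemma erexp_natCast_mul_coe (m : ℕ) (x : ℝ) : erexp (((m : ℝ) : EReal) * x) = exp x ^ m := by
  rw [← EReal.coe_mul, erexp, if_neg (EReal.coe_ne_bot _), if_neg (EReal.coe_ne_top _),
    EReal.toReal_coe, exp_nat_mul]

end Localization

theorem sibony_localization_peak_general {n : ℕ} {D : Set (Cn n)} (hD : IsOpen D) {p : Cn n}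
    (hp : p ∈ frontier D) {φ : Cn n → EReal} (hφ : IsPshPeakFn D p φ)
    (hφC2 : ∃ W ∈ 𝓝 p, ∃ φ₀ : Cn n → ℝ, ContDiffOn ℝ 2 φ₀ W ∧
      ∀ z ∈ D ∩ W, φ z = ((φ₀ z : ℝ) : EReal))
    {U : Set (Cn n)} (hU : U ∈ 𝓝 p) :
    ∃ V : Set (Cn n), IsOpen V ∧ p ∈ V ∧ V ⊆ U ∧ ∃ m : ℝ, 0 < m ∧
      ∀ z ∈ D ∩ V, ∀ X : Cn n,
        sibony D z X ≥ erexp ((m : EReal) * φ z) * sibony (D ∩ U) z X := by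
  obtain ⟨W, hW, φ₀, hφ₀, heq⟩ := hφC2
  obtain ⟨r, hr, hball⟩ := Metric.mem_nhds_iff.1 (inter_mem hU hW)
  obtain ⟨hrU, hrW⟩ := subset_inter_iff.1 hball
  have heqr : ∀ w ∈ D ∩ ball p r, φ w = φ₀ w := fun w hw => heq w ⟨hw.1, hrW hw.2⟩
  have hpD : p ∉ D := (hD.frontier_eq ▸ hp).2
  obtain ⟨δ, κ, m, hm, hχ⟩ := hφ.exists_localizingWeight hD hpD hr (hφ₀.mono hrW) heqr
  refine ⟨ball p δ, isOpen_ball, mem_ball_self hχ.delta_pos, fun w hw => hrU (hχ.mem_ball hw), m,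
    by positivity, fun z hz X => ?_⟩
  have hzr : z ∈ D ∩ ball p r := ⟨hz.1, hχ.mem_ball hz.2⟩
  calc erexp (((m : ℝ) : EReal) * φ z) * sibony (D ∩ U) z X
      = Real.exp (φ₀ z) ^ m * sibony (D ∩ U) z X := by
        rw [heqr z hzr, erexp_natCast_mul_coe]
    _ ≤ Real.exp (φ₀ z) ^ m * sibony (D ∩ ball p r) z X := by
        gcongr
        exact sibony_anti (hD.inter isOpen_ball) hzr (inter_subset_inter_right D hrU) X
    _ ≤ sibony D z X := hχ.mul_sibony_le_sibony hD hz X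

/-- Quantitative localization of the Sibony metric near a psh peak
boundary point whose peak function is `C²` near the point. -/
theorem sibony_localization_peak {n : ℕ} (D : Set (Cn n)) (hD : IsOpen D)
    (hDconn : IsConnected D) (p : Cn n) (hp : p ∈ frontier D)
    (φ : Cn n → EReal) (hφ : IsPshPeakFn D p φ)
    (hφC2 : ∃ W ∈ 𝓝 p, ∃ φ₀ : Cn n → ℝ, ContDiffOn ℝ 2 φ₀ W ∧
      ∀ z ∈ D ∩ W, φ z = ((φ₀ z : ℝ) : EReal))
    (U : Set (Cn n)) (hU : IsOpen U) (hUb : Bornology.IsBounded U) (hpU : p ∈ U) :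
    ∃ V : Set (Cn n), IsOpen V ∧ p ∈ V ∧ V ⊆ U ∧ ∃ m : ℝ, 0 < m ∧
      ∀ z ∈ D ∩ V, ∀ X : Cn n,
        sibony D z X ≥ erexp ((m : EReal) * φ z) * sibony (D ∩ U) z X :=
  sibony_localization_peak_general hD hp hφ hφC2 (hU.mem_nhds hpU)
end
end

section
/- Let D be a domain in ℂⁿ and let φ be a psh peak function for a point p ∈ ∂D. Then for any bounded open neighborhood U of p there exist an open neighborhood V ⊂ U of p and a constant m > 0 such that for all z ∈ D ∩ V one has σ_{D∩U}(z) ≥ e^{mφ(z)} σ_D(z). -/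
open Set Metric Filter Topology
open scoped Classical

noncomputable section

/-- The squeezing function of `D`: the supremum of all `r > 0` such that some holomorphic
embedding `f : D → 𝔹ₙ` with `f z = 0` satisfies `r𝔹ₙ ⊆ f(D)` (equal to `0` if no such
embedding exists, by the convention `sSup ∅ = 0` in `ℝ`). -/
def squeezing {n : ℕ} (D : Set (Cn n)) (z : Cn n) : ℝ :=
  sSup {r : ℝ | 0 < r ∧ ∃ f : Cn n → Cn n, DifferentiableOn ℂ f D ∧ InjOn f D ∧
    MapsTo f D (ball (0 : Cn n) 1) ∧ f z = 0 ∧ ball (0 : Cn n) r ⊆ f '' D}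

/-!
Let `f : D → 𝔹ₙ` be an embedding with `f z = 0` and `r𝔹ₙ ⊆ f(D)`. By Osgood's theorem (proved by
induction on the dimension, following Rosay) its inverse `g` is holomorphic on `r𝔹ₙ`, and it is
enough to see that `g` maps `e^{mφ(z)} r𝔹ₙ` into `U`. Suppose `g w` lies outside a ball `B(p, R)`
contained in `U`. Then so does the disc `h ζ = g (ζ r w / ‖w‖)` at `a = ‖w‖ / r`, hence, by the
maximum principle for `h - p`, at some point of each circle `‖ζ‖ = t` with `‖a‖ ≤ t < 1`. At all
these points `φ ∘ h` is at most a constant `-c < 0`. Comparing `max φ (-c) ∘ h` with a multiple of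
the sum of the Green functions with poles at `N` of these points, equally spaced in modulus, gives
`φ z ≤ -(c / 48) (1 - ‖a‖)`, which for `m = 96 / c` contradicts `‖a‖ < e^{mφ(z)}` as soon as `φ z`
is close to `0`.
-/

section HolomorphicRegularity

variable {E F : Type*} [NormedAddCommGroup E] [NormedSpace ℂ E]
  [NormedAddCommGroup F] [NormedSpace ℂ F]

lemma hasDerivAt_comp_line {f : E → F} {x v : E} {t : ℂ}
    (hf : DifferentiableAt ℂ f (x + t • v)) :
    HasDerivAt (fun s : ℂ => f (x + s • v)) (fderiv ℂ f (x + t • v) v) t := by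
  have hline : HasDerivAt (fun s : ℂ => x + s • v) v t := by
    simpa using ((hasDerivAt_id t).smul_const v).const_add x
  exact hf.hasFDerivAt.comp_hasDerivAt t hline

lemma eventually_add_smul_mem {U : Set E} (hU : IsOpen U) {x : E} {t : ℂ} {v : E}
    (hx : x + t • v ∈ U) : ∀ᶠ s in 𝓝 t, x + s • v ∈ U :=
  ContinuousAt.eventually_mem (f := fun s : ℂ => x + s • v) (by fun_prop) (hU.mem_nhds hx)

lemma analyticAt_comp_line [CompleteSpace F] {f : E → F} {U : Set E} (hU : IsOpen U)
    (hf : DifferentiableOn ℂ f U) {x v : E} {t : ℂ} (ht : x + t • v ∈ U) :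
    AnalyticAt ℂ (fun s : ℂ => f (x + s • v)) t :=
  DifferentiableOn.analyticAt (s := {s : ℂ | x + s • v ∈ U})
    (hf.comp (by fun_prop) fun _ hs => hs) (eventually_add_smul_mem hU ht)

lemma eventually_eq_of_fderiv_comp_eq_zero {f : E → F} {U : Set E} (hU : IsOpen U)
    (hf : DifferentiableOn ℂ f U) (hinj : InjOn f U) {γ : ℂ → E}
    (hγ : ∀ᶠ s in 𝓝 0, DifferentiableAt ℂ γ s ∧ γ s ∈ U ∧ fderiv ℂ f (γ s) = 0) :
    ∀ᶠ s in 𝓝 0, γ s = γ 0 := by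
  obtain ⟨ε, hε, hball⟩ := Metric.eventually_nhds_iff_ball.1 hγ
  have hderiv : ∀ s ∈ ball (0 : ℂ) ε, HasDerivAt (f ∘ γ) 0 s := fun s hs => by
    obtain ⟨hγs, hU', hfs⟩ := hball s hs
    simpa [hfs] using (hf.differentiableAt (hU.mem_nhds hU')).hasFDerivAt.comp_hasDerivAt s
      hγs.hasDerivAt
  filter_upwards [ball_mem_nhds 0 hε] with s hs
  have h0 := mem_ball_self (x := (0 : ℂ)) hε
  exact hinj (hball s hs).2.1 (hball 0 h0).2.1 <|
    isOpen_ball.is_const_of_deriv_eq_zero (convex_ball 0 ε).isPreconnected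
      (fun z hz => (hderiv z hz).differentiableAt.differentiableWithinAt)
      (fun z hz => (hderiv z hz).deriv) hs h0

lemma fderiv_apply_eq_circleIntegral [CompleteSpace F] {f : E → F} {x v : E} {ρ : ℝ} (hρ : 0 < ρ)
    (hf : ∀ t ∈ closedBall (0 : ℂ) ρ, DifferentiableAt ℂ f (x + t • v)) :
    fderiv ℂ f x v =
      (2 * Real.pi * Complex.I : ℂ)⁻¹ • ∮ t in C(0, ρ), (t ^ 2)⁻¹ • f (x + t • v) := by
  have hderiv := (hasDerivAt_comp_line (hf 0 (mem_closedBall_self hρ.le))).deriv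
  have hcauchy := DifferentiableOn.deriv_eq_smul_circleIntegral (c := 0) hρ fun t ht =>
    (hasDerivAt_comp_line (hf t ht)).differentiableAt.differentiableWithinAt
  simp only [sub_zero, one_div, hderiv, zero_smul, add_zero] at hcauchy
  rw [hcauchy, inv_smul_smul₀ (by simp [Real.pi_ne_zero])]

lemma norm_fderiv_le_of_forall_mem_closedBall {f : E → F} {x : E} {R M : ℝ}
    (hR : 0 < R) (hM : ∀ y ∈ closedBall x R, ‖f y‖ ≤ M)
    (hf : ∀ y ∈ closedBall x R, DifferentiableAt ℂ f y) :
    ‖fderiv ℂ f x‖ ≤ M / R := by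
  have hM0 : 0 ≤ M := (norm_nonneg _).trans (hM x (mem_closedBall_self hR.le))
  refine ContinuousLinearMap.opNorm_le_bound _ (by positivity) fun v => ?_
  rcases eq_or_ne v 0 with rfl | hv
  · simp
  have hv' : 0 < ‖v‖ := norm_pos_iff.2 hv
  have hmem : ∀ t ∈ closedBall (0 : ℂ) (R / ‖v‖), x + t • v ∈ closedBall x R := fun t ht => by
    rw [mem_closedBall_zero_iff, le_div_iff₀ hv'] at ht
    simpa [mem_closedBall_iff_norm, norm_smul] using ht
  have hcauchy := Complex.norm_deriv_le_of_forall_mem_sphere_norm_le (c := 0) (C := M)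
    (f := fun t : ℂ => f (x + t • v)) (div_pos hR hv')
    (DifferentiableOn.diffContOnCl fun t ht => (hasDerivAt_comp_line
      (hf _ (hmem t (closure_ball_subset_closedBall ht)))).differentiableAt.differentiableWithinAt)
    fun t ht => hM _ (hmem t (sphere_subset_closedBall ht))
  have hderiv := (hasDerivAt_comp_line (t := 0) (v := v)
    (hf _ (hmem 0 (mem_closedBall_self (by positivity))))).deriv
  rw [hderiv, zero_smul, add_zero, div_div_eq_mul_div, mul_div_right_comm] at hcauchy
  exact hcauchy

lemma continuous_deriv_circleMap (c : ℂ) (R : ℝ) : Continuous (deriv (circleMap c R)) := by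
  rw [funext (deriv_circleMap c R)]
  fun_prop

lemma continuous_inv_circleMap_sq {ρ : ℝ} (hρ : ρ ≠ 0) :
    Continuous fun θ : ℝ => (circleMap 0 ρ θ ^ 2)⁻¹ :=
  Continuous.inv₀ (by fun_prop) fun _ => pow_ne_zero _ (circleMap_ne_center hρ)

section FiniteDimensional

variable [FiniteDimensional ℂ E] [FiniteDimensional ℂ F]

lemma differentiableAt_circleIntegral_line {f : E → F} {x₀ v : E} {R ρ B : ℝ}
    (hR : 0 < R) (hρ : 0 < ρ)
    (hf : ∀ x ∈ ball x₀ R, ∀ t ∈ sphere (0 : ℂ) ρ, DifferentiableAt ℂ f (x + t • v))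
    (hB : ∀ x ∈ ball x₀ R, ∀ t ∈ sphere (0 : ℂ) ρ, ‖fderiv ℂ f (x + t • v)‖ ≤ B) :
    DifferentiableAt ℂ (fun x => ∮ t in C(0, ρ), (t ^ 2)⁻¹ • f (x + t • v)) x₀ := by
  have hmem : ∀ θ, circleMap 0 ρ θ ∈ sphere (0 : ℂ) ρ := circleMap_mem_sphere 0 hρ.le
  have hcont : ∀ x ∈ ball x₀ R, Continuous fun θ : ℝ => deriv (circleMap 0 ρ) θ •
      (circleMap 0 ρ θ ^ 2)⁻¹ • f (x + circleMap 0 ρ θ • v) := fun x hx =>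
    (continuous_deriv_circleMap 0 ρ).smul ((continuous_inv_circleMap_sq hρ.ne').smul
      (continuous_iff_continuousAt.2 fun θ => ContinuousAt.comp_of_eq
        (hf x hx _ (hmem θ)).continuousAt (by fun_prop) rfl))
  borelize E
  refine (intervalIntegral.hasFDerivAt_integral_of_dominated_of_fderiv_le
    (F' := fun x θ => deriv (circleMap 0 ρ) θ •
      (circleMap 0 ρ θ ^ 2)⁻¹ • fderiv ℂ f (x + circleMap 0 ρ θ • v))
    (bound := fun _ => ρ * (ρ ^ 2)⁻¹ * B) (ball_mem_nhds _ hR) ?_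
    ((hcont x₀ (mem_ball_self hR)).intervalIntegrable _ _) ?_
    (Eventually.of_forall fun θ _ x hx => ?_) intervalIntegrable_const
    (Eventually.of_forall fun θ _ x hx => ?_)).differentiableAt
  · filter_upwards [ball_mem_nhds x₀ hR] with x hx
    exact (hcont x hx).aestronglyMeasurable
  · have hmeas : MeasureTheory.StronglyMeasurable (fderiv ℂ f) := by
      have : CompleteSpace F := FiniteDimensional.complete ℂ F
      have : ProperSpace (E →L[ℂ] F) := FiniteDimensional.proper ℂ _
      borelize (E →L[ℂ] F)
      exact (measurable_fderiv ℂ f).stronglyMeasurable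
    have hline : Continuous fun θ : ℝ => x₀ + circleMap 0 ρ θ • v := by fun_prop
    exact ((continuous_deriv_circleMap 0 ρ).stronglyMeasurable.smul
      ((continuous_inv_circleMap_sq hρ.ne').stronglyMeasurable.smul
        (hmeas.comp_measurable hline.measurable))).aestronglyMeasurable
  · have := hB x hx _ (hmem θ)
    simp only [norm_smul, deriv_circleMap, norm_mul, norm_circleMap_zero, norm_inv, norm_pow,
      Complex.norm_I, mul_one, abs_of_pos hρ, mul_assoc]
    gcongr
  · have htranslate : HasFDerivAt (fun x => f (x + circleMap 0 ρ θ • v))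
        (fderiv ℂ f (x + circleMap 0 ρ θ • v)) x :=
      (hasFDerivAt_comp_add_right _).2 (hf x hx _ (hmem θ)).hasFDerivAt
    exact (htranslate.const_smul _).const_smul _

lemma differentiableAt_fderiv_apply {f : E → F} {U : Set E} (hU : IsOpen U)
    (hf : DifferentiableOn ℂ f U) (v : E) {x₀ : E} (hx₀ : x₀ ∈ U) :
    DifferentiableAt ℂ (fun x => fderiv ℂ f x v) x₀ := by
  have : ProperSpace E := FiniteDimensional.proper ℂ E
  have : CompleteSpace F := FiniteDimensional.complete ℂ F
  obtain ⟨R, hR, hRU⟩ : ∃ R > 0, closedBall x₀ (R + R + R) ⊆ U := by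
    obtain ⟨ε, hε, h⟩ := Metric.isOpen_iff.1 hU x₀ hx₀
    exact ⟨ε / 4, by positivity, (closedBall_subset_ball (by linarith)).trans h⟩
  obtain ⟨M, hM⟩ := (isCompact_closedBall x₀ (R + R + R)).exists_bound_of_continuousOn
    (hf.continuousOn.mono hRU)
  have hdiff : ∀ y ∈ closedBall x₀ (R + R + R), DifferentiableAt ℂ f y := fun y hy =>
    hf.differentiableAt (hU.mem_nhds (hRU hy))
  obtain ⟨ρ, hρ, hρv⟩ := exists_pos_mul_lt hR ‖v‖
  have hline : ∀ x ∈ ball x₀ R, ∀ t ∈ closedBall (0 : ℂ) ρ,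
      closedBall (x + t • v) R ⊆ closedBall x₀ (R + R + R) := fun x hx t ht => by
    refine closedBall_subset_closedBall' ?_
    have hdist := dist_triangle (x + t • v) x x₀
    rw [dist_self_add_left, norm_smul] at hdist
    rw [mem_closedBall_zero_iff] at ht
    have := mul_le_mul_of_nonneg_right ht (norm_nonneg v)
    rw [mem_ball] at hx
    linarith
  have hself : ∀ y : E, y ∈ closedBall y R := fun y => mem_closedBall_self hR.le
  refine ((differentiableAt_circleIntegral_line (B := M / R) hR hρ
    (fun x hx t ht => hdiff _ (hline x hx t (sphere_subset_closedBall ht) (hself _)))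
    fun x hx t ht => ?_).const_smul (2 * Real.pi * Complex.I : ℂ)⁻¹).congr_of_eventuallyEq ?_
  · have hsub := hline x hx t (sphere_subset_closedBall ht)
    exact norm_fderiv_le_of_forall_mem_closedBall hR (fun y hy => hM y (hsub hy))
      fun y hy => hdiff y (hsub hy)
  · filter_upwards [ball_mem_nhds x₀ hR] with x hx
    exact fderiv_apply_eq_circleIntegral hρ fun t ht => hdiff _ (hline x hx t ht (hself _))

theorem contDiffOn_nat_of_differentiableOn {f : E → F} {U : Set E} (hU : IsOpen U)
    (hf : DifferentiableOn ℂ f U) (k : ℕ) : ContDiffOn ℂ k f U := by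
  induction k generalizing f with
  | zero => simpa using hf.continuousOn
  | succ k ih =>
    push_cast
    rw [contDiffOn_succ_iff_fderiv_of_isOpen hU, contDiffOn_clm_apply]
    exact ⟨hf, by simp, fun v => ih fun x hx =>
      (differentiableAt_fderiv_apply hU hf v hx).differentiableWithinAt⟩

theorem differentiableOn_fderiv {f : E → F} {U : Set E} (hU : IsOpen U)
    (hf : DifferentiableOn ℂ f U) : DifferentiableOn ℂ (fderiv ℂ f) U :=
  ((contDiffOn_nat_of_differentiableOn hU hf 2).fderiv_of_isOpen hU
    (by norm_num)).differentiableOn one_ne_zero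

end FiniteDimensional

end HolomorphicRegularity

section OneVariable

lemma not_eventually_eq_of_injOn {g : ℂ → ℂ} {U : Set ℂ} (hU : IsOpen U) (hinj : InjOn g U)
    {x : ℂ} (hx : x ∈ U) : ¬∀ᶠ z in 𝓝 x, g z = g x := fun hconst => by
  have hpunctured := ((hconst.and (hU.mem_nhds hx)).filter_mono
    (nhdsWithin_le_nhds (s := {x}ᶜ))).and self_mem_nhdsWithin
  obtain ⟨z, ⟨hz, hzU⟩, hzx⟩ := hpunctured.exists
  exact hzx (hinj hzU hx hz)

lemma nhds_le_map_nhds_of_injOn {g : ℂ → ℂ} {U : Set ℂ} (hU : IsOpen U)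
    (hg : DifferentiableOn ℂ g U) (hinj : InjOn g U) {x : ℂ} (hx : x ∈ U) :
    𝓝 (g x) ≤ map g (𝓝 x) :=
  (hg.analyticAt (hU.mem_nhds hx)).eventually_constant_or_nhds_le_map_nhds.resolve_left
    (not_eventually_eq_of_injOn hU hinj hx)

lemma deriv_eventually_ne_zero_of_injOn {g : ℂ → ℂ} {U : Set ℂ} (hU : IsOpen U)
    (hg : DifferentiableOn ℂ g U) (hinj : InjOn g U) {x : ℂ} (hx : x ∈ U) :
    ∀ᶠ z in 𝓝[≠] x, deriv g z ≠ 0 := by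
  have hderiv : AnalyticAt ℂ (deriv g) x := (hg.analyticAt (hU.mem_nhds hx)).deriv
  refine hderiv.eventually_eq_zero_or_eventually_ne_zero.resolve_left fun hzero =>
    not_eventually_eq_of_injOn hU hinj hx ?_
  obtain ⟨ε, hε, hball⟩ := Metric.eventually_nhds_iff_ball.1 (hzero.and (hU.eventually_mem hx))
  filter_upwards [ball_mem_nhds x hε] with z hz
  exact isOpen_ball.is_const_of_deriv_eq_zero (convex_ball x ε).isPreconnected
    (hg.mono fun y hy => (hball y hy).2) (fun y hy => (hball y hy).1) hz (mem_ball_self hε)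

-- By the open mapping theorem the inverse is continuous, hence holomorphic off the critical values;
-- these are isolated, so Riemann's removable singularity theorem applies to the inverse.
theorem deriv_ne_zero_of_injOn {g : ℂ → ℂ} {U : Set ℂ} (hU : IsOpen U)
    (hg : DifferentiableOn ℂ g U) (hinj : InjOn g U) {x : ℂ} (hx : x ∈ U) : deriv g x ≠ 0 := by
  set i := Function.invFunOn g U
  have hleft : ∀ z ∈ U, i (g z) = z := hinj.leftInvOn_invFunOn
  have hopen : ∀ z ∈ U, 𝓝 (g z) ≤ map g (𝓝 z) := fun z hz =>
    nhds_le_map_nhds_of_injOn hU hg hinj hz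
  have hright : ∀ z ∈ U, ∀ᶠ y in 𝓝 (g z), g (i y) = y := fun z hz => hopen z hz <|
    (hU.eventually_mem hz).mono fun w hw => congrArg g (hleft w hw)
  have hcont : ∀ z ∈ U, ContinuousAt i (g z) := fun z hz => by
    rw [ContinuousAt, hleft z hz]
    exact (tendsto_map'_iff.2 <| tendsto_id.congr' <|
      (hU.eventually_mem hz).mono fun w hw => (hleft w hw).symm).mono_left (hopen z hz)
  have hdiff : ∀ᶠ y in 𝓝[≠] (g x), DifferentiableAt ℂ i y := by
    have hregular : ∀ᶠ z in 𝓝 x, z ≠ x → z ∈ U ∧ deriv g z ≠ 0 :=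
      ((hU.eventually_mem hx).and (eventually_nhdsWithin_iff.1
        (deriv_eventually_ne_zero_of_injOn hU hg hinj hx))).mono fun z hz hzx => ⟨hz.1, hz.2 hzx⟩
    refine eventually_nhdsWithin_iff.2 (hopen x hx (hregular.mono fun z hz hgz => ?_))
    obtain ⟨hzU, hderiv⟩ := hz fun h => hgz (congrArg g h)
    refine (HasDerivAt.of_local_left_inverse (hcont z hzU) ?_ hderiv
      (hright z hzU)).differentiableAt
    rw [hleft z hzU]
    exact (hg.differentiableAt (hU.mem_nhds hzU)).hasDerivAt
  have hi := (Complex.analyticAt_of_differentiable_on_punctured_nhds_of_continuousAt hdiff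
    (hcont x hx)).differentiableAt
  have hchain := hi.hasDerivAt.comp x (hg.differentiableAt (hU.mem_nhds hx)).hasDerivAt
  have hid : HasDerivAt (i ∘ g) 1 x := (hasDerivAt_id x).congr_of_eventuallyEq <|
    (hU.eventually_mem hx).mono hleft
  exact right_ne_zero_of_mul_eq_one (hchain.unique hid)

end OneVariable

section ZeroSets

lemma exists_eq_zero_of_norm_center_lt {g : ℂ → ℂ} {c : ℂ} {r m : ℝ} (hr : 0 < r)
    (hg : DiffContOnCl ℂ g (ball c r)) (hm : 0 < m) (hcenter : ‖g c‖ < m)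
    (hsphere : ∀ t ∈ sphere c r, m ≤ ‖g t‖) : ∃ t ∈ closedBall c r, g t = 0 := by
  by_contra! hne
  rw [← closure_ball c hr.ne'] at hne
  have hinv : ‖(g c)⁻¹‖ ≤ m⁻¹ := by
    refine Complex.norm_le_of_forall_mem_frontier_norm_le isBounded_ball (hg.inv hne)
      (fun t ht => ?_) (subset_closure (mem_ball_self hr))
    rw [frontier_ball c hr.ne'] at ht
    rw [Pi.inv_apply, norm_inv]
    exact inv_anti₀ hm (hsphere t ht)
  rw [norm_inv, inv_le_inv₀ (norm_pos_iff.2 (hne c (subset_closure (mem_ball_self hr)))) hm] at hinv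
  exact hcenter.not_ge hinv

lemma eventually_exists_eq_zero {X : Type*} [TopologicalSpace X] {G : X → ℂ → ℂ} {x₀ : X}
    {r : ℝ} (hr : 0 < r)
    (hcont : ∀ t ∈ closedBall (0 : ℂ) r, ContinuousAt (Function.uncurry G) (x₀, t))
    (hdiff : ∀ᶠ x in 𝓝 x₀, DiffContOnCl ℂ (G x) (ball 0 r))
    (hcenter : G x₀ 0 = 0) (hsphere : ∀ t ∈ sphere (0 : ℂ) r, G x₀ t ≠ 0) :
    ∀ᶠ x in 𝓝 x₀, ∃ t ∈ closedBall (0 : ℂ) r, G x t = 0 := by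
  have hslice : ∀ x : X, Continuous fun t : ℂ => (x, t) := fun x => by fun_prop
  obtain ⟨m, hm, hmin⟩ : ∃ m > 0, ∀ t ∈ sphere (0 : ℂ) r, m < ‖G x₀ t‖ := by
    have hcontG : ContinuousOn (fun t => ‖G x₀ t‖) (sphere 0 r) := fun t ht =>
      ((hcont t (sphere_subset_closedBall ht)).comp
        (hslice x₀).continuousAt).norm.continuousWithinAt
    obtain ⟨t₀, ht₀, hmin⟩ := (isCompact_sphere (0 : ℂ) r).exists_isMinOn
      (NormedSpace.sphere_nonempty.2 hr.le) hcontG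
    have hpos := norm_pos_iff.2 (hsphere t₀ ht₀)
    exact ⟨‖G x₀ t₀‖ / 2, half_pos hpos, fun t ht => (half_lt_self hpos).trans_le (hmin ht)⟩
  have hsphere' : ∀ᶠ x in 𝓝 x₀, ∀ t ∈ sphere (0 : ℂ) r, m < ‖G x t‖ :=
    (isCompact_sphere (0 : ℂ) r).eventually_forall_of_forall_eventually fun t ht =>
      (hcont t (sphere_subset_closedBall ht)).norm.eventually (lt_mem_nhds (hmin t ht))
  have hcenter' : ∀ᶠ x in 𝓝 x₀, ‖G x 0‖ < m := by
    have hcontx : ContinuousAt (fun x => G x 0) x₀ :=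
      (hcont 0 (mem_closedBall_self hr.le)).comp (f := fun x => (x, (0 : ℂ))) (by fun_prop)
    exact hcontx.norm.eventually (gt_mem_nhds (by simpa [hcenter] using hm))
  filter_upwards [hdiff, hsphere', hcenter'] with x hx hxs hxc
  exact exists_eq_zero_of_norm_center_lt hr hx hm hxc fun t ht => (hxs t ht).le

variable {E F : Type*} [NormedAddCommGroup E] [NormedSpace ℂ E]
  [NormedAddCommGroup F] [NormedSpace ℂ F]

lemma eventually_exists_eq_zero_on_line {J : E → ℂ} {U : Set E} (hU : IsOpen U)
    (hJ : DifferentiableOn ℂ J U) {x v : E} {r : ℝ} (hr : 0 < r)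
    (hmem : ∀ t ∈ closedBall (0 : ℂ) r, x + t • v ∈ U) (hJx : J x = 0)
    (hsphere : ∀ t ∈ sphere (0 : ℂ) r, J (x + t • v) ≠ 0) :
    ∀ᶠ y in 𝓝 x, ∃ t ∈ closedBall (0 : ℂ) r, J (y + t • v) = 0 := by
  have hadd : Continuous fun q : E × ℂ => q.1 + q.2 • v := by fun_prop
  refine eventually_exists_eq_zero hr (fun t ht => ?_) ?_ (by simpa using hJx) hsphere
  · exact ContinuousAt.comp (f := fun q : E × ℂ => q.1 + q.2 • v)
      (hJ.differentiableAt (hU.mem_nhds (hmem t ht))).continuousAt hadd.continuousAt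
  · have htube : ∀ᶠ y in 𝓝 x, ∀ t ∈ closedBall (0 : ℂ) r, y + t • v ∈ U :=
      (isCompact_closedBall _ _).eventually_forall_of_forall_eventually fun t ht =>
        hadd.continuousAt.eventually_mem (hU.mem_nhds (hmem t ht))
    filter_upwards [htube] with y hy
    refine DifferentiableOn.diffContOnCl fun t ht => DifferentiableAt.differentiableWithinAt ?_
    exact (hasDerivAt_comp_line (hJ.differentiableAt
      (hU.mem_nhds (hy t (closure_ball_subset_closedBall ht))))).differentiableAt

variable [FiniteDimensional ℂ E]

/-- The `k`-th derivative `∂ᵥᵏ J` of `J` in the direction `v`. It measures the order of vanishing of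
`J` along complex lines parallel to `v`. -/
def iteratedDirDeriv (v : E) (J : E → ℂ) : ℕ → E → ℂ
  | 0 => J
  | k + 1 => fun x => fderiv ℂ (iteratedDirDeriv v J k) x v

lemma differentiableOn_iteratedDirDeriv (v : E) {J : E → ℂ} {U : Set E} (hU : IsOpen U)
    (hJ : DifferentiableOn ℂ J U) (k : ℕ) : DifferentiableOn ℂ (iteratedDirDeriv v J k) U := by
  induction k with
  | zero => exact hJ
  | succ k ih => exact (differentiableOn_fderiv hU ih).clm_apply (differentiableOn_const v)

lemma iteratedDeriv_comp_line (v : E) {J : E → ℂ} {U : Set E} (hU : IsOpen U)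
    (hJ : DifferentiableOn ℂ J U) (k : ℕ) {x : E} {t : ℂ} (ht : x + t • v ∈ U) :
    iteratedDeriv k (fun s : ℂ => J (x + s • v)) t = iteratedDirDeriv v J k (x + t • v) := by
  induction k generalizing t with
  | zero => rw [iteratedDeriv_zero, iteratedDirDeriv]
  | succ k ih =>
    have hev : iteratedDeriv k (fun s : ℂ => J (x + s • v)) =ᶠ[𝓝 t]
        fun s => iteratedDirDeriv v J k (x + s • v) :=
      (eventually_add_smul_mem hU ht).mono fun s hs => ih hs
    rw [iteratedDeriv_succ, hev.deriv_eq]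
    exact (hasDerivAt_comp_line ((differentiableOn_iteratedDirDeriv v hU hJ k).differentiableAt
      (hU.mem_nhds ht))).deriv

lemma exists_iteratedDirDeriv_ne_zero_iff {v : E} {J : E → ℂ} {U : Set E} (hU : IsOpen U)
    (hJ : DifferentiableOn ℂ J U) {x : E} (hx : x ∈ U) :
    (∃ k, iteratedDirDeriv v J k x ≠ 0) ↔ ¬∀ᶠ t in 𝓝 (0 : ℂ), J (x + t • v) = 0 := by
  have hx0 : x + (0 : ℂ) • v ∈ U := by simpa using hx
  have hiter : ∀ k, iteratedDeriv k (fun t : ℂ => J (x + t • v)) 0 = iteratedDirDeriv v J k x :=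
    fun k => by simpa using iteratedDeriv_comp_line v hU hJ k hx0
  have han := analyticAt_comp_line hU hJ hx0
  rw [← analyticOrderAt_eq_top, ENat.eq_top_iff_forall_ge]
  simp only [ne_eq, ← not_forall, not_iff_not,
    natCast_le_analyticOrderAt_iff_iteratedDeriv_eq_zero han, hiter]
  exact ⟨fun h _ k _ => h k, fun h k => h (k + 1) k k.lt_succ_self⟩

-- Among the zeros of `J` take one where the order `k + 1` of vanishing along `v` is minimal: then
-- `∂ᵥᵏ J` vanishes on the whole zero set of `J`, but to first order only at that point.
lemma exists_simple_zero {v : E} {J : E → ℂ} {U : Set E} (hU : IsOpen U)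
    (hJ : DifferentiableOn ℂ J U) {x₀ : E} (hx₀ : x₀ ∈ U) (hJx₀ : J x₀ = 0)
    (hne : ¬∀ᶠ t in 𝓝 (0 : ℂ), J (x₀ + t • v) = 0) :
    ∃ K : E → ℂ, DifferentiableOn ℂ K U ∧ (∀ y ∈ U, J y = 0 → K y = 0) ∧
      ∃ x ∈ U, J x = 0 ∧ fderiv ℂ K x v ≠ 0 ∧ ¬∀ᶠ t in 𝓝 (0 : ℂ), J (x + t • v) = 0 := by
  have hex : ∃ k, ∃ x ∈ U, J x = 0 ∧ iteratedDirDeriv v J k x ≠ 0 := by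
    obtain ⟨k, hk⟩ := (exists_iteratedDirDeriv_ne_zero_iff hU hJ hx₀).2 hne
    exact ⟨k, x₀, hx₀, hJx₀, hk⟩
  obtain ⟨x, hx, hJx, hkx⟩ := Nat.find_spec hex
  have hk : Nat.find hex ≠ 0 := fun h => by
    rw [h] at hkx
    exact hkx hJx
  obtain ⟨k, hk⟩ := Nat.exists_eq_succ_of_ne_zero hk
  rw [hk] at hkx
  refine ⟨iteratedDirDeriv v J k, differentiableOn_iteratedDirDeriv v hU hJ k, fun y hy hJy => ?_,
    x, hx, hJx, hkx, (exists_iteratedDirDeriv_ne_zero_iff hU hJ hx).1 ⟨k + 1, hkx⟩⟩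
  by_contra hKy
  exact Nat.find_min hex (m := k) (by omega) ⟨y, hy, hJy, hKy⟩

lemma exists_implicit_line {K : E → ℂ} {U : Set E} (hU : IsOpen U) (hK : DifferentiableOn ℂ K U)
    {x v : E} (hx : x ∈ U) (hKx : K x = 0) (hKv : fderiv ℂ K x v ≠ 0) (w : E) :
    ∃ ψ : ℂ → ℂ, (∀ᶠ s in 𝓝 0, DifferentiableAt ℂ ψ s) ∧
      ∀ᶠ q : ℂ × ℂ in 𝓝 (0, 0), K (x + q.1 • w + q.2 • v) = 0 → ψ q.1 = q.2 := by
  let plane : ℂ × ℂ → E := fun q => x + q.1 • w + q.2 • v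
  have hplane0 : plane (0, 0) = x := by simp [plane]
  have hplane : ContDiff ℂ 1 plane := by fun_prop
  have hKC : ContDiffAt ℂ 1 (K ∘ plane) (0, 0) := by
    refine ContDiffAt.comp _ ?_ hplane.contDiffAt
    rw [hplane0]
    exact (contDiffOn_nat_of_differentiableOn hU hK 1).contDiffAt (hU.mem_nhds hx)
  have hpartial : (fderiv ℂ (K ∘ plane) (0, 0) ∘L .inr ℂ ℂ ℂ) 1 = fderiv ℂ K x v := by
    have hline := (hKC.differentiableAt one_ne_zero).hasFDerivAt.comp_hasDerivAt (0 : ℂ)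
      (f := fun t : ℂ => ((0 : ℂ), t)) ((hasDerivAt_const _ _).prodMk (hasDerivAt_id 0))
    have hx0 : x + (0 : ℂ) • v ∈ U := by simpa using hx
    have hline' := hasDerivAt_comp_line (hK.differentiableAt (hU.mem_nhds hx0))
    rw [zero_smul, add_zero] at hline'
    refine HasDerivAt.unique ?_ hline'
    simpa [plane, Function.comp_def] using hline
  have hinv : (fderiv ℂ (K ∘ plane) (0, 0) ∘L .inr ℂ ℂ ℂ).IsInvertible := by
    refine ⟨ContinuousLinearEquiv.smulLeft (Units.mk0 _ hKv), ?_⟩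
    ext
    simp [← hpartial]
  refine ⟨hKC.implicitFunction one_ne_zero hinv, ?_, ?_⟩
  · exact ((hKC.contDiffAt_implicitFunction one_ne_zero hinv).eventually (by simp)).mono
      fun s hs => hs.differentiableAt one_ne_zero
  · filter_upwards [hKC.eventually_apply_eq_iff_implicitFunction one_ne_zero hinv] with q hq hKq
    refine hq.1 ?_
    rw [Function.comp_apply, Function.comp_apply, hplane0, hKx]
    exact hKq

lemma exists_curve_in_zeroSet {J K : E → ℂ} {U : Set E} (hU : IsOpen U)
    (hJ : DifferentiableOn ℂ J U) (hK : DifferentiableOn ℂ K U)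
    (hJK : ∀ y ∈ U, J y = 0 → K y = 0) {x v : E} (hx : x ∈ U) (hJx : J x = 0)
    (hKv : fderiv ℂ K x v ≠ 0) (hne : ¬∀ᶠ t in 𝓝 (0 : ℂ), J (x + t • v) = 0) (w : E) :
    ∃ ψ : ℂ → ℂ, ∀ᶠ s in 𝓝 0, DifferentiableAt ℂ ψ s ∧
      x + s • w + ψ s • v ∈ U ∧ J (x + s • w + ψ s • v) = 0 := by
  obtain ⟨ψ, hψ, huniq⟩ := exists_implicit_line hU hK hx (hJK x hx hJx) hKv w
  have hplane : ∀ᶠ q : ℂ × ℂ in 𝓝 (0, 0), x + q.1 • w + q.2 • v ∈ U :=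
    ContinuousAt.eventually_mem (f := fun q : ℂ × ℂ => x + q.1 • w + q.2 • v) (by fun_prop)
      (hU.mem_nhds (by simpa using hx))
  have hx0 : x + (0 : ℂ) • v ∈ U := by simpa using hx
  have hisolated : ∀ᶠ q : ℂ × ℂ in 𝓝 (0, 0), q.2 ≠ 0 → J (x + q.2 • v) ≠ 0 :=
    continuous_snd.tendsto (0, 0) <| eventually_nhdsWithin_iff.1 <|
      (analyticAt_comp_line hU hJ hx0).eventually_eq_zero_or_eventually_ne_zero.resolve_left hne
  obtain ⟨ε, hε, hball⟩ := Metric.eventually_nhds_iff_ball.1 ((hplane.and huniq).and hisolated)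
  obtain ⟨r, hr, hrε⟩ := exists_between hε
  have hmem : ∀ s ∈ ball (0 : ℂ) ε, ∀ t ∈ closedBall (0 : ℂ) r, (s, t) ∈ ball ((0, 0) : ℂ × ℂ) ε :=
    fun s hs t ht => by
      rw [← ball_prod_same]
      exact ⟨hs, closedBall_subset_ball hrε ht⟩
  have hzero : ∀ᶠ s in 𝓝 (0 : ℂ), ∃ t ∈ closedBall (0 : ℂ) r, J (x + s • w + t • v) = 0 := by
    have htendsto : Tendsto (fun s : ℂ => x + s • w) (𝓝 0) (𝓝 x) :=
      Continuous.tendsto' (by fun_prop) _ _ (by simp)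
    refine htendsto.eventually (eventually_exists_eq_zero_on_line hU hJ hr (fun t ht => ?_) hJx
      fun t ht => ?_)
    · simpa using (hball _ (hmem 0 (mem_ball_self hε) t ht)).1.1
    · exact (hball _ (hmem 0 (mem_ball_self hε) t (sphere_subset_closedBall ht))).2
        (ne_of_mem_sphere ht hr.ne')
  refine ⟨ψ, ?_⟩
  filter_upwards [hψ, hzero, ball_mem_nhds 0 hε] with s hψs ⟨t, ht, hJt⟩ hs
  obtain ⟨hU', huniq'⟩ := (hball _ (hmem s hs t ht)).1
  rw [huniq' (hJK _ hU' hJt)]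
  exact ⟨hψs, hU', hJt⟩

-- A curve in the zero set of `J` transverse to the kernel direction would be contracted by `f`.
lemma ne_zero_of_fderiv_eq_zero_of_injOn (hE : 1 < Module.finrank ℂ E) {f : E → F} {J : E → ℂ}
    {U : Set E} (hU : IsOpen U) (hf : DifferentiableOn ℂ f U) (hinj : InjOn f U)
    (hJ : DifferentiableOn ℂ J U) (hfJ : ∀ y ∈ U, J y = 0 → fderiv ℂ f y = 0) {x₀ : E}
    (hx₀ : x₀ ∈ U) : J x₀ ≠ 0 := fun hJx₀ => by
  have : Nontrivial E := Module.nontrivial_of_finrank_pos (R := ℂ) (by omega)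
  obtain ⟨v, hv⟩ := exists_ne (0 : E)
  have hline : ¬∀ᶠ t in 𝓝 (0 : ℂ), J (x₀ + t • v) = 0 := fun hzero => by
    have hx₀' : x₀ + (0 : ℂ) • v ∈ U := by simpa using hx₀
    have hconst := eventually_eq_of_fderiv_comp_eq_zero hU hf hinj <|
      (hzero.and (eventually_add_smul_mem hU hx₀')).mono fun t ht =>
        ⟨by fun_prop, ht.2, hfJ _ ht.2 ht.1⟩
    obtain ⟨t, ht, ht0⟩ :=
      ((hconst.filter_mono nhdsWithin_le_nhds).and (self_mem_nhdsWithin (s := {0}ᶜ))).exists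
    exact ht0 (by simpa [hv] using ht)
  obtain ⟨K, hK, hJK, x, hx, hJx, hKv, hne⟩ := exists_simple_zero hU hJ hx₀ hJx₀ hline
  obtain ⟨w, hKw, hw⟩ : ∃ w, fderiv ℂ K x w = 0 ∧ w ≠ 0 :=
    (Submodule.ne_bot_iff _).1 <| LinearMap.ker_ne_bot_of_finrank_lt
      (f := (fderiv ℂ K x : E →ₗ[ℂ] ℂ)) (by rwa [Module.finrank_self])
  obtain ⟨ψ, hψ⟩ := exists_curve_in_zeroSet hU hJ hK hJK hx hJx hKv hne w
  have hconst := eventually_eq_of_fderiv_comp_eq_zero hU hf hinj <| hψ.mono fun s hs =>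
    ⟨by have := hs.1; fun_prop, hs.2.1, hfJ _ hs.2.1 hs.2.2⟩
  obtain ⟨s, hs, hs0⟩ :=
    ((hconst.filter_mono nhdsWithin_le_nhds).and (self_mem_nhdsWithin (s := {0}ᶜ))).exists
  have hdep : s • w + (ψ s - ψ 0) • v = 0 := by
    rw [sub_smul, add_sub_assoc', sub_eq_zero]
    simpa [add_assoc] using hs
  have hψs : ψ s - ψ 0 = 0 := by
    have happly := congrArg (fderiv ℂ K x) hdep
    rw [map_add, map_smul, map_smul, hKw] at happly
    simpa [hKv] using happly
  rw [hψs, zero_smul, add_zero, smul_eq_zero] at hdep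
  exact hdep.elim hs0 hw

end ZeroSets

section Osgood

universe u v

variable {E : Type u} {F : Type v} [NormedAddCommGroup E] [NormedSpace ℂ E] [FiniteDimensional ℂ E]
  [NormedAddCommGroup F] [NormedSpace ℂ F]

lemma exists_local_inverse [FiniteDimensional ℂ F] {f : E → F} {U : Set E} (hU : IsOpen U)
    (hf : DifferentiableOn ℂ f U) {x : E} (hx : x ∈ U) (L : E ≃L[ℂ] F)
    (hL : HasFDerivAt f (L : E →L[ℂ] F) x) :
    ∃ G : F → E, G (f x) = x ∧ HasFDerivAt G (L.symm : F →L[ℂ] E) (f x) ∧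
      ∀ᶠ y in 𝓝 (f x), DifferentiableAt ℂ G y ∧ f (G y) = y ∧ G y ∈ U := by
  have : CompleteSpace E := FiniteDimensional.complete ℂ E
  have hC : ContDiffAt ℂ (1 : ℕ) f x :=
    (contDiffOn_nat_of_differentiableOn hU hf 1).contDiffAt (hU.mem_nhds hx)
  have hstrict : HasStrictFDerivAt f (L : E →L[ℂ] F) x := hC.hasStrictFDerivAt' hL one_ne_zero
  have hinv : ContDiffAt ℂ (1 : ℕ) hstrict.localInverse (f x) := hC.to_localInverse hL one_ne_zero
  refine ⟨hstrict.localInverse, hstrict.localInverse_apply_image,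
    hstrict.to_localInverse.hasFDerivAt, ?_⟩
  filter_upwards [hinv.eventually (by simp), hstrict.eventually_right_inverse,
    hstrict.localInverse_tendsto (hU.mem_nhds hx)] with y hy hright hmem
  exact ⟨hy.differentiableAt one_ne_zero, hright, hmem⟩

lemma exists_straightening {f : E → F} {U : Set E} (hU : IsOpen U) (hf : DifferentiableOn ℂ f U)
    {x v : E} (hx : x ∈ U) {l : F →L[ℂ] ℂ} (hl : l (fderiv ℂ f x v) = 1) :
    ∃ G : E → E, ∃ ε > 0, G 0 = x ∧ HasFDerivAt G (.id ℂ E) 0 ∧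
      DifferentiableOn ℂ G (ball 0 ε) ∧ InjOn G (ball 0 ε) ∧ MapsTo G (ball 0 ε) U ∧
      ∀ e ∈ ball 0 ε, l (f (G e) - f x) = l (fderiv ℂ f x e) := by
  let α : E →L[ℂ] ℂ := l.comp (fderiv ℂ f x)
  let Φ : E → E := fun y => (y - x) + (l (f y - f x) - α (y - x)) • v
  have hΦ : DifferentiableOn ℂ Φ U := by fun_prop
  have hΦx : Φ x = 0 := by simp [Φ]
  have hΦ' : HasFDerivAt Φ (ContinuousLinearEquiv.refl ℂ E : E →L[ℂ] E) x := by
    have hsub : HasFDerivAt (fun y : E => y - x) (.id ℂ E) x := (hasFDerivAt_id x).sub_const _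
    have hlf : HasFDerivAt (fun y => l (f y - f x)) α x := l.hasFDerivAt.comp x
      ((hf.differentiableAt (hU.mem_nhds hx)).hasFDerivAt.sub_const _)
    have hid : (ContinuousLinearEquiv.refl ℂ E : E →L[ℂ] E) =
        .id ℂ E + (α - α ∘L .id ℂ E).smulRight v := by
      ext y
      simp
    rw [hid]
    exact hsub.add ((hlf.sub (α.hasFDerivAt.comp x hsub)).smul_const v)
  have hlΦ : ∀ y, α (Φ y) = l (f y - f x) := fun y => by
    have hαv : α v = 1 := hl
    simp only [Φ, map_add, map_smul, hαv, smul_eq_mul]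
    ring
  obtain ⟨G, hG0, hG', hGev⟩ := exists_local_inverse hU hΦ hx _ hΦ'
  rw [hΦx] at hG0 hG' hGev
  obtain ⟨ε, hε, hball⟩ := Metric.eventually_nhds_iff_ball.1 hGev
  refine ⟨G, ε, hε, hG0, hG', fun e he => (hball e he).1.differentiableWithinAt,
    fun e he e' he' h => ?_, fun e he => (hball e he).2.2, fun e he => ?_⟩
  · rw [← (hball e he).2.1, h, (hball e' he').2.1]
  · rw [← hlΦ, (hball e he).2.1]
    rfl

lemma exists_restriction_to_kernels {f : E → F} {U : Set E} (hU : IsOpen U)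
    (hf : DifferentiableOn ℂ f U) (hinj : InjOn f U) {x v : E} (hx : x ∈ U) {l : F →L[ℂ] ℂ}
    (hl : l (fderiv ℂ f x v) = 1) :
    ∃ g : (l ∘L fderiv ℂ f x).ker → l.ker, ∃ ε > 0, DifferentiableOn ℂ g (ball 0 ε) ∧
      InjOn g (ball 0 ε) ∧ ∀ u, (fderiv ℂ g 0 u : F) = fderiv ℂ f x u := by
  obtain ⟨G, ε, hε, hG0, hG', hG, hGinj, hGU, hlG⟩ := exists_straightening hU hf hx hl
  let P : F →L[ℂ] l.ker :=
    (ContinuousLinearMap.id ℂ F - l.smulRight (fderiv ℂ f x v)).codRestrict l.ker fun y => by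
      simp [hl]
  have hP : ∀ y, l y = 0 → (P y : F) = y := fun y hy => by simp [P, hy]
  let g : (l ∘L fderiv ℂ f x).ker → l.ker := fun e => P (f (G e) - f x)
  have hball : ∀ e ∈ ball (0 : (l ∘L fderiv ℂ f x).ker) ε, (e : E) ∈ ball 0 ε := fun _ he =>
    mem_ball_zero_iff.2 (mem_ball_zero_iff.1 he)
  have hg : ∀ e ∈ ball 0 ε, (g e : F) = f (G e) - f x := fun e he =>
    hP _ ((hlG e (hball e he)).trans e.2)
  refine ⟨g, ε, hε, fun e he => ?_, fun e he e' he' h => ?_, fun u => ?_⟩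
  · have hGe : DifferentiableAt ℂ (fun e : (l ∘L fderiv ℂ f x).ker => G e) e :=
      (hG.differentiableAt (isOpen_ball.mem_nhds (hball e he))).comp e
        (Submodule.subtypeL _).differentiableAt
    exact (P.differentiableAt.comp e (((hf.differentiableAt
      (hU.mem_nhds (hGU (hball e he)))).comp e hGe).sub_const _)).differentiableWithinAt
  · have hfG : f (G e) = f (G e') := by
      rw [← sub_left_inj (a := f x), ← hg e he, ← hg e' he', h]
    exact Subtype.ext (hGinj (hball e he) (hball e' he')
      (hinj (hGU (hball e he)) (hGU (hball e' he')) hfG))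
  · have hGsub : HasFDerivAt (fun e : (l ∘L fderiv ℂ f x).ker => G e) (Submodule.subtypeL _) 0 :=
      HasFDerivAt.comp (f := fun e : (l ∘L fderiv ℂ f x).ker => (e : E)) 0 hG'
        (Submodule.subtypeL _).hasFDerivAt
    have hfG : HasFDerivAt f (fderiv ℂ f x) (G (0 : (l ∘L fderiv ℂ f x).ker)) := by
      rw [ZeroMemClass.coe_zero, hG0]
      exact (hf.differentiableAt (hU.mem_nhds hx)).hasFDerivAt
    have hg' : HasFDerivAt g (P ∘L fderiv ℂ f x ∘L Submodule.subtypeL _) 0 :=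
      P.hasFDerivAt.comp 0 ((HasFDerivAt.comp (f := fun e : (l ∘L fderiv ℂ f x).ker => G e) 0 hfG
        hGsub).sub_const (f x))
    rw [hg'.fderiv]
    exact hP _ u.2

variable [FiniteDimensional ℂ F]

lemma differentiableOn_det {G : Type*} [NormedAddCommGroup G] [NormedSpace ℂ G]
    {A : G → E →L[ℂ] E} {U : Set G} (hA : DifferentiableOn ℂ A U) :
    DifferentiableOn ℂ (fun y => (A y).det) U := by
  let b := Module.finBasis ℂ E
  have hdet : (fun y => (A y).det) = fun y => ∑ σ : Equiv.Perm (Fin (Module.finrank ℂ E)),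
      ((Equiv.Perm.sign σ : ℤ) : ℂ) * ∏ i, (b.coord (σ i)).toContinuousLinearMap (A y (b i)) := by
    funext y
    rw [ContinuousLinearMap.det, ← LinearMap.det_toMatrix b, Matrix.det_apply']
    simp [LinearMap.toMatrix_apply]
  rw [hdet]
  have hentry : ∀ i j, DifferentiableOn ℂ
      (fun y => (b.coord i).toContinuousLinearMap (A y (b j))) U := fun i j =>
    (ContinuousLinearMap.differentiable _).comp_differentiableOn
      (hA.clm_apply (differentiableOn_const _))
  exact DifferentiableOn.fun_sum fun σ _ y hy => (HasFDerivWithinAt.finsetProd fun i _ =>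
    (hentry (σ i) i y hy).hasFDerivWithinAt).differentiableWithinAt.const_mul _

lemma fderiv_ne_zero_of_injOn_of_finrank_eq_one (hE : Module.finrank ℂ E = 1)
    (hF : Module.finrank ℂ F = 1) {f : E → F} {U : Set E} (hU : IsOpen U)
    (hf : DifferentiableOn ℂ f U) (hinj : InjOn f U) {x : E} (hx : x ∈ U) : fderiv ℂ f x ≠ 0 := by
  let S : ℂ ≃L[ℂ] E := .ofFinrankEq (by rw [hE, Module.finrank_self])
  let T : F ≃L[ℂ] ℂ := .ofFinrankEq (by rw [hF, Module.finrank_self])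
  have hS : ∀ t, S t ∈ U → HasDerivAt (T ∘ f ∘ S) (T (fderiv ℂ f (S t) (S 1))) t := fun t ht =>
    (T.hasFDerivAt.comp (S t) (hf.differentiableAt (hU.mem_nhds ht)).hasFDerivAt).comp_hasDerivAt t
      S.hasFDerivAt.hasDerivAt
  have hx' : S (S.symm x) ∈ U := by rwa [S.apply_symm_apply]
  have hderiv := deriv_ne_zero_of_injOn (hU.preimage S.continuous)
    (fun t ht => (hS t ht).differentiableAt.differentiableWithinAt)
    (T.injective.comp_injOn (hinj.comp S.injective.injOn fun _ => id)) hx'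
  rw [(hS _ hx').deriv, S.apply_symm_apply] at hderiv
  rintro hzero
  simp [hzero] at hderiv

lemma fderiv_ne_zero_of_injOn_of_one_lt_finrank (hE : 1 < Module.finrank ℂ E)
    (hEF : Module.finrank ℂ F = Module.finrank ℂ E) {f : E → F} {U : Set E} (hU : IsOpen U)
    (hf : DifferentiableOn ℂ f U) (hinj : InjOn f U)
    (hregular : ∀ y ∈ U, fderiv ℂ f y ≠ 0 → Function.Injective (fderiv ℂ f y)) {x : E}
    (hx : x ∈ U) : fderiv ℂ f x ≠ 0 := fun hzero => by
  have : Nontrivial E := Module.nontrivial_of_finrank_pos (R := ℂ) (by omega)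
  let T : F ≃L[ℂ] E := .ofFinrankEq hEF
  let J : E → ℂ := fun y => ((T : F →L[ℂ] E) ∘L fderiv ℂ f y).det
  have hJ : DifferentiableOn ℂ J U :=
    differentiableOn_det ((differentiableOn_const _).clm_comp (differentiableOn_fderiv hU hf))
  refine ne_zero_of_fderiv_eq_zero_of_injOn hE hU hf hinj hJ (fun y hy hJy => ?_) hx ?_
  · by_contra hne
    refine (LinearMap.bot_lt_ker_of_det_eq_zero hJy).ne' (LinearMap.ker_eq_bot.2 ?_)
    exact T.injective.comp (hregular y hy hne)
  · simp [J, hzero, ContinuousLinearMap.det]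

theorem fderiv_injective_of_injOn {f : E → F} {U : Set E}
    (hEF : Module.finrank ℂ E = Module.finrank ℂ F) (hU : IsOpen U)
    (hf : DifferentiableOn ℂ f U) (hinj : InjOn f U) {x : E} (hx : x ∈ U) :
    Function.Injective (fderiv ℂ f x) := by
  obtain ⟨n, hn⟩ : ∃ n, Module.finrank ℂ E = n := ⟨_, rfl⟩
  induction n generalizing E F with
  | zero =>
    have := Module.finrank_zero_iff.1 hn
    exact Function.injective_of_subsingleton _
  | succ n ih =>
    have hregular : ∀ y ∈ U, fderiv ℂ f y ≠ 0 → Function.Injective (fderiv ℂ f y) := by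
      intro y hy hne
      obtain ⟨v, hv⟩ : ∃ v, fderiv ℂ f y v ≠ 0 := by
        by_contra! h
        exact hne (ContinuousLinearMap.ext h)
      obtain ⟨l, hl⟩ := SeparatingDual.exists_eq_one (R := ℂ) hv
      obtain ⟨g, ε, hε, hg, hginj, hg'⟩ := exists_restriction_to_kernels hU hf hinj hy hl
      have hlA : (l ∘L fderiv ℂ f y : E →ₗ[ℂ] ℂ) ≠ 0 := fun h => by
        simpa [hl] using LinearMap.congr_fun h v
      have hl0 : (l : F →ₗ[ℂ] ℂ) ≠ 0 := fun h => by
        simpa [hl] using LinearMap.congr_fun h (fderiv ℂ f y v)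
      have hkerE := Module.Dual.finrank_ker_add_one_of_ne_zero hlA
      have hkerF := Module.Dual.finrank_ker_add_one_of_ne_zero hl0
      have hg0 := ih (by omega) isOpen_ball hg hginj (mem_ball_self hε) (by omega)
      refine (injective_iff_map_eq_zero _).2 fun u hu => ?_
      have hker : u ∈ (l ∘L fderiv ℂ f y).ker := by simp [hu]
      have := hg0 (a₁ := ⟨u, hker⟩) (a₂ := 0) (Subtype.ext (by rw [hg', map_zero]; exact hu))
      exact congrArg Subtype.val this
    refine hregular x hx ?_
    rcases n.eq_zero_or_pos with rfl | hpos
    · exact fderiv_ne_zero_of_injOn_of_finrank_eq_one hn (hEF.symm.trans hn) hU hf hinj hx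
    · exact fderiv_ne_zero_of_injOn_of_one_lt_finrank (by omega) hEF.symm hU hf hinj hregular hx

theorem differentiableOn_invFunOn_of_injOn [Nonempty E] {f : E → F} {U : Set E}
    (hEF : Module.finrank ℂ E = Module.finrank ℂ F) (hU : IsOpen U)
    (hf : DifferentiableOn ℂ f U) (hinj : InjOn f U) :
    DifferentiableOn ℂ (Function.invFunOn f U) (f '' U) := by
  rintro _ ⟨x, hx, rfl⟩
  let L : E ≃L[ℂ] F := (LinearEquiv.ofInjectiveOfFinrankEq (fderiv ℂ f x : E →ₗ[ℂ] F)
    (fderiv_injective_of_injOn hEF hU hf hinj hx) hEF).toContinuousLinearEquiv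
  have hL : HasFDerivAt f (L : E →L[ℂ] F) x :=
    (hf.differentiableAt (hU.mem_nhds hx)).hasFDerivAt
  obtain ⟨G, -, hG', hG⟩ := exists_local_inverse hU hf hx L hL
  refine (hG'.differentiableAt.congr_of_eventuallyEq ?_).differentiableWithinAt
  filter_upwards [hG] with y hy
  rw [← hy.2.1, hinj.leftInvOn_invFunOn hy.2.2, hy.2.1]

end Osgood

section MaximumPrinciple

open InnerProductSpace

variable {E : Type*} [NormedAddCommGroup E]

lemma exists_isMaxOn_sub_mul_norm_sq [ProperSpace E] {X : Type*} [TopologicalSpace X]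
    {F : E × X → ℝ} {K B : Set X} (hK : IsCompact K) (hB : IsCompact B) (hBK : B ⊆ K) {τ : ℝ}
    (hτ : 0 < τ) (hF : UpperSemicontinuousOn F (closedBall 0 τ ×ˢ K)) {v : ℝ}
    (hFB : ∀ y ∈ B, F (0, y) < v) {y₁ : X} (hy₁ : y₁ ∈ K) (hv : v ≤ F (0, y₁)) :
    ∃ M ≥ 0, ∃ w₀ ∈ ball (0 : E) τ, ∃ y₀ ∈ K \ B,
      IsMaxOn (fun z : E × X => F z - M * ‖z.1‖ ^ 2) (closedBall 0 τ ×ˢ K) (w₀, y₀) := by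
  have hS : IsCompact (closedBall (0 : E) τ ×ˢ K) := (isCompact_closedBall 0 τ).prod hK
  obtain ⟨S, hFS⟩ := hF.bddAbove_of_isCompact hS
  have hnear : ∀ᶠ w in 𝓝 (0 : E), ∀ y ∈ B, (w, y) ∈ closedBall (0 : E) τ ×ˢ K → F (w, y) < v :=
    hB.eventually_forall_of_forall_eventually fun y hy => eventually_nhdsWithin_iff.1
      (hF (0, y) ⟨mem_closedBall_self hτ.le, hBK hy⟩ v (hFB y hy))
  obtain ⟨τ', hτ', hτ'B⟩ := Metric.eventually_nhds_iff_ball.1 hnear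
  obtain ⟨M, hM, hMS⟩ : ∃ M ≥ 0, S - M * min τ τ' ^ 2 < v := by
    refine ⟨(|S - v| + 1) / min τ τ' ^ 2, by positivity, ?_⟩
    rw [div_mul_cancel₀ _ (by positivity)]
    linarith [le_abs_self (S - v)]
  obtain ⟨⟨w₀, y₀⟩, ⟨hw₀, hy₀⟩, hmax⟩ := UpperSemicontinuousOn.exists_isMaxOn
    (f := fun z : E × X => F z - M * ‖z.1‖ ^ 2) (s := closedBall 0 τ ×ˢ K)
    ⟨(0, y₁), mem_closedBall_self hτ.le, hy₁⟩ hS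
    (hF.add (ContinuousOn.upperSemicontinuousOn (by fun_prop)))
  have hvmax : v ≤ F (w₀, y₀) - M * ‖w₀‖ ^ 2 :=
    hv.trans (by simpa using hmax (show (0, y₁) ∈ closedBall (0 : E) τ ×ˢ K from
      ⟨mem_closedBall_self hτ.le, hy₁⟩))
  have hw₀lt : ‖w₀‖ < min τ τ' := by
    by_contra! hle
    have hF₀ : F (w₀, y₀) ≤ S := hFS (mem_image_of_mem F ⟨hw₀, hy₀⟩)
    have : M * min τ τ' ^ 2 ≤ M * ‖w₀‖ ^ 2 := by gcongr
    linarith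
  refine ⟨M, hM, w₀, by simpa using hw₀lt.trans_le (min_le_left _ _), y₀,
    ⟨hy₀, fun hy₀B => ?_⟩, hmax⟩
  have := hτ'B w₀ (by simpa using hw₀lt.trans_le (min_le_right _ _)) y₀ hy₀B ⟨hw₀, hy₀⟩
  nlinarith [mul_nonneg hM (sq_nonneg ‖w₀‖)]

section NormedSpace

variable [NormedSpace ℂ E]

/-- Real-valued plurisubharmonic functions on a subset of a complex normed space. As in `PSHOn`,
the sub-mean value inequality is stated through continuous majorants on the boundary circle; the
radius of the disc is absorbed in its direction `b`. -/
def RealPSHOn (ψ : E → ℝ) (D : Set E) : Prop :=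
  UpperSemicontinuousOn ψ D ∧
  ∀ a ∈ D, ∀ b : E, (∀ t ∈ closedBall (0 : ℂ) 1, a + t • b ∈ D) →
    ∀ G : ℂ → ℝ, ContinuousOn G (sphere 0 1) →
      (∀ t ∈ sphere (0 : ℂ) 1, ψ (a + t • b) ≤ G t) → ψ a ≤ Real.circleAverage G 0 1

variable {ψ : E → ℝ} {D : Set E}

lemma RealPSHOn.le_of_harmonic_majorant (hψ : RealPSHOn ψ D) {x b : E} {ζ₀ : ℂ} {r : ℝ}
    (hr : 0 < r) {G : ℂ → ℝ} (hG : HarmonicOnNhd G (closedBall ζ₀ r))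
    (hD : ∀ ζ ∈ closedBall ζ₀ r, x + (ζ - ζ₀) • b ∈ D)
    (hle : ∀ ζ ∈ sphere ζ₀ r, ψ (x + (ζ - ζ₀) • b) ≤ G ζ) : ψ x ≤ G ζ₀ := by
  have hball {t : ℂ} (ht : t ∈ closedBall 0 1) : ζ₀ + r * t ∈ closedBall ζ₀ r := by
    simpa [dist_eq_norm, abs_of_pos hr] using mul_le_of_le_one_right hr.le
      (mem_closedBall_zero_iff.1 ht)
  have hsphere {t : ℂ} (ht : t ∈ sphere 0 1) : ζ₀ + r * t ∈ sphere ζ₀ r := by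
    simp [abs_of_pos hr, mem_sphere_zero_iff_norm.1 ht]
  have hline (t : ℂ) : x + t • ((r : ℂ) • b) = x + (ζ₀ + r * t - ζ₀) • b := by
    rw [add_sub_cancel_left, smul_smul, mul_comm]
  calc ψ x ≤ Real.circleAverage (fun t => G (ζ₀ + r * t)) 0 1 := by
        refine hψ.2 x (by simpa using hD ζ₀ (mem_closedBall_self hr.le)) ((r : ℂ) • b)
          (fun t ht => hline t ▸ hD _ (hball ht)) _ ?_ fun t ht => hline t ▸ hle _ (hsphere ht)
        exact ContinuousOn.comp (fun ζ hζ => (hG ζ hζ).1.continuousAt.continuousWithinAt)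
          (by fun_prop) fun t ht => hball (sphere_subset_closedBall ht)
    _ = Real.circleAverage G ζ₀ r := by
        simp [Real.circleAverage, circleMap]
    _ = G ζ₀ := InnerProductSpace.HarmonicOnNhd.circleAverage_eq (by rwa [abs_of_pos hr])

end NormedSpace

variable [InnerProductSpace ℂ E] {ψ : E → ℝ} {D : Set E}

lemma harmonicAt_re_inner (w : E) {g : ℂ → E} {z : ℂ} (hg : AnalyticAt ℂ g z) :
    HarmonicAt (fun ζ => (inner ℂ w (g ζ)).re) z :=
  ((innerSL ℂ w).analyticAt (g z) |>.comp hg).harmonicAt_re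

lemma norm_sq_eq_add_re_inner (v w : E) :
    ‖w‖ ^ 2 = ‖v‖ ^ 2 + 2 * (inner ℂ v (w - v)).re + ‖w - v‖ ^ 2 := by
  simpa only [add_sub_cancel, RCLike.re_eq_complex_re] using norm_add_sq (𝕜 := ℂ) v (w - v)

-- The sub-mean value inequality applied to the harmonic part `G` of the upper bound for `ψ` that
-- `hle` provides on the circle.
lemma RealPSHOn.le_mul_sq_of_forall_sphere (hψ : RealPSHOn ψ D) {x b w : E} {ζ₀ : ℂ} {r : ℝ}
    (hr : 0 < r) (hD : ∀ ζ ∈ closedBall ζ₀ r, x + (ζ - ζ₀) • b ∈ D) {q : ℂ → ℝ}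
    (hq : HarmonicOnNhd q (closedBall ζ₀ r)) {e : ℂ → E} (he₀ : e ζ₀ = 0)
    (he : HarmonicOnNhd (fun ζ => (inner ℂ w (e ζ)).re) (closedBall ζ₀ r)) {η M ε : ℝ}
    (hM : 0 ≤ M) (heε : ∀ ζ ∈ sphere ζ₀ r, ‖e ζ‖ ≤ ε * r)
    (hle : ∀ ζ ∈ sphere ζ₀ r, ψ (x + (ζ - ζ₀) • b) + q ζ + η * ‖ζ‖ ^ 2 - M * ‖w - e ζ‖ ^ 2 ≤
      ψ x + q ζ₀ + η * ‖ζ₀‖ ^ 2 - M * ‖w‖ ^ 2) : η ≤ M * ε ^ 2 := by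
  set F₀ := ψ x + q ζ₀ + η * ‖ζ₀‖ ^ 2 - M * ‖w‖ ^ 2 with hF₀
  let G : ℂ → ℝ := fun ζ => F₀ - q ζ
    - η * (‖ζ₀‖ ^ 2 + 2 * (inner ℂ ζ₀ (ζ - ζ₀)).re + r ^ 2)
    + M * (‖w‖ ^ 2 - 2 * (inner ℂ w (e ζ)).re + (ε * r) ^ 2)
  have hG : HarmonicOnNhd G (closedBall ζ₀ r) := by
    intro ζ hζ
    have hζ₀ := harmonicAt_re_inner ζ₀ (g := fun ζ => ζ - ζ₀) (z := ζ) (by fun_prop)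
    have hc (c : ℝ) : HarmonicAt (fun _ => c) ζ := harmonicAt_const c
    exact (((hc _).sub (hq ζ hζ)).sub ((((hc _).add (hζ₀.const_smul (c := 2))).add
      (hc _)).const_smul (c := η))).add ((((hc _).sub ((he ζ hζ).const_smul (c := 2))).add
      (hc _)).const_smul (c := M))
  have hψG : ∀ ζ ∈ sphere ζ₀ r, ψ (x + (ζ - ζ₀) • b) ≤ G ζ := by
    intro ζ hζ
    have hζsq := norm_sq_eq_add_re_inner ζ₀ ζ
    have hwsq := norm_sub_sq (𝕜 := ℂ) w (e ζ)
    have hesq : M * ‖e ζ‖ ^ 2 ≤ M * (ε * r) ^ 2 := by gcongr; exact heε ζ hζ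
    rw [mem_sphere_iff_norm.1 hζ] at hζsq
    have hζle := hle ζ hζ
    simp only [RCLike.re_eq_complex_re] at hwsq
    rw [hζsq, hwsq] at hζle
    simp only [G]
    linarith
  have hcenter := hψ.le_of_harmonic_majorant hr hG hD hψG
  simp only [G, he₀, hF₀, sub_self, inner_zero_right, Complex.zero_re] at hcenter
  refine le_of_mul_le_mul_right ?_ (pow_pos hr 2)
  linarith

/-- The function of the maximum principle along a disc `h`: a translation parameter `w`, penalized
by `M ‖w‖²`, compensates for `h` not being affine, and `η ‖ζ‖²` makes the inequality strict. -/
def penalized (ψ : E → ℝ) (h : ℂ → E) (q : ℂ → ℝ) (η M : ℝ) (z : E × ℂ) : ℝ :=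
  ψ (h z.2 + z.1) + q z.2 + η * ‖z.2‖ ^ 2 - M * ‖z.1‖ ^ 2

-- Translating `h ζ` by `-e ζ`, where `e` is its Taylor remainder, gives an affine disc. This costs
-- `M ε² r²`, less than the gain `η r²`.
lemma RealPSHOn.not_isLocalMax_penalized (hψ : RealPSHOn ψ D) (hD : IsOpen D) {h : ℂ → E}
    {q : ℂ → ℝ} {w₀ : E} {ζ₀ : ℂ} (hh : AnalyticAt ℂ h ζ₀) (hq : HarmonicAt q ζ₀)
    (hx : h ζ₀ + w₀ ∈ D) {η M : ℝ} (hη : 0 < η) (hM : 0 ≤ M) :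
    ¬ IsLocalMax (penalized ψ h q η M) (w₀, ζ₀) := by
  intro hmax
  set b := deriv h ζ₀
  let e : ℂ → E := fun ζ => h ζ - h ζ₀ - (ζ - ζ₀) • b
  have he : AnalyticAt ℂ e ζ₀ := by fun_prop
  have he₀ : e ζ₀ = 0 := by simp [e]
  have hline (ζ : ℂ) : h ζ₀ + w₀ + (ζ - ζ₀) • b = h ζ + (w₀ - e ζ) := by simp only [e]; abel
  obtain ⟨ε, hMε, hε⟩ : ∃ ε, M * ε ^ 2 < η ∧ 0 < ε := by
    have : ∀ᶠ ε in 𝓝 (0 : ℝ), M * ε ^ 2 < η :=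
      ContinuousAt.eventually_lt (by fun_prop) continuousAt_const (by simpa using hη)
    exact ((this.filter_mono nhdsWithin_le_nhds).and (self_mem_nhdsWithin (s := Ioi 0))).exists
  have hmax' : ∀ᶠ ζ in 𝓝 ζ₀, penalized ψ h q η M (w₀ - e ζ, ζ) ≤ penalized ψ h q η M (w₀, ζ₀) := by
    have : Tendsto (fun ζ => (w₀ - e ζ, ζ)) (𝓝 ζ₀) (𝓝 (w₀, ζ₀)) := by
      simpa [ContinuousAt, he₀] using
        (continuousAt_const (y := w₀)).sub he.continuousAt |>.prodMk continuousAt_id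
    exact this.eventually hmax
  have hinD : ∀ᶠ ζ in 𝓝 ζ₀, h ζ₀ + w₀ + (ζ - ζ₀) • b ∈ D :=
    ContinuousAt.preimage_mem_nhds (by fun_prop) (hD.mem_nhds (by simpa using hx))
  have hsmall : ∀ᶠ ζ in 𝓝 ζ₀, ‖e ζ‖ ≤ ε * ‖ζ - ζ₀‖ :=
    (hasDerivAt_iff_isLittleO.1 hh.differentiableAt.hasDerivAt).def hε
  obtain ⟨r, hr, hr'⟩ := (Metric.nhds_basis_closedBall.eventually_iff).1
    ((hmax'.and hinD).and (hsmall.and (hq.eventually.and (harmonicAt_re_inner w₀ he).eventually)))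
  refine hMε.not_ge (hψ.le_mul_sq_of_forall_sphere hr (fun ζ hζ => (hr' hζ).1.2)
    (fun ζ hζ => (hr' hζ).2.2.1) he₀ (fun ζ hζ => (hr' hζ).2.2.2) hM (fun ζ hζ => ?_)
    fun ζ hζ => ?_)
  · exact mem_sphere_iff_norm.1 hζ ▸ (hr' (sphere_subset_closedBall hζ)).2.1
  · simpa only [penalized, hline] using (hr' (sphere_subset_closedBall hζ)).1.1

theorem RealPSHOn.comp_add_harmonic_le_zero [ProperSpace E] (hψ : RealPSHOn ψ D) (hD : IsOpen D)
    {W : Set ℂ} (hWb : Bornology.IsBounded W) (hW : IsOpen W) {h : ℂ → E} (hh : DiffContOnCl ℂ h W)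
    (hmaps : MapsTo h (closure W) D) {q : ℂ → ℝ} (hqc : ContinuousOn q (closure W))
    (hq : HarmonicOnNhd q W) (hbd : ∀ ζ ∈ frontier W, ψ (h ζ) + q ζ ≤ 0) {ζ : ℂ} (hζ : ζ ∈ W) :
    ψ (h ζ) + q ζ ≤ 0 := by
  by_contra! hpos
  have hK : IsCompact (closure W) := hWb.isCompact_closure
  obtain ⟨τ, hτ, hthick⟩ :=
    (hK.image_of_continuousOn hh.continuousOn).exists_cthickening_subset_open hD hmaps.image_subset
  have hmapsτ : MapsTo (fun z : E × ℂ => h z.2 + z.1) (closedBall 0 τ ×ˢ closure W) D :=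
    fun z hz => hthick (mem_cthickening_of_dist_le _ (h z.2) _ _ (mem_image_of_mem h hz.2)
      (by simpa using hz.1))
  obtain ⟨ρ, hρ⟩ := hK.isBounded.exists_norm_le
  obtain ⟨η, hη, hηρ⟩ : ∃ η > 0, η * ρ ^ 2 < ψ (h ζ) + q ζ := by
    refine ⟨(ψ (h ζ) + q ζ) / (ρ ^ 2 + 1), by positivity, ?_⟩
    rw [div_mul_eq_mul_div, div_lt_iff₀ (by positivity)]
    nlinarith
  have hsnd : MapsTo Prod.snd (closedBall (0 : E) τ ×ˢ closure W) (closure W) := fun z hz => hz.2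
  have hF : UpperSemicontinuousOn (fun z : E × ℂ => ψ (h z.2 + z.1) + q z.2 + η * ‖z.2‖ ^ 2)
      (closedBall 0 τ ×ˢ closure W) := by
    refine ((hψ.1.comp (f := ψ) (g := fun z : E × ℂ => h z.2 + z.1)
      ((hh.continuousOn.comp continuousOn_snd hsnd).add continuousOn_fst) hmapsτ).add
      (hqc.comp continuousOn_snd hsnd).upperSemicontinuousOn).add
      (ContinuousOn.upperSemicontinuousOn (by fun_prop))
  have hFfrontier : ∀ y ∈ frontier W, ψ (h y + 0) + q y + η * ‖y‖ ^ 2 < ψ (h ζ) + q ζ := by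
    intro y hy
    have : η * ‖y‖ ^ 2 ≤ η * ρ ^ 2 := by gcongr; exact hρ y (frontier_subset_closure hy)
    rw [add_zero]
    linarith [hbd y hy]
  obtain ⟨M, hM, w₀, hw₀, ζ₀, hζ₀, hmax⟩ := exists_isMaxOn_sub_mul_norm_sq hK
    (hK.of_isClosed_subset isClosed_frontier frontier_subset_closure) frontier_subset_closure hτ hF
    hFfrontier (subset_closure hζ) (by rw [add_zero]; linarith [mul_nonneg hη.le (sq_nonneg ‖ζ‖)])
  rw [closure_sdiff_frontier, hW.interior_eq] at hζ₀
  have hnhds : closedBall (0 : E) τ ×ˢ closure W ∈ 𝓝 (w₀, ζ₀) :=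
    prod_mem_nhds (closedBall_mem_nhds_of_mem hw₀)
      (mem_of_superset (hW.mem_nhds hζ₀) subset_closure)
  exact hψ.not_isLocalMax_penalized hD (hh.differentiableOn.analyticAt (hW.mem_nhds hζ₀))
    (hq ζ₀ hζ₀) (hmapsτ (mem_of_mem_nhds hnhds)) hη hM (hmax.isLocalMax hnhds)

end MaximumPrinciple

section Truncation

/-- The truncation `max φ t` as a real-valued function; it has the junk value `0` where
`φ x = ⊤`. -/
def truncateBelow {X : Type*} (φ : X → EReal) (t : ℝ) (x : X) : ℝ :=
  (max (φ x) t).toReal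

lemma coe_truncateBelow {X : Type*} {φ : X → EReal} {x : X} (hx : φ x ≠ ⊤) (t : ℝ) :
    (truncateBelow φ t x : EReal) = max (φ x) t :=
  EReal.coe_toReal (max_lt (lt_top_iff_ne_top.2 hx) (EReal.coe_lt_top t)).ne
    ((EReal.bot_lt_coe t).trans_le (le_max_right _ _)).ne'

lemma truncateBelow_le_iff {X : Type*} {φ : X → EReal} {x : X} (hx : φ x ≠ ⊤) {t y : ℝ} :
    truncateBelow φ t x ≤ y ↔ φ x ≤ y ∧ t ≤ y := by
  rw [← EReal.coe_le_coe_iff, coe_truncateBelow hx, max_le_iff, EReal.coe_le_coe_iff]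

lemma truncateBelow_lt_iff {X : Type*} {φ : X → EReal} {x : X} (hx : φ x ≠ ⊤) {t y : ℝ} :
    truncateBelow φ t x < y ↔ φ x < y ∧ t < y := by
  rw [← EReal.coe_lt_coe_iff, coe_truncateBelow hx, max_lt_iff, EReal.coe_lt_coe_iff]

lemma PSHOn.realPSHOn_truncateBelow {n : ℕ} {φ : Cn n → EReal} {D : Set (Cn n)} (hφ : PSHOn φ D)
    (htop : ∀ x ∈ D, φ x ≠ ⊤) (t : ℝ) : RealPSHOn (truncateBelow φ t) D := by
  refine ⟨fun x hx y hy => ?_, fun a ha b hab G hG hle => ?_⟩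
  · have hy' := (truncateBelow_lt_iff (htop x hx)).1 hy
    filter_upwards [hφ.1 x hx y hy'.1, self_mem_nhdsWithin] with x' hx' hx'D using
      (truncateBelow_lt_iff (htop x' hx'D)).2 ⟨hx', hy'.2⟩
  · have hcircle (θ : ℝ) : circleMap 0 1 θ ∈ sphere (0 : ℂ) 1 :=
      circleMap_mem_sphere 0 zero_le_one θ
    have hleG (z : ℂ) (hz : z ∈ sphere 0 1) : φ (a + z • b) ≤ G z ∧ t ≤ G z :=
      (truncateBelow_le_iff (htop _ (hab z (sphere_subset_closedBall hz)))).1 (hle z hz)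
    refine (truncateBelow_le_iff (htop a ha)).2 ⟨?_, ?_⟩
    · convert hφ.2 a ha b 1 one_pos (fun z hz => hab z (by simpa using hz))
        (fun θ => G (circleMap 0 1 θ)) (hG.comp_continuous (continuous_circleMap 0 1) hcircle)
        (fun θ => by simpa [circleMap] using (hleG _ (hcircle θ)).1) using 2
      rw [Real.circleAverage, smul_eq_mul, one_div]
    · calc t = Real.circleAverage (fun _ => t) 0 1 := (Real.circleAverage_const t 0 1).symm
        _ ≤ Real.circleAverage G 0 1 := Real.circleAverage_mono (circleIntegrable_const t 0 1)
          (hG.circleIntegrable zero_le_one) fun z hz => (hleG z (by simpa using hz)).2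

end Truncation

section SquareRootSums

/-- The odd extension `sign x * √|x|` of the square root, written with the convention `√x = 0` for
`x ≤ 0`. Its increments telescope in sums of `1 / √|x + k|`. -/
def signedSqrt (x : ℝ) : ℝ := √x - √(-x)

lemma sqrt_add_le_add_sqrt (a : ℝ) {b : ℝ} (hb : 0 ≤ b) : √(a + b) ≤ √a + √b := by
  rcases le_total 0 a with ha | ha
  · rw [Real.sqrt_le_left (by positivity), add_sq, Real.sq_sqrt ha, Real.sq_sqrt hb]
    linarith [mul_nonneg (Real.sqrt_nonneg a) (Real.sqrt_nonneg b)]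
  · exact (Real.sqrt_le_sqrt (by linarith)).trans (le_add_of_nonneg_left (Real.sqrt_nonneg a))

lemma signedSqrt_add_sub_le (x : ℝ) {y : ℝ} (hy : 0 ≤ y) :
    signedSqrt (x + y) - signedSqrt x ≤ 2 * √y := by
  have hpos := sqrt_add_le_add_sqrt x hy
  have hneg := sqrt_add_le_add_sqrt (-(x + y)) hy
  rw [show -(x + y) + y = -x by ring] at hneg
  unfold signedSqrt
  linarith

lemma signedSqrt_of_nonneg {x : ℝ} (hx : 0 ≤ x) : signedSqrt x = √x := by
  rw [signedSqrt, Real.sqrt_eq_zero_of_nonpos (neg_nonpos.2 hx), sub_zero]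

lemma signedSqrt_neg (x : ℝ) : signedSqrt (-x) = -signedSqrt x := by
  simp [signedSqrt]

lemma one_div_sqrt_max_le_of_nonneg {x : ℝ} (hx : 0 ≤ x) :
    1 / √(max 1 x) ≤ 3 * (signedSqrt (x + 1) - signedSqrt x) := by
  rw [signedSqrt_of_nonneg hx, signedSqrt_of_nonneg (by linarith)]
  have hmax : 0 < √(max 1 x) := by positivity
  have hx1 : √(x + 1) ≤ 2 * √(max 1 x) := by
    rw [Real.sqrt_le_left (by positivity), mul_pow, Real.sq_sqrt (by positivity)]
    linarith [le_max_left 1 x, le_max_right 1 x]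
  have hxm : √x ≤ √(max 1 x) := Real.sqrt_le_sqrt (le_max_right 1 x)
  have hmono : √x ≤ √(x + 1) := Real.sqrt_le_sqrt (by linarith)
  rw [div_le_iff₀ hmax]
  calc 1 = (√(x + 1) - √x) * (√(x + 1) + √x) := by
        linarith [Real.mul_self_sqrt hx, Real.mul_self_sqrt (by linarith : 0 ≤ x + 1)]
    _ ≤ (√(x + 1) - √x) * (3 * √(max 1 x)) := by gcongr; linarith
    _ = 3 * (√(x + 1) - √x) * √(max 1 x) := by ring

lemma one_div_sqrt_max_abs_le (x : ℝ) :
    1 / √(max 1 |x|) ≤ 3 * (signedSqrt (x + 1) - signedSqrt x) := by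
  rcases le_total 0 x with hx | hx
  · exact (abs_of_nonneg hx).symm ▸ one_div_sqrt_max_le_of_nonneg hx
  rw [abs_of_nonpos hx]
  rcases le_total x (-1) with hx1 | hx1
  · have hodd := one_div_sqrt_max_le_of_nonneg (x := -(x + 1)) (by linarith)
    rw [show -(x + 1) + 1 = -x by ring, signedSqrt_neg, signedSqrt_neg] at hodd
    calc 1 / √(max 1 (-x)) ≤ 1 / √(max 1 (-(x + 1))) := by gcongr; linarith
      _ ≤ 3 * (signedSqrt (x + 1) - signedSqrt x) := by linarith
  · have hsub := sqrt_add_le_add_sqrt (x + 1) (neg_nonneg.2 hx)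
    rw [add_neg_cancel_comm, Real.sqrt_one] at hsub
    have hneg : signedSqrt x = -√(-x) := by
      rw [← signedSqrt_of_nonneg (neg_nonneg.2 hx), signedSqrt_neg, neg_neg]
    rw [max_eq_left (by linarith), Real.sqrt_one, div_one, hneg,
      signedSqrt_of_nonneg (by linarith)]
    linarith

lemma sum_one_div_sqrt_max_abs_le (x : ℝ) (N : ℕ) :
    ∑ k ∈ Finset.range N, 1 / √(max 1 |x + k|) ≤ 6 * √N :=
  calc ∑ k ∈ Finset.range N, 1 / √(max 1 |x + k|)
      ≤ ∑ k ∈ Finset.range N, 3 * (signedSqrt (x + (k + 1 : ℕ)) - signedSqrt (x + k)) := by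
        gcongr with k
        simpa only [Nat.cast_add, Nat.cast_one, ← add_assoc] using one_div_sqrt_max_abs_le (x + k)
    _ = 3 * (signedSqrt (x + N) - signedSqrt x) := by
        rw [← Finset.mul_sum, Finset.sum_range_sub (fun k : ℕ => signedSqrt (x + k)),
          Nat.cast_zero, add_zero]
    _ ≤ 6 * √N := by linarith [signedSqrt_add_sub_le x N.cast_nonneg]

lemma log_one_add_le_two_mul_sqrt {x : ℝ} (hx : 0 ≤ x) : Real.log (1 + x) ≤ 2 * √x :=
  calc Real.log (1 + x) = 2 * Real.log √(1 + x) := by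
        rw [Real.log_sqrt (by linarith), mul_div_cancel₀ _ two_ne_zero]
    _ ≤ 2 * (√(1 + x) - 1) := by
        gcongr; exact Real.log_le_sub_one_of_pos (Real.sqrt_pos.2 (by linarith))
    _ ≤ 2 * √x := by
        have := sqrt_add_le_add_sqrt x zero_le_one
        rw [Real.sqrt_one, add_comm x 1] at this
        linarith

end SquareRootSums

section GreenPotential

open InnerProductSpace

lemma norm_canonicalFactor_one_le {s ζ : ℂ} (hs : ‖s‖ ≤ 1) (hζ : ζ ≠ s) :
    ‖Complex.canonicalFactor 1 s ζ‖ ≤ 1 + 2 * (1 - ‖s‖) / ‖ζ - s‖ := by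
  have hpos : 0 < ‖ζ - s‖ := norm_pos_iff.2 (sub_ne_zero.2 hζ)
  have hnum : ‖1 - starRingEnd ℂ s * ζ‖ ≤ ‖ζ - s‖ + 2 * (1 - ‖s‖) :=
    calc ‖1 - starRingEnd ℂ s * ζ‖ = ‖((1 - ‖s‖ ^ 2 : ℝ) : ℂ) - starRingEnd ℂ s * (ζ - s)‖ := by
          rw [mul_sub, Complex.conj_mul']; push_cast; ring_nf
      _ ≤ (1 - ‖s‖ ^ 2) + ‖s‖ * ‖ζ - s‖ := by
          refine (norm_sub_le _ _).trans_eq ?_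
          rw [Complex.norm_of_nonneg (by nlinarith [norm_nonneg s]), norm_mul, RCLike.norm_conj]
      _ ≤ ‖ζ - s‖ + 2 * (1 - ‖s‖) := by nlinarith [norm_nonneg s]
  rw [Complex.canonicalFactor_apply, Complex.ofReal_one, one_pow, one_mul, norm_div,
    div_le_iff₀ hpos, add_mul, one_mul, div_mul_cancel₀ _ hpos.ne']
  exact hnum

lemma log_norm_canonicalFactor_one_le {s ζ : ℂ} (hs : ‖s‖ < 1) (hζ : ‖ζ‖ ≤ 1) (hne : ζ ≠ s) :
    Real.log ‖Complex.canonicalFactor 1 s ζ‖ ≤ 2 * √(2 * (1 - ‖s‖) / ‖ζ - s‖) := by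
  have hpos : 0 < ‖Complex.canonicalFactor 1 s ζ‖ := norm_pos_iff.2
    (Complex.canonicalFactor_ne_zero (by simpa using hs) (by simpa using hζ) hne)
  exact (Real.log_le_log hpos (norm_canonicalFactor_one_le hs.le hne)).trans
    (log_one_add_le_two_mul_sqrt (div_nonneg (by linarith) (norm_nonneg _)))

lemma one_sub_norm_le_log_norm_canonicalFactor_zero {s : ℂ} (hs : s ≠ 0) :
    1 - ‖s‖ ≤ Real.log ‖Complex.canonicalFactor 1 s 0‖ := by
  have hnorm : ‖Complex.canonicalFactor 1 s 0‖ = ‖s‖⁻¹ := by simp [Complex.canonicalFactor_apply]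
  rw [hnorm, Real.log_inv]
  linarith [Real.log_le_sub_one_of_pos (norm_pos_iff.2 hs)]

/-- The sum of the Green functions of the unit disc with poles `s 0, …, s (N - 1)`; the canonical
factor `Complex.canonicalFactor 1 s` is the inverse of the Blaschke factor with zero `s`. -/
def greenPotential (s : ℕ → ℂ) (N : ℕ) (ζ : ℂ) : ℝ :=
  ∑ k ∈ Finset.range N, Real.log ‖Complex.canonicalFactor 1 (s k) ζ‖

lemma harmonicAt_finset_sum {ι : Type*} (T : Finset ι) {u : ι → ℂ → ℝ} {ζ : ℂ}
    (hu : ∀ i ∈ T, HarmonicAt (u i) ζ) : HarmonicAt (fun z => ∑ i ∈ T, u i z) ζ := by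
  induction T using Finset.induction_on with
  | empty => simpa only [Finset.sum_empty] using harmonicAt_const (0 : ℝ)
  | insert i T hi ih =>
    simp only [Finset.sum_insert hi]
    exact (hu i (Finset.mem_insert_self i T)).add
      (ih fun j hj => hu j (Finset.mem_insert_of_mem hj))

/-- A system of `N` poles in the unit disc whose moduli are equally spaced, with step `σ`, in the
first half of the interval `[t, 1)`. -/
structure IsRadialPoleSystem (t σ : ℝ) (N : ℕ) (s : ℕ → ℂ) : Prop where
  pos : 0 < t
  lt_one : t < 1
  card_pos : 0 < N
  two_mul_card_mul_step : 2 * N * σ = 1 - t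
  norm_eq : ∀ k < N, ‖s k‖ = t + k * σ

namespace IsRadialPoleSystem

variable {t σ : ℝ} {N : ℕ} {s : ℕ → ℂ}

lemma step_pos (h : IsRadialPoleSystem t σ N s) : 0 < σ := by
  have hN : (0 : ℝ) < N := Nat.cast_pos.2 h.card_pos
  have hprod : 0 < 2 * N * σ := by linarith [h.two_mul_card_mul_step, h.lt_one]
  exact (pos_iff_pos_of_mul_pos hprod).1 (by positivity)

lemma le_norm (h : IsRadialPoleSystem t σ N s) {k : ℕ} (hk : k < N) : t ≤ ‖s k‖ := by
  rw [h.norm_eq k hk]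
  exact le_add_of_nonneg_right (mul_nonneg k.cast_nonneg h.step_pos.le)

lemma norm_le (h : IsRadialPoleSystem t σ N s) {k : ℕ} (hk : k < N) : ‖s k‖ ≤ 1 - (1 - t) / 2 := by
  have hkN : (k : ℝ) * σ ≤ N * σ := by have := h.step_pos; gcongr
  linarith [h.norm_eq k hk, h.two_mul_card_mul_step]

lemma norm_lt_one (h : IsRadialPoleSystem t σ N s) {k : ℕ} (hk : k < N) : ‖s k‖ < 1 := by
  linarith [h.norm_le hk, h.lt_one]

lemma harmonicAt_greenPotential (h : IsRadialPoleSystem t σ N s) {ζ : ℂ} (hζ : ‖ζ‖ ≤ 1)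
    (hne : ∀ k < N, ζ ≠ s k) : HarmonicAt (greenPotential s N) ζ := by
  refine harmonicAt_finset_sum _ fun k hk => ?_
  rw [Finset.mem_range] at hk
  exact (Complex.analyticOnNhd_canonicalFactor 1 (s k) ζ (hne k hk)).harmonicAt_log_norm
    (Complex.canonicalFactor_ne_zero (by simpa using h.norm_lt_one hk) (by simpa using hζ)
      (hne k hk))

lemma greenPotential_eq_zero (h : IsRadialPoleSystem t σ N s) {ζ : ℂ} (hζ : ‖ζ‖ = 1) :
    greenPotential s N ζ = 0 :=
  Finset.sum_eq_zero fun k hk => by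
    rw [Complex.norm_canonicalFactor_eval_circle_eq_one
      (by simpa using h.norm_lt_one (Finset.mem_range.1 hk)) (by simpa using hζ), Real.log_one]

lemma le_greenPotential_zero (h : IsRadialPoleSystem t σ N s) :
    N * ((1 - t) / 2) ≤ greenPotential s N 0 :=
  calc N * ((1 - t) / 2) = ∑ _k ∈ Finset.range N, (1 - t) / 2 := by simp
    _ ≤ greenPotential s N 0 := Finset.sum_le_sum fun k hk => by
      have hk := Finset.mem_range.1 hk
      have hs : s k ≠ 0 := norm_pos_iff.1 (h.pos.trans_le (h.le_norm hk))
      linarith [one_sub_norm_le_log_norm_canonicalFactor_zero hs, h.norm_le hk]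

lemma log_norm_canonicalFactor_le (h : IsRadialPoleSystem t σ N s) {ζ : ℂ} (hζ : ‖ζ‖ ≤ 1) {k : ℕ}
    (hk : k < N) (hσ : σ ≤ ‖ζ - s k‖) :
    Real.log ‖Complex.canonicalFactor 1 (s k) ζ‖ ≤
      4 * √N * (1 / √(max 1 |(t - ‖ζ‖) / σ + k|)) := by
  have hσ₀ : 0 < σ := h.step_pos
  set m := max 1 |(t - ‖ζ‖) / σ + k|
  have hm : 0 < m := by positivity
  have hσm : σ * m ≤ ‖ζ - s k‖ := by
    rw [mul_max_of_nonneg _ _ hσ₀.le, mul_one, ← abs_of_pos hσ₀, ← abs_mul, abs_of_pos hσ₀]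
    refine max_le hσ ?_
    calc |σ * ((t - ‖ζ‖) / σ + k)| = |‖s k‖ - ‖ζ‖| := by
          rw [h.norm_eq k hk]; congr 1; field_simp; ring
      _ ≤ ‖ζ - s k‖ := by rw [norm_sub_rev]; exact abs_norm_sub_norm_le _ _
  calc Real.log ‖Complex.canonicalFactor 1 (s k) ζ‖ ≤ 2 * √(2 * (1 - ‖s k‖) / ‖ζ - s k‖) :=
        log_norm_canonicalFactor_one_le (h.norm_lt_one hk) hζ
          (sub_ne_zero.1 (norm_pos_iff.1 (hσ₀.trans_le hσ)))
    _ ≤ 2 * √(2 * (1 - t) / (σ * m)) := by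
        gcongr
        · linarith [h.lt_one]
        · exact h.le_norm hk
    _ = 2 * √(2 ^ 2 * N / m) := by
        rw [← h.two_mul_card_mul_step]; congr 2; field_simp
    _ = 4 * √N * (1 / √m) := by
        rw [Real.sqrt_div (by positivity), Real.sqrt_mul (by positivity),
          Real.sqrt_sq zero_le_two]
        ring

lemma greenPotential_le (h : IsRadialPoleSystem t σ N s) {ζ : ℂ} (hζ : ‖ζ‖ ≤ 1)
    (hσ : ∀ k < N, σ ≤ ‖ζ - s k‖) : greenPotential s N ζ ≤ 24 * N :=
  calc greenPotential s N ζ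
      ≤ ∑ k ∈ Finset.range N, 4 * √N * (1 / √(max 1 |(t - ‖ζ‖) / σ + k|)) :=
        Finset.sum_le_sum fun k hk => h.log_norm_canonicalFactor_le hζ (Finset.mem_range.1 hk)
          (hσ k (Finset.mem_range.1 hk))
    _ ≤ 4 * √N * (6 * √N) := by
        rw [← Finset.mul_sum]; gcongr; exact sum_one_div_sqrt_max_abs_le _ N
    _ = 24 * N := by linarith [Real.mul_self_sqrt (Nat.cast_nonneg (α := ℝ) N)]

end IsRadialPoleSystem

end GreenPotential

section DiscEstimate

open InnerProductSpace

lemma exists_norm_eq_norm_le_norm {F : Type*} [NormedAddCommGroup F] [NormedSpace ℂ F]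
    {g : ℂ → F} {t : ℝ} (ht : 0 < t) (hg : DiffContOnCl ℂ g (ball 0 t)) {a : ℂ} (ha : ‖a‖ ≤ t) :
    ∃ s, ‖s‖ = t ∧ ‖g a‖ ≤ ‖g s‖ := by
  obtain ⟨s, hs, hmax⟩ :=
    Complex.exists_mem_frontier_isMaxOn_norm isBounded_ball (nonempty_ball.2 ht) hg
  rw [frontier_ball _ ht.ne', mem_sphere_zero_iff_norm] at hs
  exact ⟨s, hs, hmax (by simpa [closure_ball _ ht.ne'] using ha)⟩

lemma exists_isRadialPoleSystem {F : Type*} [NormedAddCommGroup F] [NormedSpace ℂ F]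
    {g : ℂ → F} (hg : DiffContOnCl ℂ g (ball 0 1)) {a : ℂ} (ha₀ : a ≠ 0) (ha₁ : ‖a‖ < 1) {R : ℝ}
    (hR : R < ‖g a‖) :
    ∃ σ N s, IsRadialPoleSystem ‖a‖ σ N s ∧
      ∀ k < N, ∀ ζ : ℂ, ‖ζ‖ ≤ 1 → ‖ζ - s k‖ ≤ σ → R ≤ ‖g ζ‖ := by
  have hcont : ContinuousOn g (closedBall 0 1) := by
    simpa only [closure_ball (0 : ℂ) one_ne_zero] using hg.continuousOn
  obtain ⟨ω, hω, hgω⟩ := Metric.uniformContinuousOn_iff.1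
    ((isCompact_closedBall (0 : ℂ) 1).uniformContinuousOn_of_continuous hcont) (‖g a‖ - R)
    (sub_pos.2 hR)
  obtain ⟨N, hN⟩ := exists_nat_gt ((1 - ‖a‖) / ω)
  have hN₀ : (0 : ℝ) < N := (div_pos (sub_pos.2 ha₁) hω).trans hN
  obtain ⟨σ, hσ⟩ : ∃ σ : ℝ, 2 * N * σ = 1 - ‖a‖ := ⟨(1 - ‖a‖) / (2 * N), by field_simp⟩
  have hσ₀ : 0 < σ := (pos_iff_pos_of_mul_pos (hσ ▸ sub_pos.2 ha₁)).1 (by positivity)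
  have hσω : σ < ω := by
    rw [div_lt_iff₀ hω] at hN
    nlinarith
  have hpole : ∀ k < N, ∃ s : ℂ, ‖s‖ = ‖a‖ + k * σ ∧ ‖g a‖ ≤ ‖g s‖ := fun k hk => by
    have hkN : (k : ℝ) * σ ≤ N * σ := by gcongr
    refine exists_norm_eq_norm_le_norm (by positivity) (hg.mono (ball_subset_ball ?_))
      (le_add_of_nonneg_right (by positivity))
    nlinarith
  choose! s hs hgs using hpole
  have hsys : IsRadialPoleSystem ‖a‖ σ N s :=
    ⟨norm_pos_iff.2 ha₀, ha₁, Nat.cast_pos.1 hN₀, hσ, hs⟩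
  refine ⟨σ, N, s, hsys, fun k hk ζ hζ hζs => ?_⟩
  have hdist := hgω (s k) (mem_closedBall_zero_iff.2 (hsys.norm_lt_one hk).le) ζ
    (mem_closedBall_zero_iff.2 hζ) (by rw [dist_comm, dist_eq_norm]; exact hζs.trans_lt hσω)
  rw [dist_eq_norm] at hdist
  linarith [norm_sub_norm_le (g (s k)) (g ζ), hgs k hk]

/-- The unit disc with the closed discs of radius `σ` about the poles `s 0, …, s (N - 1)`
removed. -/
def puncturedDisc (s : ℕ → ℂ) (N : ℕ) (σ : ℝ) : Set ℂ :=
  {ζ | ‖ζ‖ < 1 ∧ ∀ k < N, σ < ‖ζ - s k‖}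

section PuncturedDisc

variable {s : ℕ → ℂ} {N : ℕ} {σ : ℝ} {ζ : ℂ}

lemma puncturedDisc_subset_ball : puncturedDisc s N σ ⊆ ball 0 1 :=
  fun _ hζ => mem_ball_zero_iff.2 hζ.1

lemma isOpen_puncturedDisc : IsOpen (puncturedDisc s N σ) := by
  simp only [puncturedDisc, Set.ofPred_and, Set.ofPred_forall]
  exact (isOpen_lt continuous_norm continuous_const).inter <|
    (Set.finite_lt_nat N).isOpen_biInter fun k _ => isOpen_lt continuous_const (by fun_prop)

lemma norm_le_one_and_le_of_mem_closure_puncturedDisc (hζ : ζ ∈ closure (puncturedDisc s N σ)) :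
    ‖ζ‖ ≤ 1 ∧ ∀ k < N, σ ≤ ‖ζ - s k‖ := by
  refine ⟨?_, fun k hk => ?_⟩
  · exact closure_minimal (t := {ζ | ‖ζ‖ ≤ 1}) (fun ζ hζ => hζ.1.le)
      (isClosed_le continuous_norm continuous_const) hζ
  · exact closure_minimal (t := {ζ | σ ≤ ‖ζ - s k‖}) (fun ζ hζ => (hζ.2 k hk).le)
      (isClosed_le continuous_const (by fun_prop)) hζ

lemma norm_eq_one_or_exists_of_mem_frontier_puncturedDisc
    (hζ : ζ ∈ frontier (puncturedDisc s N σ)) : ‖ζ‖ = 1 ∨ ∃ k < N, ‖ζ - s k‖ ≤ σ := by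
  rw [isOpen_puncturedDisc.frontier_eq] at hζ
  by_contra! hcon
  exact hζ.2 ⟨(norm_le_one_and_le_of_mem_closure_puncturedDisc hζ.1).1.lt_of_ne hcon.1, hcon.2⟩

end PuncturedDisc

variable {E : Type*} [NormedAddCommGroup E] [InnerProductSpace ℂ E] [ProperSpace E]
  {D : Set E} {ψ : E → ℝ} {h : ℂ → E}

lemma RealPSHOn.comp_zero_le_of_isRadialPoleSystem (hψ : RealPSHOn ψ D) (hD : IsOpen D)
    (hψ₀ : ∀ x ∈ D, ψ x ≤ 0) (hh : DiffContOnCl ℂ h (ball 0 1))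
    (hmaps : MapsTo h (closedBall 0 1) D) {c t σ : ℝ} (hc : 0 ≤ c) {N : ℕ} {s : ℕ → ℂ}
    (hs : IsRadialPoleSystem t σ N s)
    (hψs : ∀ k < N, ∀ ζ : ℂ, ‖ζ‖ ≤ 1 → ‖ζ - s k‖ ≤ σ → ψ (h ζ) ≤ -c) :
    ψ (h 0) ≤ -(c / 48) * (1 - t) := by
  by_cases h0 : (0 : ℂ) ∈ puncturedDisc s N σ
  swap
  · obtain ⟨k, hk, hkσ⟩ : ∃ k < N, ‖0 - s k‖ ≤ σ := by
      by_contra! hcon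
      exact h0 ⟨by simp, hcon⟩
    nlinarith [hψs k hk 0 (by simp) hkσ, hs.pos]
  have hN : (0 : ℝ) < N := Nat.cast_pos.2 hs.card_pos
  have hclosure {ζ : ℂ} (hζ : ζ ∈ closure (puncturedDisc s N σ)) : HarmonicAt
      (fun z => c / (24 * N) * greenPotential s N z) ζ := by
    obtain ⟨hζ₁, hζσ⟩ := norm_le_one_and_le_of_mem_closure_puncturedDisc hζ
    exact (hs.harmonicAt_greenPotential hζ₁ fun k hk =>
      sub_ne_zero.1 (norm_pos_iff.1 (hs.step_pos.trans_le (hζσ k hk)))).const_smul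
  have hsum : ψ (h 0) + c / (24 * N) * greenPotential s N 0 ≤ 0 := by
    refine hψ.comp_add_harmonic_le_zero hD (isBounded_ball.subset puncturedDisc_subset_ball)
      isOpen_puncturedDisc (hh.mono puncturedDisc_subset_ball)
      (fun ζ hζ => hmaps (mem_closedBall_zero_iff.2
        (norm_le_one_and_le_of_mem_closure_puncturedDisc hζ).1))
      (q := fun z => c / (24 * N) * greenPotential s N z)
      (fun ζ hζ => (hclosure hζ).1.continuousAt.continuousWithinAt)
      (fun ζ hζ => hclosure (subset_closure hζ)) (fun ζ hζ => ?_) h0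
    obtain ⟨hζ₁, hζσ⟩ :=
      norm_le_one_and_le_of_mem_closure_puncturedDisc (frontier_subset_closure hζ)
    rcases norm_eq_one_or_exists_of_mem_frontier_puncturedDisc hζ with hζ₁' | ⟨k, hk, hkσ⟩
    · rw [hs.greenPotential_eq_zero hζ₁', mul_zero, add_zero]
      exact hψ₀ _ (hmaps (mem_closedBall_zero_iff.2 hζ₁))
    · have hq : c / (24 * N) * greenPotential s N ζ ≤ c :=
        calc c / (24 * N) * greenPotential s N ζ ≤ c / (24 * N) * (24 * N) := by
              gcongr; exact hs.greenPotential_le hζ₁ hζσ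
          _ = c := by field_simp
      linarith [hψs k hk ζ hζ₁ hkσ]
  have hq₀ : c / 48 * (1 - t) ≤ c / (24 * N) * greenPotential s N 0 :=
    calc c / 48 * (1 - t) = c / (24 * N) * (N * ((1 - t) / 2)) := by field_simp; ring
      _ ≤ _ := by gcongr; exact hs.le_greenPotential_zero
  linarith

lemma RealPSHOn.comp_zero_le_of_diffContOnCl (hψ : RealPSHOn ψ D) (hD : IsOpen D)
    (hψ₀ : ∀ x ∈ D, ψ x ≤ 0) {p : E} {c R : ℝ} (hc : 0 ≤ c)
    (hψR : ∀ x ∈ D, R ≤ ‖x - p‖ → ψ x ≤ -c) (hh : DiffContOnCl ℂ h (ball 0 1))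
    (hmaps : MapsTo h (closedBall 0 1) D) {a : ℂ} (ha : ‖a‖ < 1) (hha : R < ‖h a - p‖) :
    ψ (h 0) ≤ -(c / 48) * (1 - ‖a‖) := by
  rcases eq_or_ne a 0 with rfl | ha₀
  · have := hψR _ (hmaps (mem_closedBall_self zero_le_one)) hha.le
    rw [norm_zero]
    linarith
  obtain ⟨σ, N, s, hs, hhs⟩ := exists_isRadialPoleSystem (hh.sub_const p) ha₀ ha hha
  exact hψ.comp_zero_le_of_isRadialPoleSystem hD hψ₀ hh hmaps hc hs fun k hk ζ hζ hζσ =>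
    hψR _ (hmaps (mem_closedBall_zero_iff.2 hζ)) (hhs k hk ζ hζ hζσ)

theorem RealPSHOn.comp_zero_le (hψ : RealPSHOn ψ D) (hD : IsOpen D)
    (hψ₀ : ∀ x ∈ D, ψ x ≤ 0) {p : E} {c R : ℝ} (hc : 0 ≤ c)
    (hψR : ∀ x ∈ D, R ≤ ‖x - p‖ → ψ x ≤ -c) (hh : DifferentiableOn ℂ h (ball 0 1))
    (hmaps : MapsTo h (ball 0 1) D) {a : ℂ} (ha : ‖a‖ < 1) (hha : R < ‖h a - p‖) :
    ψ (h 0) ≤ -(c / 48) * (1 - ‖a‖) := by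
  have hlim : Tendsto (fun ρ : ℝ => -(c / 48) * (1 - ‖a‖ / ρ)) (𝓝[<] 1)
      (𝓝 (-(c / 48) * (1 - ‖a‖))) := by
    have hcont : ContinuousAt (fun ρ : ℝ => -(c / 48) * (1 - ‖a‖ / ρ)) 1 := by
      fun_prop (disch := exact one_ne_zero)
    simpa only [div_one] using hcont.tendsto.mono_left nhdsWithin_le_nhds
  refine ge_of_tendsto hlim ?_
  filter_upwards [Ioo_mem_nhdsLT ha] with ρ hρ
  have hρ₀ : 0 < ρ := (norm_nonneg a).trans_lt hρ.1
  have hρc : (ρ : ℂ) ≠ 0 := Complex.ofReal_ne_zero.2 hρ₀.ne'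
  have hna : ‖a / ρ‖ = ‖a‖ / ρ := by rw [norm_div, Complex.norm_of_nonneg hρ₀.le]
  have hdil : MapsTo (fun ζ : ℂ => ρ * ζ) (closedBall 0 1) (ball 0 1) := fun ζ hζ => by
    rw [mem_closedBall_zero_iff] at hζ
    rw [mem_ball_zero_iff, norm_mul, Complex.norm_of_nonneg hρ₀.le]
    nlinarith [hρ.2]
  have hhρ : DifferentiableOn ℂ (fun ζ : ℂ => h (ρ * ζ)) (closure (ball 0 1)) := by
    rw [closure_ball _ one_ne_zero]
    exact hh.comp (by fun_prop) hdil
  have hestimate := hψ.comp_zero_le_of_diffContOnCl hD hψ₀ hc hψR hhρ.diffContOnCl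
    (hmaps.comp hdil) (a := a / ρ) (by rw [hna, div_lt_one hρ₀]; exact hρ.1)
    (by rwa [mul_div_cancel₀ _ hρc])
  simpa only [mul_zero, hna] using hestimate

end DiscEstimate

section Squeezing

lemma exists_disc_of_ball_subset_image {E F : Type*} [NormedAddCommGroup E] [NormedSpace ℂ E]
    [NormedAddCommGroup F] [NormedSpace ℂ F] [FiniteDimensional ℂ E] [FiniteDimensional ℂ F]
    (hEF : Module.finrank ℂ E = Module.finrank ℂ F) {D : Set E} (hD : IsOpen D) {f : E → F}
    (hf : DifferentiableOn ℂ f D) (hinj : InjOn f D) {r : ℝ} (hr : 0 < r)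
    (hball : ball 0 r ⊆ f '' D) {z x : E} (hz : z ∈ D) (hfz : f z = 0)
    (hx : x ∈ D) :
    ∃ h : ℂ → E, DifferentiableOn ℂ h (ball 0 1) ∧ MapsTo h (ball 0 1) D ∧ h 0 = z ∧
      ∃ a, ‖a‖ = ‖f x‖ / r ∧ h a = x := by
  have : Nonempty E := ⟨z⟩
  let line : ℂ → F := fun ζ => (ζ * (r / ‖f x‖ : ℝ)) • f x
  have hline : MapsTo line (ball 0 1) (f '' D) := fun ζ hζ => by
    refine hball (mem_ball_zero_iff.2 ?_)
    rw [mem_ball_zero_iff] at hζ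
    rw [norm_smul, norm_mul, Complex.norm_of_nonneg (by positivity), mul_assoc]
    calc ‖ζ‖ * (r / ‖f x‖ * ‖f x‖) ≤ ‖ζ‖ * r := by
          rw [div_mul_comm]
          gcongr
          exact mul_le_of_le_one_left hr.le (div_self_le_one _)
      _ < r := mul_lt_of_lt_one_left hr hζ
  refine ⟨Function.invFunOn f D ∘ line,
    (differentiableOn_invFunOn_of_injOn hEF hD hf hinj).comp (by fun_prop) hline,
    fun ζ hζ => Function.invFunOn_mem (hline hζ), ?_, (‖f x‖ / r : ℝ), ?_, ?_⟩
  · have hline₀ : line 0 = f z := by simp only [line, zero_mul, zero_smul, hfz]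
    rw [Function.comp_apply, hline₀, hinj.leftInvOn_invFunOn hz]
  · exact Complex.norm_of_nonneg (by positivity)
  · have hlinex : line (‖f x‖ / r : ℝ) = f x := by
      rcases eq_or_ne (f x) 0 with h0 | h0
      · simp only [line, h0, smul_zero]
      · have hfx₀ : ‖f x‖ ≠ 0 := norm_ne_zero_iff.2 h0
        have hcancel : ‖f x‖ / r * (r / ‖f x‖) = 1 := by field_simp
        simp only [line, ← Complex.ofReal_mul, hcancel, Complex.ofReal_one, one_smul]
    rw [Function.comp_apply, hlinex, hinj.leftInvOn_invFunOn hx]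

lemma neg_mul_one_sub_lt_of_lt_exp {A c y : ℝ} (hc : 0 < c) (hy : -(c / 96) < y) (hA₁ : A ≤ 1)
    (hA : A < Real.exp (96 / c * y)) : -(c / 48) * (1 - A) < y := by
  rcases le_total A 2⁻¹ with hA₂ | hA₂
  · nlinarith
  have hA₀ : 0 < A := by linarith
  have hlog : -2 * (1 - A) ≤ Real.log A :=
    calc -2 * (1 - A) ≤ 1 - A⁻¹ := by
          have hA_inv : A⁻¹ ≤ 2 := inv_le_of_inv_le₀ two_pos hA₂
          nlinarith [mul_inv_cancel₀ hA₀.ne']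
      _ ≤ Real.log A := Real.one_sub_inv_le_log_of_pos hA₀
  calc -(c / 48) * (1 - A) = c / 96 * (-2 * (1 - A)) := by ring
    _ ≤ c / 96 * Real.log A := by gcongr
    _ < c / 96 * (96 / c * y) := by gcongr; exact (Real.log_lt_iff_lt_exp hA₀).2 hA
    _ = y := by field_simp

lemma erexp_coe (x : ℝ) : erexp x = Real.exp x := by
  rw [erexp, if_neg (EReal.coe_ne_bot x), if_neg (EReal.coe_ne_top x), EReal.toReal_coe]

variable {n : ℕ} {D U : Set (Cn n)} {p z : Cn n} {r c R : ℝ}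

/-- The radii over which `squeezing` takes the supremum. -/
def squeezingRadii (D : Set (Cn n)) (z : Cn n) : Set ℝ :=
  {r : ℝ | 0 < r ∧ ∃ f : Cn n → Cn n, DifferentiableOn ℂ f D ∧ InjOn f D ∧
    MapsTo f D (ball (0 : Cn n) 1) ∧ f z = 0 ∧ ball (0 : Cn n) r ⊆ f '' D}

lemma bddAbove_squeezingRadii [Nontrivial (Cn n)] (D : Set (Cn n)) (z : Cn n) :
    BddAbove (squeezingRadii D z) := by
  refine ⟨1, fun r hr => ?_⟩
  obtain ⟨-, f, -, -, hmaps, -, hball⟩ := hr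
  by_contra! hr₁
  obtain ⟨w, hw⟩ := exists_norm_eq (Cn n) zero_le_one
  have hw₁ : w ∈ ball 0 1 := hmaps.image_subset (hball (by rwa [mem_ball_zero_iff, hw]))
  exact (mem_ball_zero_iff.1 hw₁).ne hw

lemma mul_squeezing_le_squeezing [Nontrivial (Cn n)] {D' : Set (Cn n)} {e : ℝ} (he : 0 < e)
    (h : ∀ r ∈ squeezingRadii D z, e * r ∈ squeezingRadii D' z) :
    e * squeezing D z ≤ squeezing D' z := by
  rw [← le_div_iff₀' he]
  refine Real.sSup_le (fun r hr => ?_) (div_nonneg (Real.sSup_nonneg fun r hr => hr.1.le) he.le)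
  rw [le_div_iff₀' he]
  exact le_csSup (bddAbove_squeezingRadii D' z) (h r hr)

lemma RealPSHOn.exp_mul_mem_squeezingRadii {ψ : Cn n → ℝ} (hψ : RealPSHOn ψ D) (hD : IsOpen D)
    (hψ₀ : ∀ x ∈ D, ψ x ≤ 0) (hc : 0 < c) (hψR : ∀ x ∈ D, R ≤ ‖x - p‖ → ψ x ≤ -c)
    (hU : closedBall p R ⊆ U) (hz : z ∈ D) (hψz : -(c / 96) < ψ z)
    (hr : r ∈ squeezingRadii D z) :
    Real.exp (96 / c * ψ z) * r ∈ squeezingRadii (D ∩ U) z := by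
  obtain ⟨hr₀, f, hf, hinj, hmaps, hfz, hball⟩ := hr
  have hexp : Real.exp (96 / c * ψ z) ≤ 1 :=
    Real.exp_le_one_iff.2 (mul_nonpos_of_nonneg_of_nonpos (by positivity) (hψ₀ z hz))
  refine ⟨by positivity, f, hf.mono inter_subset_left, hinj.mono inter_subset_left,
    hmaps.mono_left inter_subset_left, hfz, fun w hw => ?_⟩
  rw [mem_ball_zero_iff] at hw
  have hwr : ‖w‖ < r := hw.trans_le (mul_le_of_le_one_left hr₀.le hexp)
  obtain ⟨x, hx, rfl⟩ := hball (mem_ball_zero_iff.2 hwr)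
  refine mem_image_of_mem f ⟨hx, by_contra fun hxU => ?_⟩
  have hxR : R < ‖x - p‖ := by
    by_contra! hle
    exact hxU (hU (mem_closedBall_iff_norm.2 hle))
  obtain ⟨h, hh, hhD, rfl, a, ha, rfl⟩ :=
    exists_disc_of_ball_subset_image rfl hD hf hinj hr₀ hball hz hfz hx
  have ha₁ : ‖a‖ < 1 := by rwa [ha, div_lt_one hr₀]
  have hle := hψ.comp_zero_le hD hψ₀ hc.le hψR hh hhD ha₁ hxR
  have hlt := neg_mul_one_sub_lt_of_lt_exp (A := ‖a‖) hc hψz ha₁.le (by rwa [ha, div_lt_iff₀ hr₀])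
  exact hle.not_gt hlt

lemma PSHOn.erexp_mul_squeezing_le [Nontrivial (Cn n)] {φ : Cn n → EReal} (hφ : PSHOn φ D)
    (hD : IsOpen D) (hneg : ∀ x ∈ D, φ x < 0) (hc : 0 < c)
    (hφR : ∀ x ∈ D, R ≤ ‖x - p‖ → φ x ≤ (-c : ℝ)) (hU : closedBall p R ⊆ U) (hz : z ∈ D)
    (hφz : (-(c / 96) : ℝ) < φ z) :
    erexp ((96 / c : ℝ) * φ z) * squeezing D z ≤ squeezing (D ∩ U) z := by
  have htop : ∀ x ∈ D, φ x ≠ ⊤ := fun x hx => ((hneg x hx).trans (EReal.coe_lt_top 0)).ne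
  set ψ : Cn n → ℝ := truncateBelow φ (-c)
  have hψz : φ z = ψ z := by
    rw [coe_truncateBelow (htop z hz), max_eq_left]
    exact (EReal.coe_le_coe_iff.2 (by linarith)).trans hφz.le
  rw [hψz, EReal.coe_lt_coe_iff] at hφz
  rw [hψz, ← EReal.coe_mul, erexp_coe]
  refine mul_squeezing_le_squeezing (Real.exp_pos _) fun r hr =>
    (hφ.realPSHOn_truncateBelow htop (-c)).exp_mul_mem_squeezingRadii hD
      (fun x hx => ?_) hc (fun x hx hxR => ?_) hU hz hφz hr
  · exact (truncateBelow_le_iff (htop x hx)).2 ⟨(hneg x hx).le, by linarith⟩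
  · exact (truncateBelow_le_iff (htop x hx)).2 ⟨hφR x hx hxR, le_rfl⟩

lemma IsPshPeakFn.neg {φ : Cn n → EReal} (hφ : IsPshPeakFn D p φ) (hp : p ∉ D) {x : Cn n}
    (hx : x ∈ D) : φ x < 0 := by
  obtain ⟨c, hc, hle⟩ := hφ.2.2 {x}ᶜ
    (isOpen_compl_singleton.mem_nhds (ne_of_mem_of_not_mem hx hp).symm)
  exact (hle x ⟨hx, not_not_intro rfl⟩).trans_lt (EReal.coe_lt_coe_iff.2 hc)

end Squeezing

theorem squeezing_localization_peak_general {n : ℕ} (D : Set (Cn n)) (hD : IsOpen D)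
    (p : Cn n) (hp : p ∈ frontier D) (φ : Cn n → EReal) (hφ : IsPshPeakFn D p φ)
    (U : Set (Cn n)) (hU : IsOpen U) (hpU : p ∈ U) :
    ∃ V : Set (Cn n), IsOpen V ∧ p ∈ V ∧ V ⊆ U ∧ ∃ m : ℝ, 0 < m ∧
      ∀ z ∈ D ∩ V,
        squeezing (D ∩ U) z ≥ erexp ((m : EReal) * φ z) * squeezing D z := by
  have hpD : p ∉ D := fun h => (hD.inter_frontier_eq.subset ⟨h, hp⟩).elim
  obtain ⟨R, hR, hRU⟩ := Metric.nhds_basis_closedBall.mem_iff.1 (hU.mem_nhds hpU)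
  obtain ⟨c, hc, hpeak⟩ := hφ.2.2 (ball p R) (ball_mem_nhds p hR)
  have hnear : ∀ᶠ z in 𝓝[D] p, ((-(-c / 96) : ℝ) : EReal) < φ z :=
    hφ.2.1.eventually_const_lt (EReal.coe_lt_coe_iff.2 (by linarith))
  obtain ⟨V, hVsub, hVo, hpV⟩ := _root_.mem_nhds_iff.1
    (inter_mem (eventually_nhdsWithin_iff.1 hnear) (hU.mem_nhds hpU))
  refine ⟨V, hVo, hpV, fun z hz => (hVsub hz).2, 96 / -c, by apply div_pos <;> linarith, ?_⟩
  rintro z ⟨hzD, hzV⟩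
  have : Nontrivial (Cn n) := ⟨z, p, ne_of_mem_of_not_mem hzD hpD⟩
  refine hφ.1.erexp_mul_squeezing_le hD (fun x hx => hφ.neg hpD hx) (neg_pos.2 hc)
    (fun x hx hxR => ?_) hRU hzD ((hVsub hzV).1 hzD)
  rw [neg_neg]
  exact hpeak x ⟨hx, fun hxp => hxR.not_gt (mem_ball_iff_norm.1 hxp)⟩

/-- Quantitative localization of the squeezing function near a psh peak
boundary point. -/
theorem squeezing_localization_peak {n : ℕ} (D : Set (Cn n)) (hD : IsOpen D)
    (hDconn : IsConnected D) (p : Cn n) (hp : p ∈ frontier D)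
    (φ : Cn n → EReal) (hφ : IsPshPeakFn D p φ)
    (U : Set (Cn n)) (hU : IsOpen U) (hUb : Bornology.IsBounded U) (hpU : p ∈ U) :
    ∃ V : Set (Cn n), IsOpen V ∧ p ∈ V ∧ V ⊆ U ∧ ∃ m : ℝ, 0 < m ∧
      ∀ z ∈ D ∩ V,
        squeezing (D ∩ U) z ≥ erexp ((m : EReal) * φ z) * squeezing D z :=
  squeezing_localization_peak_general D hD p hp φ hφ U hU hpU
end
end
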